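/- arXiv:2501.00667 — 5 statements merged into one kernel-verified Lean document; each statement's English description precedes it below -/
import Mathlib

section
/- Let T ⊂ ℝ² be a rational triangle (the convex hull of three non-collinear points of ℚ²) that is pseudointegral and contains exactly one lattice point in its interior. Then the number b of lattice points on the boundary of T satisfies 1 ≤ b ≤ 9 and b ≠ 7. -/
open Set Pointwise

/-- The set of lattice points of the plane. -/
def latticePts : Set (ℝ × ℝ) := {p | ∃ m n : ℤ, p = ((m : ℝ), (n : ℝ))}

/-- The coercion of a rational point of the plane to a real point. -/
def qpt (v : ℚ × ℚ) : ℝ × ℝ := ((v.1 : ℝ), (v.2 : ℝ))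

/-- The Ehrhart function of a set `P ⊆ ℝ²`:  `t ↦ #(tP ∩ ℤ²)`. -/
noncomputable def ehr (P : Set (ℝ × ℝ)) (t : ℕ) : ℕ :=
  (((t : ℝ) • P) ∩ latticePts).ncard

/-- A set `P ⊆ ℝ²` is pseudointegral (a PIP) if its Ehrhart function agrees with
a polynomial at all positive integers. -/
def IsPIP (P : Set (ℝ × ℝ)) : Prop :=
  ∃ c : Polynomial ℚ, ∀ t : ℕ, 0 < t → (ehr P t : ℚ) = c.eval (t : ℚ)

/-- A rational triangle: the convex hull of three non-collinear rational points. -/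
def IsRatTriangle (T : Set (ℝ × ℝ)) : Prop :=
  ∃ p q r : ℚ × ℚ, ¬ Collinear ℝ ({qpt p, qpt q, qpt r} : Set (ℝ × ℝ)) ∧
    T = convexHull ℝ {qpt p, qpt q, qpt r}


/-- Vieta descent. -/
lemma vieta_aux (n : ℕ) : ∀ s x y z : ℕ, x + y + z ≤ s → 0 < x → x ≤ y → y ≤ z →
    (x + y + z) ^ 2 = n * (x * y * z) → n ≤ 9 ∧ n ≠ 7 := by
  intro s
  induction s with
  | zero => intro x y z h hx; omega
  | succ s ih =>
    intro x y z hs hx hxy hyz h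
    by_cases hz : z ≤ x + y
    · -- base case
      have h1 : x * n ≤ 9 := by
        have hy : 0 < y := by omega
        have key : (x + y + z) ^ 2 * y ≤ (x + 2 * y) ^ 2 * z := by
          obtain ⟨d, rfl⟩ := Nat.exists_eq_add_of_le hyz
          have : d ≤ x := by omega
          obtain ⟨e, rfl⟩ := Nat.exists_eq_add_of_le this
          nlinarith [Nat.zero_le (d * e), Nat.zero_le (d*e*e), Nat.zero_le (d*d*e), Nat.zero_le (d*e*y), Nat.zero_le (d*d*y), Nat.zero_le (d*d*d)]
        have k2 : n * x * y ^ 2 * z ≤ (x + 2 * y) ^ 2 * z := by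
          calc n * x * y ^ 2 * z = n * (x * y * z) * y := by ring
            _ = (x + y + z) ^ 2 * y := by rw [h]
            _ ≤ _ := key
        have k3 : n * x * y ^ 2 ≤ (x + 2 * y) ^ 2 := Nat.le_of_mul_le_mul_right k2 (by omega)
        have k4 : (x + 2 * y) ^ 2 ≤ 9 * y ^ 2 := by nlinarith
        have k5 : n * x * y ^ 2 ≤ 9 * y ^ 2 := k3.trans k4
        have := Nat.le_of_mul_le_mul_right k5 (by positivity)
        linarith [mul_comm n x]
      refine ⟨by nlinarith, ?_⟩
      rintro rfl
      have hx1 : x = 1 := by omega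
      subst hx1
      have : z = y ∨ z = y + 1 := by omega
      rcases this with rfl | rfl
      · have : 3 * z * z = 4 * z + 1 := by nlinarith
        have : z < 3 := by nlinarith
        interval_cases z <;> omega
      · have : (y + 1) * (3 * y) = (y + 1) * 4 := by nlinarith
        have := Nat.eq_of_mul_eq_mul_left (by omega) this
        omega
    · -- descent step
      push Not at hz
      have hd : z ∣ (x + y) ^ 2 := by
        have : z ∣ z * (2 * (x + y) + z) + (x + y) ^ 2 := by
          refine ⟨n * (x * y), ?_⟩
          nlinarith
        exact (Nat.dvd_add_right (Dvd.intro _ rfl)).1 this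
      obtain ⟨w, hw⟩ := hd
      have hw0 : 0 < w := by
        rcases Nat.eq_zero_or_pos w with rfl | h0
        · have : 0 < (x + y) ^ 2 := by positivity
          omega
        · exact h0
      have hwz : w < z := by
        by_contra hc
        push Not at hc
        nlinarith
      have heq : (x + y + w) ^ 2 = n * (x * y * w) := by
        have : z * (x + y + w) ^ 2 = z * (n * (x * y * w)) := by
          calc z * (x + y + w) ^ 2 = z * w * w + 2 * (x + y) * (z * w) + z * (x + y) ^ 2 := by ring
            _ = (x + y + z) ^ 2 * w := by rw [← hw]; nlinarith
            _ = _ := by rw [h]; ring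
        exact Nat.eq_of_mul_eq_mul_left (by omega) this
      by_cases h1 : y ≤ w
      · exact ih x y w (by omega) hx hxy h1 heq
      · by_cases h2 : x ≤ w
        · exact ih x w y (by omega) hx h2 (by omega) (by nlinarith)
        · exact ih w x y (by omega) hw0 (by omega) hxy (by nlinarith)

lemma vieta (n x y z : ℕ) (hx : 0 < x) (hy : 0 < y) (hz : 0 < z)
    (h : (x + y + z) ^ 2 = n * (x * y * z)) : n ≤ 9 ∧ n ≠ 7 := by
  rcases le_total x y with h1 | h1 <;> rcases le_total y z with h2 | h2 <;>
    rcases le_total x z with h3 | h3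
  · exact vieta_aux n _ x y z le_rfl hx h1 h2 h
  · exact vieta_aux n _ x y z le_rfl hx h1 h2 h
  · exact vieta_aux n _ x z y le_rfl hx h3 h2 (by nlinarith)
  · exact vieta_aux n _ z x y le_rfl hz h3 h1 (by nlinarith)
  · exact vieta_aux n _ y x z le_rfl hy h1 h3 (by nlinarith)
  · exact vieta_aux n _ y z x le_rfl hy h2 h3 (by nlinarith)
  · exact vieta_aux n _ z y x le_rfl hz h2 h1 (by nlinarith)
  · exact vieta_aux n _ z y x le_rfl hz h2 h1 (by nlinarith)

/-- Number of lattice points of a half-open lattice parallelogram. -/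
lemma parallelogram (a b : ℤ × ℤ) (hD : 0 < a.1 * b.2 - a.2 * b.1) (α β : ℚ) :
    {x : ℤ × ℤ | (0 ≤ (x.1 * b.2 - x.2 * b.1 : ℚ) + α ∧
        (x.1 * b.2 - x.2 * b.1 : ℚ) + α < a.1 * b.2 - a.2 * b.1) ∧
      (0 ≤ (a.1 * x.2 - a.2 * x.1 : ℚ) + β ∧
        (a.1 * x.2 - a.2 * x.1 : ℚ) + β < a.1 * b.2 - a.2 * b.1)}.ncard
      = (a.1 * b.2 - a.2 * b.1).natAbs := by
  have hli : LinearIndependent ℤ ![a, b] := by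
    rw [LinearIndependent.pair_iff]
    intro s t hst
    have e1 : s * a.1 + t * b.1 = 0 := by simpa using congrArg Prod.fst hst
    have e2 : s * a.2 + t * b.2 = 0 := by simpa using congrArg Prod.snd hst
    constructor
    · have : s * (a.1 * b.2 - a.2 * b.1) = 0 := by linear_combination b.2 * e1 - b.1 * e2
      rcases mul_eq_zero.1 this with h | h
      · exact h
      · omega
    · have : t * (a.1 * b.2 - a.2 * b.1) = 0 := by linear_combination a.1 * e2 - a.2 * e1
      rcases mul_eq_zero.1 this with h | h
      · exact h
      · omega
  have hcard := Submodule.natAbs_det_basis_change (Module.Basis.finTwoProd ℤ)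
    (Submodule.span ℤ (range ![a, b])) (Module.Basis.span hli)
  have hdet : (Module.Basis.finTwoProd ℤ).det
      ((↑) ∘ (Module.Basis.span hli)) = a.1 * b.2 - a.2 * b.1 := by
    have : (((↑) : _ → ℤ × ℤ) ∘ (Module.Basis.span hli)) = ![a, b] := by
      funext i
      simp [Module.Basis.span_apply]
    rw [this, Module.Basis.det_apply, Matrix.det_fin_two]
    simp [Module.Basis.toMatrix_apply]
    ring
  rw [hdet] at hcard
  rw [hcard, ← Nat.card_coe_set_eq]
  have hDq : (0 : ℚ) < a.1 * b.2 - a.2 * b.1 := by exact_mod_cast hD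
  have hmem : ∀ v : ℤ × ℤ, v ∈ Submodule.span ℤ (range ![a, b]) ↔
      ∃ s t : ℤ, s • a + t • b = v := by
    intro v
    rw [Matrix.range_cons, Matrix.range_cons, Matrix.range_empty, union_empty,
      singleton_union, Submodule.mem_span_pair]
  refine Nat.card_eq_of_bijective (fun x => Submodule.Quotient.mk x.1) ⟨?_, ?_⟩
  · rintro ⟨x, ⟨hx1, hx2⟩, hx3, hx4⟩ ⟨y, ⟨hy1, hy2⟩, hy3, hy4⟩ hxy
    have := (Submodule.Quotient.eq _).1 hxy
    obtain ⟨s, t, hst⟩ := (hmem _).1 this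
    have e1 : s * a.1 + t * b.1 = x.1 - y.1 := by simpa using congrArg Prod.fst hst
    have e2 : s * a.2 + t * b.2 = x.2 - y.2 := by simpa using congrArg Prod.snd hst
    have e1q : (s * a.1 + t * b.1 : ℚ) = x.1 - y.1 := by exact_mod_cast e1
    have e2q : (s * a.2 + t * b.2 : ℚ) = x.2 - y.2 := by exact_mod_cast e2
    have aux : ∀ (k : ℤ) (D u v : ℚ), 0 < D → 0 ≤ u → u < D → 0 ≤ v → v < D →
        k * D = u - v → k = 0 := by
      intro k D u v hD hu hu' hv hv' h
      have h1 : (k : ℚ) < 1 := by by_contra hc; push Not at hc; nlinarith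
      have h2 : (-1 : ℚ) < k := by by_contra hc; push Not at hc; nlinarith
      have h1' : k < 1 := by exact_mod_cast h1
      have h2' : -1 < k := by exact_mod_cast h2
      omega
    have hs : s = 0 := aux s _ _ _ hDq hx1 hx2 hy1 hy2 (by
      linear_combination (b.2 : ℚ) * e1q - b.1 * e2q)
    have ht : t = 0 := aux t _ _ _ hDq hx3 hx4 hy3 hy4 (by
      linear_combination (a.1 : ℚ) * e2q - a.2 * e1q)
    subst hs ht
    apply Subtype.ext
    apply Prod.ext
    · simp at e1; simp; omega
    · simp at e2; simp; omega
  · intro c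
    obtain ⟨x, rfl⟩ := Submodule.Quotient.mk_surjective _ c
    set D : ℚ := a.1 * b.2 - a.2 * b.1 with hDdef
    set u : ℚ := (x.1 * b.2 - x.2 * b.1 : ℚ) + α with hu
    set v : ℚ := (a.1 * x.2 - a.2 * x.1 : ℚ) + β with hv
    have fl : ∀ w : ℚ, 0 ≤ w - ⌊w / D⌋ * D ∧ w - ⌊w / D⌋ * D < D := by
      intro w
      have h1 := Int.floor_le (w / D)
      have h2 := Int.lt_floor_add_one (w / D)
      rw [le_div_iff₀ hDq] at h1
      rw [div_lt_iff₀ hDq] at h2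
      constructor <;> linarith
    refine ⟨⟨x - ⌊u / D⌋ • a - ⌊v / D⌋ • b, ?_⟩, ?_⟩
    · obtain ⟨h1, h2⟩ := fl u
      obtain ⟨h3, h4⟩ := fl v
      have E1 : (((x - ⌊u / D⌋ • a - ⌊v / D⌋ • b).1 : ℤ) * b.2 -
          ((x - ⌊u / D⌋ • a - ⌊v / D⌋ • b).2 : ℤ) * b.1 : ℚ) + α = u - ⌊u / D⌋ * D := by
        simp only [Prod.fst_sub, Prod.snd_sub, Prod.smul_fst, Prod.smul_snd, smul_eq_mul]
        push_cast
        rw [hu, hDdef]; ring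
      have E2 : (a.1 * ((x - ⌊u / D⌋ • a - ⌊v / D⌋ • b).2 : ℤ) -
          a.2 * ((x - ⌊u / D⌋ • a - ⌊v / D⌋ • b).1 : ℤ) : ℚ) + β = v - ⌊v / D⌋ * D := by
        simp only [Prod.fst_sub, Prod.snd_sub, Prod.smul_fst, Prod.smul_snd, smul_eq_mul]
        push_cast
        rw [hv, hDdef]; ring
      refine ⟨⟨?_, ?_⟩, ?_, ?_⟩
      · rw [E1]; exact h1
      · rw [E1]; exact h2
      · rw [E2]; exact h3
      · rw [E2]; exact h4
    · refine (Submodule.Quotient.eq _).2 ((hmem _).2 ⟨-⌊u / D⌋, -⌊v / D⌋, ?_⟩)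
      simp only [neg_smul]
      abel

/-- Unnormalised barycentric coordinate of `x` at level `t`. -/
def lf (q r : ℚ × ℚ) (x : ℤ × ℤ) (t : ℤ) : ℚ :=
  x.1 * (q.2 - r.2) - x.2 * (q.1 - r.1) + t * (q.1 * r.2 - q.2 * r.1)

/-- Twice the signed area. -/
def EE (p q r : ℚ × ℚ) : ℚ := (q.1 - p.1) * (r.2 - p.2) - (q.2 - p.2) * (r.1 - p.1)

/-- Lattice points of the `t`-th dilate. -/
def SS (p q r : ℚ × ℚ) (t : ℤ) : Set (ℤ × ℤ) :=
  {x | 0 ≤ lf q r x t ∧ 0 ≤ lf r p x t ∧ 0 ≤ lf p q x t}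

/-- Interior lattice points of the `t`-th dilate. -/
def II (p q r : ℚ × ℚ) (t : ℤ) : Set (ℤ × ℤ) :=
  {x | 0 < lf q r x t ∧ 0 < lf r p x t ∧ 0 < lf p q x t}

lemma lf_sum (p q r : ℚ × ℚ) (x : ℤ × ℤ) (t : ℤ) :
    lf q r x t + lf r p x t + lf p q x t = EE p q r * t := by
  unfold lf EE; ring

lemma EE_rot (p q r : ℚ × ℚ) : EE q r p = EE p q r := by
  unfold EE; ring

lemma ncard_shift (A B : Set (ℤ × ℤ)) (v : ℤ × ℤ) (h : ∀ x, x ∈ A ↔ x + v ∈ B) :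
    A.ncard = B.ncard := by
  have : B = Set.image (fun x => x + v) A := by
    ext y
    simp only [mem_image]
    constructor
    · intro hy
      exact ⟨y - v, (h _).2 (by simpa using hy), by simp⟩
    · rintro ⟨x, hx, rfl⟩
      exact (h x).1 hx
  rw [this, ncard_image_of_injective _ (add_left_injective v)]

lemma ncard_refl (A B : Set (ℤ × ℤ)) (v : ℤ × ℤ) (h : ∀ x, x ∈ A ↔ v - x ∈ B) :
    A.ncard = B.ncard := by
  have : B = Set.image (fun x => v - x) A := by
    ext y
    simp only [mem_image]
    constructor
    · intro hy
      exact ⟨v - y, (h _).2 (by simpa using hy), by simp⟩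
    · rintro ⟨x, hx, rfl⟩
      exact (h x).1 hx
  rw [this, ncard_image_of_injective _ (sub_right_injective)]

lemma ncard_split (A : Set (ℤ × ℤ)) (hA : A.Finite) (P : ℤ × ℤ → Prop) :
    A.ncard = (A ∩ {x | P x}).ncard + (A ∩ {x | ¬ P x}).ncard := by
  rw [← ncard_union_eq ?_ (hA.inter_of_left _) (hA.inter_of_left _)]
  · congr 1
    ext x
    simp only [mem_union, mem_inter_iff, mem_ofPred_eq]
    tauto
  · rw [Set.disjoint_left]
    rintro x ⟨_, h1⟩ ⟨_, h2⟩
    exact h2 h1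

lemma SS_finite (p q r : ℚ × ℚ) (hE : 0 < EE p q r) (t : ℤ) : (SS p q r t).Finite := by
  have key : ∀ (E l1 l2 l3 a b c x t : ℚ), 0 < E → 0 ≤ l1 → 0 ≤ l2 → 0 ≤ l3 →
      l1 + l2 + l3 = E * t → E * x = l1 * a + l2 * b + l3 * c →
      |x| ≤ t * (|a| + |b| + |c|) := by
    intro E l1 l2 l3 a b c x t hE h1 h2 h3 hs hx
    have k : |E * x| ≤ E * t * (|a| + |b| + |c|) := by
      rw [hx, ← hs]
      have a1 : |l1 * a| = l1 * |a| := by rw [abs_mul, abs_of_nonneg h1]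
      have a2 : |l2 * b| = l2 * |b| := by rw [abs_mul, abs_of_nonneg h2]
      have a3 : |l3 * c| = l3 * |c| := by rw [abs_mul, abs_of_nonneg h3]
      have := abs_add_three (l1 * a) (l2 * b) (l3 * c)
      rw [a1, a2, a3] at this
      have := abs_nonneg a
      have := abs_nonneg b
      have := abs_nonneg c
      nlinarith [mul_nonneg h1 (abs_nonneg b), mul_nonneg h1 (abs_nonneg c),
        mul_nonneg h2 (abs_nonneg a), mul_nonneg h2 (abs_nonneg c),
        mul_nonneg h3 (abs_nonneg a), mul_nonneg h3 (abs_nonneg b)]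
    rw [abs_mul, abs_of_pos hE, mul_assoc] at k
    exact le_of_mul_le_mul_left k hE
  set K1 : ℤ := ⌈(t : ℚ) * (|p.1| + |q.1| + |r.1|)⌉
  set K2 : ℤ := ⌈(t : ℚ) * (|p.2| + |q.2| + |r.2|)⌉
  refine ((finite_Icc (-K1) K1).prod (finite_Icc (-K2) K2)).subset ?_
  rintro x ⟨h1, h2, h3⟩
  have b1 := (key _ _ _ _ p.1 q.1 r.1 x.1 t hE h1 h2 h3 (lf_sum p q r x t)
    (by unfold lf EE; ring)).trans (Int.le_ceil _)
  have b2 := (key _ _ _ _ p.2 q.2 r.2 x.2 t hE h1 h2 h3 (lf_sum p q r x t)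
    (by unfold lf EE; ring)).trans (Int.le_ceil _)
  rw [abs_le] at b1 b2
  refine ⟨⟨?_, ?_⟩, ?_, ?_⟩
  · exact_mod_cast b1.1
  · exact_mod_cast b1.2
  · exact_mod_cast b2.1
  · exact_mod_cast b2.2

/-- `N` clears the denominator of `p`. -/
def Clears (N : ℤ) (p : ℚ × ℚ) (P : ℤ × ℤ) : Prop := (P.1 : ℚ) = N * p.1 ∧ (P.2 : ℚ) = N * p.2

lemma lf_shift_left {N : ℤ} {q : ℚ × ℚ} {Q : ℤ × ℤ} (h : Clears N q Q) (r : ℚ × ℚ)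
    (x : ℤ × ℤ) (t : ℤ) : lf q r (x + Q) (t + N) = lf q r x t := by
  obtain ⟨h1, h2⟩ := h
  unfold lf
  simp only [Prod.fst_add, Prod.snd_add]
  push_cast
  rw [h1, h2]; ring

lemma lf_shift_right {N : ℤ} {r : ℚ × ℚ} {R : ℤ × ℤ} (h : Clears N r R) (q : ℚ × ℚ)
    (x : ℤ × ℤ) (t : ℤ) : lf q r (x + R) (t + N) = lf q r x t := by
  obtain ⟨h1, h2⟩ := h
  unfold lf
  simp only [Prod.fst_add, Prod.snd_add]
  push_cast
  rw [h1, h2]; ring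

lemma lf_shift_opp {N : ℤ} {p : ℚ × ℚ} {P : ℤ × ℤ} (h : Clears N p P) (q r : ℚ × ℚ)
    (x : ℤ × ℤ) (t : ℤ) : lf q r (x + P) (t + N) = lf q r x t + N * EE p q r := by
  obtain ⟨h1, h2⟩ := h
  unfold lf EE
  simp only [Prod.fst_add, Prod.snd_add]
  push_cast
  rw [h1, h2]; ring

lemma lf_neg (q r : ℚ × ℚ) (x : ℤ × ℤ) (t : ℤ) : lf q r (-x) (-t) = - lf q r x t := by
  unfold lf
  simp only [Prod.fst_neg, Prod.snd_neg]
  push_cast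
  ring

/-- Points in the parallelogram with nonnegative first coordinate. -/
def BB (N : ℤ) (p q r : ℚ × ℚ) (t : ℤ) : Set (ℤ × ℤ) :=
  {x | 0 ≤ lf q r x t ∧ (0 ≤ lf r p x t ∧ lf r p x t < N * EE p q r) ∧
    (0 ≤ lf p q x t ∧ lf p q x t < N * EE p q r)}

/-- Points in the parallelogram. -/
def PP (N : ℤ) (p q r : ℚ × ℚ) (t : ℤ) : Set (ℤ × ℤ) :=
  {x | (0 ≤ lf r p x t ∧ lf r p x t < N * EE p q r) ∧
    (0 ≤ lf p q x t ∧ lf p q x t < N * EE p q r)}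

lemma second_diff {N : ℤ} (hN : 0 < N) {p q r : ℚ × ℚ} {Q R : ℤ × ℤ} (hE : 0 < EE p q r)
    (hQ : Clears N q Q) (hR : Clears N r R) (t : ℤ) :
    ((BB N p q r (t + 2 * N)).ncard : ℤ) =
      (SS p q r (t + 2 * N)).ncard - 2 * (SS p q r (t + N)).ncard + (SS p q r t).ncard := by
  have hNE : 0 < (N : ℚ) * EE p q r := mul_pos (by exact_mod_cast hN) hE
  let A : ℤ → Set (ℤ × ℤ) := fun t => SS p q r t ∩ {x | lf r p x t < N * EE p q r}
  have s1 : ∀ t, (SS p q r (t + N)).ncard = (A (t + N)).ncard + (SS p q r t).ncard := by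
    intro t
    rw [ncard_split _ (SS_finite p q r hE (t + N)) (fun x => lf r p x (t + N) < N * EE p q r)]
    congr 1
    symm
    apply ncard_shift _ _ Q
    intro x
    have e1 := lf_shift_left hQ r x t
    have e2 := lf_shift_right hQ p x t
    have e3 := lf_shift_opp hQ r p x t
    rw [EE_rot] at e3
    simp only [SS, mem_inter_iff, mem_ofPred_eq, e1, e2, e3, not_lt]
    constructor
    · rintro ⟨h1, h2, h3⟩
      exact ⟨⟨h1, by linarith, h3⟩, by linarith⟩
    · rintro ⟨⟨h1, h2, h3⟩, h4⟩
      exact ⟨h1, by linarith, h3⟩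
  have s2 : ∀ t, (A (t + N)).ncard = (BB N p q r (t + N)).ncard + (A t).ncard := by
    intro t
    rw [ncard_split _ ((SS_finite p q r hE (t + N)).inter_of_left _)
      (fun x => lf p q x (t + N) < N * EE p q r)]
    congr 1
    · congr 1
      ext x
      simp only [SS, BB, mem_inter_iff, mem_ofPred_eq]
      tauto
    · symm
      apply ncard_shift _ _ R
      intro x
      have e1 := lf_shift_right hR q x t
      have e2 := lf_shift_left hR p x t
      have e3 := lf_shift_opp hR p q x t
      rw [← EE_rot] at e3
      simp only [A, SS, mem_inter_iff, mem_ofPred_eq, e1, e2, e3, not_lt]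
      constructor
      · rintro ⟨⟨h1, h2, h3⟩, h4⟩
        exact ⟨⟨⟨h1, h2, by linarith⟩, h4⟩, by linarith⟩
      · rintro ⟨⟨⟨h1, h2, h3⟩, h4⟩, h5⟩
        exact ⟨⟨h1, h2, by linarith⟩, h4⟩
  have a1 := s1 t
  have a2 := s1 (t + N)
  have a3 := s2 (t + N)
  have e : t + N + N = t + 2 * N := by ring
  rw [e] at a2 a3
  omega

lemma PP_card {N : ℤ} (hN : 0 < N) {p q r : ℚ × ℚ} {P Q R : ℤ × ℤ} (hE : 0 < EE p q r)
    (hP : Clears N p P) (hQ : Clears N q Q) (hR : Clears N r R) (t : ℤ) :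
    ((PP N p q r t).ncard : ℚ) = N ^ 2 * EE p q r := by
  have hNq : (0 : ℚ) < N := by exact_mod_cast hN
  have hD : (((Q - P).1 * (R - P).2 - (Q - P).2 * (R - P).1 : ℤ) : ℚ) = N ^ 2 * EE p q r := by
    obtain ⟨p1, p2⟩ := hP
    obtain ⟨q1, q2⟩ := hQ
    obtain ⟨r1, r2⟩ := hR
    simp only [Prod.fst_sub, Prod.snd_sub]
    push_cast
    rw [p1, p2, q1, q2, r1, r2]
    unfold EE; ring
  have hDpos : 0 < (Q - P).1 * (R - P).2 - (Q - P).2 * (R - P).1 := by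
    have : (0 : ℚ) < ((Q - P).1 * (R - P).2 - (Q - P).2 * (R - P).1 : ℤ) := by
      rw [hD]; positivity
    exact_mod_cast this
  have := parallelogram (Q - P) (R - P) hDpos (N * t * (r.1 * p.2 - r.2 * p.1))
    (N * t * (p.1 * q.2 - p.2 * q.1))
  rw [← hD]
  have hn := Int.natAbs_of_nonneg hDpos.le
  rw [← hn, ← this]
  push_cast
  congr 2
  ext x
  have hD' := hD
  push_cast at hD'
  simp only [PP, mem_ofPred_eq]
  rw [hD']
  obtain ⟨p1, p2⟩ := hP
  obtain ⟨q1, q2⟩ := hQ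
  obtain ⟨r1, r2⟩ := hR
  have E1 : (x.1 * ((R - P).2 : ℤ) - x.2 * ((R - P).1 : ℤ) : ℚ)
      + N * t * (r.1 * p.2 - r.2 * p.1) = N * lf r p x t := by
    simp only [Prod.fst_sub, Prod.snd_sub]
    push_cast
    rw [p1, p2, r1, r2]
    unfold lf; ring
  have E2 : (((Q - P).1 : ℤ) * x.2 - ((Q - P).2 : ℤ) * x.1 : ℚ)
      + N * t * (p.1 * q.2 - p.2 * q.1) = N * lf p q x t := by
    simp only [Prod.fst_sub, Prod.snd_sub]
    push_cast
    rw [p1, p2, q1, q2]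
    unfold lf; ring
  rw [E1, E2, mul_nonneg_iff_of_pos_left hNq, mul_nonneg_iff_of_pos_left hNq, sq, mul_assoc,
    mul_lt_mul_iff_right₀ hNq, mul_lt_mul_iff_right₀ hNq]

lemma PP_finite {N : ℤ} (hN : 0 < N) {p q r : ℚ × ℚ} {P Q R : ℤ × ℤ} (hE : 0 < EE p q r)
    (hP : Clears N p P) (hQ : Clears N q Q) (hR : Clears N r R) (t : ℤ) :
    (PP N p q r t).Finite := by
  apply finite_of_ncard_ne_zero
  intro h
  have h1 := PP_card hN hE hP hQ hR t
  rw [h] at h1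
  have hNq : (0 : ℚ) < N := by exact_mod_cast hN
  have : (0 : ℚ) < N ^ 2 * EE p q r := by positivity
  simp at h1
  rcases h1 with h1 | h1 <;> simp_all

lemma diff_large {N : ℤ} (hN : 0 < N) {p q r : ℚ × ℚ} {P Q R : ℤ × ℤ} (hE : 0 < EE p q r)
    (hP : Clears N p P) (hQ : Clears N q Q) (hR : Clears N r R) (t : ℤ) (ht : 0 ≤ t) :
    ((SS p q r (t + 2 * N)).ncard : ℚ) - 2 * (SS p q r (t + N)).ncard + (SS p q r t).ncard
      = N ^ 2 * EE p q r := by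
  rw [← PP_card hN hE hP hQ hR (t + 2 * N)]
  have h := second_diff hN hE hQ hR t
  have : PP N p q r (t + 2 * N) = BB N p q r (t + 2 * N) := by
    ext x
    simp only [PP, BB, mem_ofPred_eq]
    constructor
    · rintro ⟨h1, h2⟩
      refine ⟨?_, h1, h2⟩
      have := lf_sum p q r x (t + 2 * N)
      push_cast at this
      have ht' : (0 : ℚ) ≤ t := by exact_mod_cast ht
      nlinarith [mul_nonneg hE.le ht']
    · rintro ⟨_, h⟩; exact h
  rw [this]
  have h' : (((BB N p q r (t + 2 * N)).ncard : ℤ) : ℚ) = (((SS p q r (t + 2 * N)).ncard - 2 * (SS p q r (t + N)).ncard + (SS p q r t).ncard : ℤ) : ℚ) := by rw [h]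
  push_cast at h'
  linarith

lemma SS_neg (p q r : ℚ × ℚ) (hE : 0 < EE p q r) (t : ℤ) (ht : t < 0) : SS p q r t = ∅ := by
  ext x
  simp only [SS, mem_ofPred_eq, mem_empty_iff_false, iff_false]
  rintro ⟨h1, h2, h3⟩
  have := lf_sum p q r x t
  have ht' : (t : ℚ) < 0 := by exact_mod_cast ht
  nlinarith [mul_pos_of_neg_of_neg ht' (neg_lt_zero.2 hE)]

lemma SS_zero (p q r : ℚ × ℚ) (hE : 0 < EE p q r) : SS p q r 0 = {0} := by
  ext x
  simp only [SS, mem_ofPred_eq, mem_singleton_iff]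
  constructor
  · rintro ⟨h1, h2, h3⟩
    have hs := lf_sum p q r x 0
    simp only [Int.cast_zero, mul_zero] at hs
    have z1 : lf q r x 0 = 0 := by linarith
    have z2 : lf r p x 0 = 0 := by linarith
    have z3 : lf p q x 0 = 0 := by linarith
    have X1 : EE p q r * x.1 = lf q r x 0 * p.1 + lf r p x 0 * q.1 + lf p q x 0 * r.1 := by
      unfold EE lf; push_cast; ring
    have X2 : EE p q r * x.2 = lf q r x 0 * p.2 + lf r p x 0 * q.2 + lf p q x 0 * r.2 := by
      unfold EE lf; push_cast; ring
    rw [z1, z2, z3] at X1 X2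
    have y1 : (x.1 : ℚ) = 0 := by
      have : EE p q r * x.1 = 0 := by linarith
      rcases mul_eq_zero.1 this with h | h
      · linarith
      · exact h
    have y2 : (x.2 : ℚ) = 0 := by
      have : EE p q r * x.2 = 0 := by linarith
      rcases mul_eq_zero.1 this with h | h
      · linarith
      · exact h
    apply Prod.ext
    · simpa using y1
    · simpa using y2
  · rintro rfl
    simp [lf]

lemma diff_small {N : ℤ} (hN : 0 < N) {p q r : ℚ × ℚ} {P Q R : ℤ × ℤ} (hE : 0 < EE p q r)
    (hP : Clears N p P) (hQ : Clears N q Q) (hR : Clears N r R) (s : ℤ) (hs : 0 < s)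
    (hsN : s ≤ N) :
    ((SS p q r (2 * N - s)).ncard : ℚ) - 2 * (SS p q r (N - s)).ncard + (II p q r s).ncard
      = N ^ 2 * EE p q r := by
  rw [← PP_card hN hE hP hQ hR (-s + 2 * N)]
  have h := second_diff hN hE hQ hR (-s)
  rw [SS_neg p q r hE (-s) (by omega)] at h
  have hsplit := ncard_split _ (PP_finite hN hE hP hQ hR (-s + 2 * N))
    (fun x => 0 ≤ lf q r x (-s + 2 * N))
  have e1 : PP N p q r (-s + 2 * N) ∩ {x | 0 ≤ lf q r x (-s + 2 * N)}
      = BB N p q r (-s + 2 * N) := by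
    ext x
    simp only [PP, BB, mem_inter_iff, mem_ofPred_eq]
    tauto
  have e2 : (II p q r s).ncard =
      (PP N p q r (-s + 2 * N) ∩ {x | ¬ 0 ≤ lf q r x (-s + 2 * N)}).ncard := by
    apply ncard_refl _ _ (Q + R)
    intro x
    have a1 : lf q r (Q + R - x) (-s + 2 * N) = - lf q r x s := by
      have := lf_shift_right hR q (-x + Q) (-s + N)
      rw [lf_shift_left hQ, lf_neg] at this
      rw [← this]; congr 1 <;> [abel; ring]
    have a2 : lf r p (Q + R - x) (-s + 2 * N) = N * EE p q r - lf r p x s := by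
      have := lf_shift_left hR p (-x + Q) (-s + N)
      rw [lf_shift_opp hQ, lf_neg, EE_rot] at this
      rw [show N * EE p q r - lf r p x s = - lf r p x s + N * EE p q r by ring, ← this]
      congr 1 <;> [abel; ring]
    have a3 : lf p q (Q + R - x) (-s + 2 * N) = N * EE p q r - lf p q x s := by
      have := lf_shift_opp hR p q (-x + Q) (-s + N)
      rw [lf_shift_right hQ, lf_neg, ← EE_rot] at this
      rw [show N * EE p q r - lf p q x s = - lf p q x s + N * EE p q r by ring, ← this]
      congr 1 <;> [abel; ring]
    have hsum := lf_sum p q r x s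
    have hle : EE p q r * s ≤ EE p q r * N :=
      mul_le_mul_of_nonneg_left (by exact_mod_cast hsN) hE.le
    simp only [II, PP, mem_inter_iff, mem_ofPred_eq, a1, a2, a3, not_le]
    constructor
    · rintro ⟨h1, h2, h3⟩
      refine ⟨⟨⟨?_, ?_⟩, ?_, ?_⟩, ?_⟩ <;> linarith
    · rintro ⟨⟨⟨h1, h2⟩, h3, h4⟩, h5⟩
      refine ⟨?_, ?_, ?_⟩ <;> linarith
  rw [e1, ← e2] at hsplit
  rw [hsplit]
  have h' : (((BB N p q r (-s + 2 * N)).ncard : ℤ) : ℚ) = (((SS p q r (-s + 2 * N)).ncard - 2 * (SS p q r (-s + N)).ncard + (∅ : Set (ℤ × ℤ)).ncard : ℤ) : ℚ) := by rw [h]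
  rw [show 2 * N - s = -s + 2 * N by ring, show N - s = -s + N by ring]
  push_cast at h' ⊢
  simp at h'
  linarith

lemma exists_clears (p q r : ℚ × ℚ) (k : ℕ) : ∃ N : ℤ, (k : ℤ) ≤ N ∧ 0 < N ∧
    ∃ P Q R : ℤ × ℤ, Clears N p P ∧ Clears N q Q ∧ Clears N r R := by
  have one : ∀ (a : ℚ) (m : ℤ), (a.den : ℤ) ∣ m → ∃ z : ℤ, (z : ℚ) = m * a := by
    rintro a m ⟨c, rfl⟩
    refine ⟨c * a.num, ?_⟩
    push_cast
    have := Rat.mul_den_eq_num a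
    rw [← this]; ring
  let M : ℕ := p.1.den * p.2.den * (q.1.den * q.2.den) * (r.1.den * r.2.den)
  have hM : 0 < M := by
    have := p.1.den_pos
    have := p.2.den_pos
    have := q.1.den_pos
    have := q.2.den_pos
    have := r.1.den_pos
    have := r.2.den_pos
    positivity
  let N : ℤ := (M : ℤ) * ((k : ℤ) + 1)
  have hd : ∀ d : ℕ, d ∣ M → (d : ℤ) ∣ N := fun d h =>
    Dvd.dvd.mul_right (Int.natCast_dvd_natCast.2 h) _
  obtain ⟨p1, hp1⟩ := one p.1 N (hd _ ⟨p.2.den * (q.1.den * q.2.den) * (r.1.den * r.2.den), by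
    simp only [M]; ring⟩)
  obtain ⟨p2, hp2⟩ := one p.2 N (hd _ ⟨p.1.den * (q.1.den * q.2.den) * (r.1.den * r.2.den), by
    simp only [M]; ring⟩)
  obtain ⟨q1, hq1⟩ := one q.1 N (hd _ ⟨p.1.den * p.2.den * (q.2.den) * (r.1.den * r.2.den), by
    simp only [M]; ring⟩)
  obtain ⟨q2, hq2⟩ := one q.2 N (hd _ ⟨p.1.den * p.2.den * (q.1.den) * (r.1.den * r.2.den), by
    simp only [M]; ring⟩)
  obtain ⟨r1, hr1⟩ := one r.1 N (hd _ ⟨p.1.den * p.2.den * (q.1.den * q.2.den) * r.2.den, by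
    simp only [M]; ring⟩)
  obtain ⟨r2, hr2⟩ := one r.2 N (hd _ ⟨p.1.den * p.2.den * (q.1.den * q.2.den) * r.1.den, by
    simp only [M]; ring⟩)
  have hM' : (1 : ℤ) ≤ M := by exact_mod_cast hM
  refine ⟨N, ?_, ?_, (p1, p2), (q1, q2), (r1, r2), ⟨hp1, hp2⟩, ⟨hq1, hq2⟩, ⟨hr1, hr2⟩⟩
  · simp only [N]; nlinarith
  · simp only [N]; positivity

lemma poly_form (p q r : ℚ × ℚ) (hE : 0 < EE p q r) (c : Polynomial ℚ)
    (hc : ∀ t : ℕ, 0 < t → ((SS p q r t).ncard : ℚ) = c.eval (t : ℚ)) :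
    ∃ B : ℚ, ∀ x : ℚ, c.eval x = EE p q r / 2 * x ^ 2 + B * x + 1 := by
  obtain ⟨N, -, hN, P, Q, R, hP, hQ, hR⟩ := exists_clears p q r 0
  have hNq : (0 : ℚ) < N := by exact_mod_cast hN
  have hc' : ∀ t : ℤ, 0 < t → ((SS p q r t).ncard : ℚ) = c.eval (t : ℚ) := by
    intro t ht
    lift t to ℕ using ht.le
    simpa using hc t (by exact_mod_cast ht)
  set v : ℕ → ℚ := fun k => c.eval ((N : ℚ) * (k + 1)) with hv
  set E := EE p q r with hEdef
  have rec2 : ∀ k : ℕ, v (k + 2) - 2 * v (k + 1) + v k = N ^ 2 * E := by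
    intro k
    have := diff_large hN hE hP hQ hR (N * (k + 1)) (by positivity)
    rw [hc' _ (by positivity), hc' _ (by positivity), hc' _ (by positivity)] at this
    rw [← this]
    simp only [hv]
    push_cast
    congr 3 <;> ring_nf
  have hv0 : v 1 - 2 * v 0 + 1 = N ^ 2 * E := by
    have := diff_large hN hE hP hQ hR 0 le_rfl
    rw [hc' _ (by positivity), hc' _ (by positivity), SS_zero p q r hE] at this
    rw [← this]
    simp only [hv, ncard_singleton]
    push_cast
    congr 3 <;> ring_nf
  have form : ∀ k : ℕ, v k = v 0 + k * (v 1 - v 0) + N ^ 2 * E * (k * (k - 1) / 2) ∧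
      v (k + 1) = v 0 + (k + 1) * (v 1 - v 0) + N ^ 2 * E * ((k + 1) * k / 2) := by
    intro k
    induction k with
    | zero => constructor <;> simp
    | succ k ih =>
      obtain ⟨h1, h2⟩ := ih
      have h3 := rec2 k
      refine ⟨by rw [h2]; push_cast; ring, ?_⟩
      have : v (k + 1 + 1) = N ^ 2 * E + 2 * v (k + 1) - v k := by
        rw [← h3]; ring
      rw [this, h1, h2]
      push_cast
      ring
  set B : ℚ := (v 1 - v 0) / N - 3 * N * E / 2 with hB
  refine ⟨B, ?_⟩
  have hpoly : c = Polynomial.C (E / 2) * Polynomial.X ^ 2 + Polynomial.C B * Polynomial.X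
      + Polynomial.C 1 := by
    apply Polynomial.eq_of_infinite_eval_eq
    have hinj : Function.Injective (fun k : ℕ => (N : ℚ) * (k + 1)) := by
      intro a b hab
      have := mul_left_cancel₀ hNq.ne' hab
      have : (a : ℚ) = b := by linarith
      exact_mod_cast this
    refine (infinite_range_of_injective hinj).mono ?_
    rintro _ ⟨k, rfl⟩
    have h1 := (form k).1
    simp only [mem_ofPred_eq, Polynomial.eval_add, Polynomial.eval_mul, Polynomial.eval_C,
      Polynomial.eval_pow, Polynomial.eval_X]
    change v k = _
    rw [h1, hB]
    have e : v 1 = N ^ 2 * E + 2 * v 0 - 1 := by linarith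
    rw [e]
    field_simp
    ring
  intro x
  rw [hpoly]
  simp

lemma recip (p q r : ℚ × ℚ) (hE : 0 < EE p q r) (c : Polynomial ℚ)
    (hc : ∀ t : ℕ, 0 < t → ((SS p q r t).ncard : ℚ) = c.eval (t : ℚ)) (s : ℕ) (hs : 0 < s) :
    ((II p q r s).ncard : ℚ) = c.eval (-(s : ℚ)) := by
  obtain ⟨B, hB⟩ := poly_form p q r hE c hc
  obtain ⟨N, hNs, hN, P, Q, R, hP, hQ, hR⟩ := exists_clears p q r (s + 1)
  have hc' : ∀ t : ℤ, 0 < t → ((SS p q r t).ncard : ℚ) = c.eval (t : ℚ) := by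
    intro t ht
    lift t to ℕ using ht.le
    simpa using hc t (by exact_mod_cast ht)
  push_cast at hNs
  have := diff_small hN hE hP hQ hR s (by omega) (by omega)
  rw [hc' _ (by omega), hc' _ (by omega), hB, hB] at this
  rw [hB]
  push_cast at this
  linarith

lemma lf_add (q r : ℚ × ℚ) (x y : ℤ × ℤ) (s t : ℤ) :
    lf q r (x + y) (s + t) = lf q r x s + lf q r y t := by
  unfold lf
  simp only [Prod.fst_add, Prod.snd_add]
  push_cast; ring

lemma lf_smul (q r : ℚ × ℚ) (x : ℤ × ℤ) (k s : ℤ) :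
    lf q r (k • x) (k * s) = k * lf q r x s := by
  unfold lf
  simp only [Prod.smul_fst, Prod.smul_snd, smul_eq_mul]
  push_cast; ring

/-- Every linear form takes integral values. -/
lemma integrality (p q r : ℚ × ℚ) (hE : 0 < EE p q r) (z : ℤ × ℤ) (hz : z ∈ II p q r 1)
    (h : ∀ s : ℤ, 2 ≤ s → ∀ x ∈ II p q r s, x - z ∈ SS p q r (s - 1)) (v : ℤ × ℤ) :
    ∃ m : ℤ, lf q r v 0 = m * lf q r z 1 := by
  obtain ⟨z1, z2, z3⟩ := hz
  set P1 := lf q r z 1 with hP1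
  set P2 := lf r p z 1 with hP2
  set P3 := lf p q z 1 with hP3
  set E := EE p q r with hEd
  set f1 := - lf q r v 0 / P1 with hf1
  set f2 := - lf r p v 0 / P2 with hf2
  set f3 := - lf p q v 0 / P3 with hf3
  have g1 : lf q r v 0 = - f1 * P1 := by rw [hf1]; field_simp
  have g2 : lf r p v 0 = - f2 * P2 := by rw [hf2]; field_simp
  have g3 : lf p q v 0 = - f3 * P3 := by rw [hf3]; field_simp
  obtain ⟨k, hk⟩ := exists_nat_gt (|P2 * (f2 - f1) / E| + |P3 * (f3 - f1) / E| + |f1| + 1)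
  obtain ⟨N, hkN, hN, P, Q, R, hP, hQ, hR⟩ := exists_clears p q r k
  have hkN' : (k : ℚ) ≤ N := by exact_mod_cast hkN
  have n0 := abs_nonneg (P2 * (f2 - f1) / E)
  have n1 := abs_nonneg (P3 * (f3 - f1) / E)
  have n2 := abs_nonneg f1
  have b2 : P2 * (f2 - f1) < N * E := by
    have := le_abs_self (P2 * (f2 - f1) / E)
    rw [← div_lt_iff₀ hE]; linarith
  have b3 : P3 * (f3 - f1) < N * E := by
    have := le_abs_self (P3 * (f3 - f1) / E)
    rw [← div_lt_iff₀ hE]; linarith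
  have b1 : 1 ≤ 2 * N + f1 := by
    have := neg_abs_le f1
    linarith
  -- the level
  set t : ℤ := ⌊2 * N + f1⌋ + 1 with ht
  have ht1 : (2 * N + f1 : ℚ) < t := by
    rw [ht]; push_cast; exact Int.lt_floor_add_one _
  have ht2 : 2 ≤ t := by
    have : (1 : ℤ) ≤ ⌊2 * N + f1⌋ := by
      rw [Int.le_floor]; exact_mod_cast b1
    omega
  have zero_q : ∀ (a b : ℚ × ℚ), lf a b 0 0 = 0 := by intro a b; simp [lf]
  have val : ∀ (a b : ℚ × ℚ) (u : ℤ), lf a b (v + (Q + R + (u - 2 * N) • z)) u =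
      lf a b v 0 + (lf a b Q N + lf a b R N + (u - 2 * N) * lf a b z 1) := by
    intro a b u
    have : u = 0 + (N + N + (u - 2 * N) * 1) := by ring
    conv_lhs => rw [this]
    rw [show 0 + (N + N + (u - 2 * N) * 1) - 2 * N = u - 2 * N by ring,
      lf_add, lf_add, lf_add, lf_smul]
    push_cast; ring
  have c1 : lf q r Q N = 0 := by
    have := lf_shift_left hQ r 0 0
    simpa [zero_q] using this
  have c2 : lf q r R N = 0 := by
    have := lf_shift_right hR q 0 0
    simpa [zero_q] using this
  have c3 : lf r p Q N = N * E := by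
    have := lf_shift_opp hQ r p 0 0
    rw [EE_rot] at this
    simpa [zero_q] using this
  have c4 : lf r p R N = 0 := by
    have := lf_shift_left hR p 0 0
    simpa [zero_q] using this
  have c5 : lf p q Q N = 0 := by
    have := lf_shift_right hQ p 0 0
    simpa [zero_q] using this
  have c6 : lf p q R N = N * E := by
    have := lf_shift_opp hR p q 0 0
    rw [← EE_rot] at this
    simpa [zero_q] using this
  have hmem : v + (Q + R + (t - 2 * N) • z) ∈ II p q r t := by
    simp only [II, mem_ofPred_eq, val, c1, c2, c3, c4, c5, c6, g1, g2, g3]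
    rw [← hP1, ← hP2, ← hP3]
    refine ⟨?_, ?_, ?_⟩
    · nlinarith [mul_pos (sub_pos.2 ht1) z1]
    · nlinarith [mul_pos (sub_pos.2 ht1) z2]
    · nlinarith [mul_pos (sub_pos.2 ht1) z3]
  have h1 := (h t ht2 _ hmem).1
  have e : v + (Q + R + (t - 2 * N) • z) - z = v + (Q + R + ((t - 1) - 2 * N) • z) := by
    rw [show t - 1 - 2 * N = (t - 2 * N) - 1 by ring, sub_smul _ (1 : ℤ), one_smul]
    abel
  rw [e, val, c1, c2, g1, ← hP1] at h1
  have h2 : (2 * N + f1 : ℚ) ≤ (t : ℚ) - 1 := by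
    push_cast at h1
    have : 0 ≤ ((t : ℚ) - 1 - (2 * N + f1)) * P1 := by linarith
    have := nonneg_of_mul_nonneg_left this z1
    linarith
  have h3 : (2 * N + f1 : ℚ) = (t : ℚ) - 1 := by
    apply le_antisymm h2
    rw [ht]; push_cast
    have := Int.floor_le (2 * N + f1 : ℚ)
    linarith
  refine ⟨2 * N - (t - 1), ?_⟩
  rw [g1]
  push_cast
  rw [show -f1 = 2 * N - ((t : ℚ) - 1) by linarith]

lemma combi (p q r : ℚ × ℚ) (hE : 0 < EE p q r) (c : Polynomial ℚ)
    (hc : ∀ t : ℕ, 0 < t → ((SS p q r t).ncard : ℚ) = c.eval (t : ℚ))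
    (hI : (II p q r 1).ncard = 1) :
    1 ≤ (SS p q r 1 \ II p q r 1).ncard ∧ (SS p q r 1 \ II p q r 1).ncard ≤ 9 ∧
      (SS p q r 1 \ II p q r 1).ncard ≠ 7 := by
  obtain ⟨B, hB⟩ := poly_form p q r hE c hc
  have hsub : ∀ t, II p q r t ⊆ SS p q r t := fun t x ⟨h1, h2, h3⟩ => ⟨h1.le, h2.le, h3.le⟩
  have hB2 : B = EE p q r / 2 := by
    have := recip p q r hE c hc 1 one_pos
    rw [Nat.cast_one, hI, hB] at this
    push_cast at this
    linarith
  have hb : ((SS p q r 1 \ II p q r 1).ncard : ℚ) = EE p q r := by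
    have h1 := ncard_sdiff_add_ncard_of_subset (hsub 1) (SS_finite p q r hE 1)
    have h2 := hc 1 one_pos
    rw [hB, hB2, Nat.cast_one] at h2
    rw [hI] at h1
    have h3 : ((SS p q r 1 \ II p q r 1).ncard : ℚ) + 1 = (SS p q r 1).ncard := by
      exact_mod_cast h1
    rw [h2] at h3
    push_cast at h3
    linarith
  obtain ⟨z, hz⟩ := ncard_eq_one.1 hI
  have hzI : z ∈ II p q r 1 := by rw [hz]; rfl
  have hkey : ∀ s : ℤ, 2 ≤ s → ∀ x ∈ II p q r s, x - z ∈ SS p q r (s - 1) := by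
    intro s hs x hx
    have hsub' : Set.image (fun y => y + z) (SS p q r (s - 1)) ⊆ II p q r s := by
      rintro _ ⟨y, ⟨y1, y2, y3⟩, rfl⟩
      obtain ⟨z1, z2, z3⟩ := hzI
      have e : s = (s - 1) + 1 := by ring
      rw [e]
      simp only [II, mem_ofPred_eq, lf_add]
      exact ⟨by linarith, by linarith, by linarith⟩
    have hcard : (II p q r s).ncard ≤ (Set.image (fun y => y + z) (SS p q r (s - 1))).ncard := by
      rw [ncard_image_of_injective _ (add_left_injective z)]
      lift s to ℕ using by omega
      have a1 := recip p q r hE c hc s (by omega)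
      have a2 := hc (s - 1) (by omega)
      rw [hB, hB2] at a1 a2
      have e : ((s - 1 : ℕ) : ℤ) = (s : ℤ) - 1 := by omega
      have e' : ((s - 1 : ℕ) : ℚ) = (s : ℚ) - 1 := by exact_mod_cast congrArg (Int.cast (R := ℚ)) e
      rw [e, e'] at a2
      have : ((II p q r s).ncard : ℚ) ≤ (SS p q r (s - 1)).ncard := by
        rw [a1, a2]; apply le_of_eq; ring
      exact_mod_cast this
    have heq := eq_of_subset_of_ncard_le hsub' hcard
      ((SS_finite p q r hE s).subset (hsub s))
    rw [← heq] at hx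
    obtain ⟨y, hy, rfl⟩ := hx
    simpa using hy
  have rotI : ∀ t, II q r p t = II p q r t := by
    intro t; ext x; simp only [II, mem_ofPred_eq]; tauto
  have rotS : ∀ t, SS q r p t = SS p q r t := by
    intro t; ext x; simp only [SS, mem_ofPred_eq]; tauto
  have rotI' : ∀ t, II r p q t = II p q r t := by
    intro t; ext x; simp only [II, mem_ofPred_eq]; tauto
  have rotS' : ∀ t, SS r p q t = SS p q r t := by
    intro t; ext x; simp only [SS, mem_ofPred_eq]; tauto
  have i1 := integrality p q r hE z hzI hkey
  have i2 := integrality q r p (by rw [EE_rot]; exact hE) z (by rw [rotI]; exact hzI)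
    (by simp only [rotI, rotS]; exact hkey)
  have i3 := integrality r p q (by rw [← EE_rot]; exact hE) z (by rw [rotI']; exact hzI)
    (by simp only [rotI', rotS']; exact hkey)
  have hsum := lf_sum p q r z 1
  obtain ⟨z1, z2, z3⟩ := hzI
  obtain ⟨a1, ha1⟩ := i1 (1, 0)
  obtain ⟨a2, ha2⟩ := i1 (0, 1)
  obtain ⟨b1, hb1⟩ := i2 (1, 0)
  obtain ⟨b2, hb2⟩ := i2 (0, 1)
  obtain ⟨c1, hc1⟩ := i3 (1, 0)
  obtain ⟨c2, hc2⟩ := i3 (0, 1)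
  set P1 := lf q r z 1
  set P2 := lf r p z 1
  set P3 := lf p q z 1
  have d1 : ((b1 * c2 - b2 * c1 : ℤ) : ℚ) * (P2 * P3) = EE p q r := by
    push_cast
    have : ((b1 : ℚ) * c2 - b2 * c1) * (P2 * P3)
      = (b1 * P2) * (c2 * P3) - (b2 * P2) * (c1 * P3) := by ring
    rw [this, ← hb1, ← hb2, ← hc1, ← hc2]
    simp [lf, EE]; ring
  have d2 : ((c1 * a2 - c2 * a1 : ℤ) : ℚ) * (P3 * P1) = EE p q r := by
    push_cast
    have : ((c1 : ℚ) * a2 - c2 * a1) * (P3 * P1)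
      = (c1 * P3) * (a2 * P1) - (c2 * P3) * (a1 * P1) := by ring
    rw [this, ← ha1, ← ha2, ← hc1, ← hc2]
    simp [lf, EE]; ring
  have d3 : ((a1 * b2 - a2 * b1 : ℤ) : ℚ) * (P1 * P2) = EE p q r := by
    push_cast
    have : ((a1 : ℚ) * b2 - a2 * b1) * (P1 * P2)
      = (a1 * P1) * (b2 * P2) - (a2 * P1) * (b1 * P2) := by ring
    rw [this, ← ha1, ← ha2, ← hb1, ← hb2]
    simp [lf, EE]; ring
  generalize (b1 * c2 - b2 * c1 : ℤ) = D1 at d1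
  generalize (c1 * a2 - c2 * a1 : ℤ) = D2 at d2
  generalize (a1 * b2 - a2 * b1 : ℤ) = D3 at d3
  generalize (SS p q r 1 \ II p q r 1).ncard = n at hb ⊢
  have pos : ∀ (D : ℤ) (w : ℚ), 0 < w → (D : ℚ) * w = EE p q r → 0 < D := by
    intro D w hw hD
    have : (0 : ℚ) < D := by
      by_contra hcon
      push Not at hcon
      nlinarith
    exact_mod_cast this
  have D1p := pos D1 _ (mul_pos z2 z3) d1
  have D2p := pos D2 _ (mul_pos z3 z1) d2
  have D3p := pos D3 _ (mul_pos z1 z2) d3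
  have main : ((D1 : ℚ) + D2 + D3) ^ 2 = n * (D1 * D2 * D3) := by
    have hne : (P1 * P2 * P3) ^ 2 ≠ 0 := by positivity
    apply mul_right_cancel₀ hne
    have l1 : ((D1 : ℚ) + D2 + D3) * (P1 * P2 * P3) = EE p q r * EE p q r := by
      have : P1 + P2 + P3 = EE p q r := by rw [hsum]; simp
      linear_combination P1 * d1 + P2 * d2 + P3 * d3 + EE p q r * this
    calc ((D1 : ℚ) + D2 + D3) ^ 2 * (P1 * P2 * P3) ^ 2
        = (((D1 : ℚ) + D2 + D3) * (P1 * P2 * P3)) ^ 2 := by ring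
      _ = EE p q r * (EE p q r * EE p q r * EE p q r) := by rw [l1]; ring
      _ = n * ((D1 * (P2 * P3)) * (D2 * (P3 * P1)) * (D3 * (P1 * P2))) := by
        rw [d1, d2, d3, hb]
      _ = _ := by ring
  lift D1 to ℕ using D1p.le
  lift D2 to ℕ using D2p.le
  lift D3 to ℕ using D3p.le
  have main' : (D1 + D2 + D3) ^ 2 = n * (D1 * D2 * D3) := by exact_mod_cast main
  refine ⟨?_, vieta n D1 D2 D3 (by omega) (by omega) (by omega) main'⟩
  have : (0 : ℚ) < n := by rw [hb]; exact hE
  exact_mod_cast this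

/-- Real version of the barycentric coordinate at level one. -/
def lr (q r : ℚ × ℚ) (x : ℝ × ℝ) : ℝ :=
  x.1 * (q.2 - r.2) - x.2 * (q.1 - r.1) + (q.1 * r.2 - q.2 * r.1)

lemma lr_comb (q r : ℚ × ℚ) (x y : ℝ × ℝ) (a b : ℝ) (hab : a + b = 1) :
    lr q r (a • x + b • y) = a * lr q r x + b * lr q r y := by
  unfold lr
  simp only [Prod.fst_add, Prod.snd_add, Prod.smul_fst, Prod.smul_snd, smul_eq_mul]
  have : b = 1 - a := by linarith
  subst this
  ring

lemma lr_sum (p q r : ℚ × ℚ) (x : ℝ × ℝ) :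
    lr q r x + lr r p x + lr p q x = (EE p q r : ℝ) := by
  unfold lr EE; push_cast; ring

lemma mem_tri (p q r : ℚ × ℚ) (hE : 0 < EE p q r) (x : ℝ × ℝ) :
    x ∈ convexHull ℝ {qpt p, qpt q, qpt r} ↔ 0 ≤ lr q r x ∧ 0 ≤ lr r p x ∧ 0 ≤ lr p q x := by
  have hE' : (0 : ℝ) < (EE p q r : ℝ) := by exact_mod_cast hE
  constructor
  · intro hx
    have hconv : Convex ℝ {x : ℝ × ℝ | 0 ≤ lr q r x ∧ 0 ≤ lr r p x ∧ 0 ≤ lr p q x} := by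
      rintro x ⟨x1, x2, x3⟩ y ⟨y1, y2, y3⟩ a b ha hb hab
      simp only [mem_ofPred_eq, lr_comb _ _ _ _ _ _ hab]
      exact ⟨by positivity, by positivity, by positivity⟩
    have hs : ({qpt p, qpt q, qpt r} : Set (ℝ × ℝ)) ⊆
        {x : ℝ × ℝ | 0 ≤ lr q r x ∧ 0 ≤ lr r p x ∧ 0 ≤ lr p q x} := by
      have o1 : ∀ a b : ℚ × ℚ, lr a b (qpt a) = 0 := by intro a b; unfold lr qpt; ring
      have o2 : ∀ a b : ℚ × ℚ, lr a b (qpt b) = 0 := by intro a b; unfold lr qpt; ring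
      have o3 : ∀ a b c : ℚ × ℚ, lr b c (qpt a) = (EE a b c : ℝ) := by
        intro a b c; unfold lr qpt EE; push_cast; ring
      rintro y (rfl | rfl | rfl)
      · simp only [mem_ofPred_eq, o1, o2, o3]
        exact ⟨hE'.le, le_rfl, le_rfl⟩
      · simp only [mem_ofPred_eq, o1, o2, o3, EE_rot]
        exact ⟨le_rfl, hE'.le, le_rfl⟩
      · simp only [mem_ofPred_eq, o1, o2, o3]
        rw [← EE_rot]
        exact ⟨le_rfl, le_rfl, hE'.le⟩
    exact convexHull_min hs hconv hx
  · rintro ⟨h1, h2, h3⟩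
    set E : ℝ := (EE p q r : ℝ) with hEd
    have key := (convex_convexHull ℝ ({qpt p, qpt q, qpt r} : Set (ℝ × ℝ))).sum_mem
      (t := Finset.univ) (w := ![lr q r x / E, lr r p x / E, lr p q x / E])
      (z := ![qpt p, qpt q, qpt r]) ?_ ?_ ?_
    · have e : ∑ i, ![lr q r x / E, lr r p x / E, lr p q x / E] i • ![qpt p, qpt q, qpt r] i
          = x := by
        rw [Fin.sum_univ_three]
        have hne : E ≠ 0 := hE'.ne'
        apply Prod.ext
        · simp [qpt]
          field_simp
          rw [hEd]; unfold lr EE; push_cast; ring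
        · simp [qpt]
          field_simp
          rw [hEd]; unfold lr EE; push_cast; ring
      rw [e] at key
      exact key
    · intro i _
      fin_cases i
      · exact div_nonneg h1 hE'.le
      · exact div_nonneg h2 hE'.le
      · exact div_nonneg h3 hE'.le
    · rw [Fin.sum_univ_three]
      have := lr_sum p q r x
      simp only [Matrix.cons_val]
      rw [← add_div, ← add_div, this, div_self hE'.ne']
    · intro i _
      apply subset_convexHull
      fin_cases i <;> simp

lemma lr_continuous (q r : ℚ × ℚ) : Continuous (lr q r) := by
  unfold lr; fun_prop

lemma mem_tri_interior (p q r : ℚ × ℚ) (hE : 0 < EE p q r) (x : ℝ × ℝ) :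
    x ∈ interior (convexHull ℝ {qpt p, qpt q, qpt r}) ↔
      0 < lr q r x ∧ 0 < lr r p x ∧ 0 < lr p q x := by
  have hE' : (0 : ℝ) < (EE p q r : ℝ) := by exact_mod_cast hE
  constructor
  · intro hx
    -- the centroid
    set z : ℝ × ℝ := ((p.1 + q.1 + r.1) / 3, (p.2 + q.2 + r.2) / 3) with hz
    have z1 : lr q r z = (EE p q r : ℝ) / 3 := by unfold lr EE; rw [hz]; push_cast; ring
    have z2 : lr r p z = (EE p q r : ℝ) / 3 := by unfold lr EE; rw [hz]; push_cast; ring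
    have z3 : lr p q z = (EE p q r : ℝ) / 3 := by unfold lr EE; rw [hz]; push_cast; ring
    have hcont : Filter.Tendsto (fun ε : ℝ => (1 + ε) • x + (-ε) • z) (nhds 0) (nhds x) := by
      have : Continuous (fun ε : ℝ => (1 + ε) • x + (-ε) • z) := by fun_prop
      simpa using this.tendsto 0
    have hev := hcont.eventually (mem_interior_iff_mem_nhds.1 hx)
    have hpos : ∃ᶠ ε : ℝ in nhds 0, 0 < ε := by
      have : ∃ᶠ ε : ℝ in nhdsWithin 0 (Ioi 0), 0 < ε :=
        Filter.Eventually.frequently (f := nhdsWithin (0 : ℝ) (Ioi 0)) self_mem_nhdsWithin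
      exact this.filter_mono nhdsWithin_le_nhds
    obtain ⟨ε, hε, hmem⟩ := (hpos.and_eventually hev).exists
    obtain ⟨h1, h2, h3⟩ := (mem_tri p q r hE _).1 hmem
    rw [lr_comb _ _ _ _ _ _ (by ring), z1] at h1
    rw [lr_comb _ _ _ _ _ _ (by ring), z2] at h2
    rw [lr_comb _ _ _ _ _ _ (by ring), z3] at h3
    have fin : ∀ l : ℝ, 0 ≤ (1 + ε) * l + -ε * ((EE p q r : ℝ) / 3) → 0 < l := by
      intro l hl
      by_contra hc
      push Not at hc
      nlinarith [mul_pos hε hE']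
    exact ⟨fin _ h1, fin _ h2, fin _ h3⟩
  · intro hx
    have hopen : IsOpen {x : ℝ × ℝ | 0 < lr q r x ∧ 0 < lr r p x ∧ 0 < lr p q x} :=
      (isOpen_lt continuous_const (lr_continuous q r)).inter
        ((isOpen_lt continuous_const (lr_continuous r p)).inter
          (isOpen_lt continuous_const (lr_continuous p q)))
    refine mem_interior.2 ⟨_, ?_, hopen, hx⟩
    rintro y ⟨y1, y2, y3⟩
    exact (mem_tri p q r hE y).2 ⟨y1.le, y2.le, y3.le⟩

/-- Embedding of the lattice. -/
def emb (x : ℤ × ℤ) : ℝ × ℝ := ((x.1 : ℝ), (x.2 : ℝ))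

lemma emb_injective : Function.Injective emb := by
  intro x y h
  have h1 : (x.1 : ℝ) = y.1 := congrArg Prod.fst h
  have h2 : (x.2 : ℝ) = y.2 := congrArg Prod.snd h
  exact Prod.ext (by exact_mod_cast h1) (by exact_mod_cast h2)

lemma ncard_lattice (A : Set (ℝ × ℝ)) (S : Set (ℤ × ℤ)) (h : ∀ x, x ∈ S ↔ emb x ∈ A) :
    (A ∩ latticePts).ncard = S.ncard := by
  rw [← ncard_image_of_injective S emb_injective]
  congr 1
  ext y
  constructor
  · rintro ⟨hy, m, n, rfl⟩
    exact ⟨(m, n), (h _).2 hy, rfl⟩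
  · rintro ⟨x, hx, rfl⟩
    exact ⟨(h x).1 hx, x.1, x.2, rfl⟩

lemma lr_emb (q r : ℚ × ℚ) (x : ℤ × ℤ) (t : ℕ) (ht : 0 < t) :
    (lf q r x t : ℝ) = t * lr q r ((t : ℝ)⁻¹ • emb x) := by
  have : (t : ℝ) ≠ 0 := by positivity
  unfold lf lr emb
  simp only [Prod.smul_fst, Prod.smul_snd, smul_eq_mul]
  push_cast
  field_simp

lemma SS_iff (p q r : ℚ × ℚ) (hE : 0 < EE p q r) (t : ℕ) (ht : 0 < t) (x : ℤ × ℤ) :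
    x ∈ SS p q r t ↔ emb x ∈ (t : ℝ) • convexHull ℝ {qpt p, qpt q, qpt r} := by
  have ht' : (0 : ℝ) < t := by exact_mod_cast ht
  have e : ∀ a b : ℚ × ℚ, 0 ≤ lf a b x t ↔ 0 ≤ lr a b ((t : ℝ)⁻¹ • emb x) := by
    intro a b
    rw [← mul_nonneg_iff_of_pos_left ht', ← lr_emb a b x t ht]
    exact Rat.cast_nonneg.symm
  rw [mem_smul_set_iff_inv_smul_mem₀ ht'.ne', mem_tri p q r hE]
  simp only [SS, mem_ofPred_eq, e]

lemma II_iff (p q r : ℚ × ℚ) (hE : 0 < EE p q r) (x : ℤ × ℤ) :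
    x ∈ II p q r 1 ↔ emb x ∈ interior (convexHull ℝ {qpt p, qpt q, qpt r}) := by
  have e : ∀ a b : ℚ × ℚ, 0 < lf a b x 1 ↔ 0 < lr a b (emb x) := by
    intro a b
    have := lr_emb a b x 1 one_pos
    simp only [Nat.cast_one, inv_one, one_smul, one_mul] at this
    rw [← this]
    exact Rat.cast_pos.symm
  rw [mem_tri_interior p q r hE]
  simp only [II, mem_ofPred_eq, e]

lemma oriented_case (p q r : ℚ × ℚ) (hE : 0 < EE p q r)
    (hPIP : IsPIP (convexHull ℝ {qpt p, qpt q, qpt r}))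
    (hint : (interior (convexHull ℝ {qpt p, qpt q, qpt r}) ∩ latticePts).ncard = 1) :
    1 ≤ (frontier (convexHull ℝ {qpt p, qpt q, qpt r}) ∩ latticePts).ncard ∧
    (frontier (convexHull ℝ {qpt p, qpt q, qpt r}) ∩ latticePts).ncard ≤ 9 ∧
      (frontier (convexHull ℝ {qpt p, qpt q, qpt r}) ∩ latticePts).ncard ≠ 7 := by
  set T : Set (ℝ × ℝ) := convexHull ℝ {qpt p, qpt q, qpt r} with hT
  obtain ⟨c, hc⟩ := hPIP
  have hclosed : IsClosed T := by
    have : T = {x : ℝ × ℝ | 0 ≤ lr q r x ∧ 0 ≤ lr r p x ∧ 0 ≤ lr p q x} := by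
      ext x; exact mem_tri p q r hE x
    rw [this]
    exact (isClosed_le continuous_const (lr_continuous q r)).inter
        ((isClosed_le continuous_const (lr_continuous r p)).inter
          (isClosed_le continuous_const (lr_continuous p q)))
  have h1 : ∀ t : ℕ, 0 < t → ((SS p q r t).ncard : ℚ) = c.eval (t : ℚ) := by
    intro t ht
    rw [← hc t ht]
    unfold ehr
    rw [ncard_lattice _ (SS p q r t) (SS_iff p q r hE t ht)]
  have h2 : (II p q r 1).ncard = 1 := by
    rw [← hint, ncard_lattice _ _ (II_iff p q r hE)]
  have h3 : (frontier T ∩ latticePts).ncard = (SS p q r 1 \ II p q r 1).ncard := by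
    apply ncard_lattice
    intro x
    have a1 := SS_iff p q r hE 1 one_pos x
    rw [Nat.cast_one, Nat.cast_one, one_smul] at a1
    rw [hclosed.frontier_eq, mem_sdiff, mem_sdiff, a1, II_iff p q r hE]
  rw [h3]
  exact combi p q r hE c h1 h2

lemma EE_ne_zero (p q r : ℚ × ℚ)
    (h : ¬ Collinear ℝ ({qpt p, qpt q, qpt r} : Set (ℝ × ℝ))) : EE p q r ≠ 0 := by
  intro h0
  apply h
  by_cases hpq : p = q
  · subst hpq
    rw [insert_eq_of_mem (mem_insert _ _)]
    exact collinear_pair ℝ _ _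
  have h0' : ((q.1 - p.1) * (r.2 - p.2) - (q.2 - p.2) * (r.1 - p.1) : ℝ) = 0 := by
    have : ((EE p q r : ℚ) : ℝ) = 0 := by rw [h0]; simp
    unfold EE at this
    push_cast at this
    exact this
  rw [collinear_iff_of_mem (p₀ := qpt p) (by simp)]
  refine ⟨qpt q - qpt p, ?_⟩
  rintro y (rfl | rfl | rfl)
  · exact ⟨0, by simp⟩
  · exact ⟨1, by simp⟩
  · by_cases h1 : p.1 = q.1
    · have h2 : (q.2 - p.2 : ℝ) ≠ 0 := by
        intro hc
        apply hpq
        refine Prod.ext h1 ?_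
        have : (q.2 : ℝ) = p.2 := by linarith
        exact_mod_cast this.symm
      refine ⟨(r.2 - p.2) / (q.2 - p.2), ?_⟩
      have h1' : (p.1 : ℝ) = q.1 := by exact_mod_cast h1
      apply Prod.ext
      · simp [qpt]
        field_simp
        linear_combination -h0'
      · simp [qpt]
        field_simp
        ring
    · have h2 : (q.1 - p.1 : ℝ) ≠ 0 := by
        intro hc
        apply h1
        have : (q.1 : ℝ) = p.1 := by linarith
        exact_mod_cast this.symm
      refine ⟨(r.1 - p.1) / (q.1 - p.1), ?_⟩
      apply Prod.ext
      · simp [qpt]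
        field_simp
        ring
      · simp [qpt]
        field_simp
        linear_combination h0'

/-- a rational pseudointegral triangle with exactly one interior
lattice point has b boundary lattice points with 1 ≤ b ≤ 9 and b ≠ 7. -/
theorem stmt_6 (T : Set (ℝ × ℝ)) (hT : IsRatTriangle T) (hPIP : IsPIP T)
    (hint : (interior T ∩ latticePts).ncard = 1) :
    1 ≤ (frontier T ∩ latticePts).ncard ∧ (frontier T ∩ latticePts).ncard ≤ 9 ∧
      (frontier T ∩ latticePts).ncard ≠ 7 := by
  obtain ⟨p, q, r, hcol, rfl⟩ := hT
  rcases lt_or_gt_of_ne (EE_ne_zero p q r hcol) with h | h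
  · have h' : 0 < EE p r q := by
      have : EE p r q = - EE p q r := by unfold EE; ring
      linarith
    have e : ({qpt p, qpt q, qpt r} : Set (ℝ × ℝ)) = {qpt p, qpt r, qpt q} := by
      rw [pair_comm]
    rw [e] at hPIP hint ⊢
    exact oriented_case p r q h' hPIP hint
  · exact oriented_case p q r h hPIP hint
end

section
/- Let b be an integer with 1 ≤ b ≤ 9 and b ≠ 7. Then for every positive integer k there exists a rational triangle T ⊂ ℝ² that is pseudointegral, has denominator greater than k, has exactly one lattice point in its interior, and has exactly b lattice points on its boundary. -/
open Set Pointwise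

/-- `P` has denominator `d`: `d` is the least positive integer `k` such that the
vertices (extreme points) of `kP` are all lattice points. -/
def HasDenom (P : Set (ℝ × ℝ)) (d : ℕ) : Prop :=
  IsLeast {k : ℕ | 0 < k ∧ Set.extremePoints ℝ ((k : ℝ) • P) ⊆ latticePts} d

/-- Integer points of the `t`-th dilate, described by its three edge inequalities. -/
def triE (m p q t : ℤ) : Set (ℤ × ℤ) :=
  {P | P.2 ≤ t ∧ P.2 - m * P.1 ≤ t ∧ p * P.1 - q * P.2 ≤ t}

/-- Integer points on the boundary of the `t`-th dilate. -/
def triS (m p q t : ℤ) : Set (ℤ × ℤ) :=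
  {P | P ∈ triE m p q t ∧ (P.2 = t ∨ P.2 - m * P.1 = t ∨ p * P.1 - q * P.2 = t)}

/-- The real `t`-th dilate. -/
def triR (m p q : ℤ) (t : ℝ) : Set (ℝ × ℝ) :=
  {P | P.2 ≤ t ∧ P.2 - m * P.1 ≤ t ∧ p * P.1 - q * P.2 ≤ t}

/-- Casting of integer points to real points. -/
def zc (P : ℤ × ℤ) : ℝ × ℝ := ((P.1 : ℝ), (P.2 : ℝ))

lemma pos_r {u v : ℤ} (h : 0 < u * v) (hu : 0 ≤ u) : 0 < v := by
  by_contra hv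
  push Not at hv
  have := mul_nonpos_of_nonneg_of_nonpos hu hv
  linarith

lemma zc_inj : Function.Injective zc := by
  intro P Q h
  simp only [zc, Prod.mk.injEq, Int.cast_inj] at h
  exact Prod.ext h.1 h.2

lemma range_zc : latticePts = Set.range zc := by
  ext P
  constructor
  · rintro ⟨i, j, rfl⟩; exact ⟨(i, j), rfl⟩
  · rintro ⟨Q, rfl⟩; exact ⟨Q.1, Q.2, rfl⟩

lemma inter_lattice (A : Set (ℝ × ℝ)) (B : Set (ℤ × ℤ)) (h : ∀ P, zc P ∈ A ↔ P ∈ B) :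
    (A ∩ latticePts).ncard = B.ncard := by
  have : A ∩ latticePts = zc '' B := by
    rw [range_zc]
    ext P
    constructor
    · rintro ⟨hA, Q, rfl⟩; exact ⟨Q, (h Q).1 hA, rfl⟩
    · rintro ⟨Q, hQ, rfl⟩; exact ⟨(h Q).2 hQ, Q, rfl⟩
  rw [this, Set.ncard_image_of_injective _ zc_inj]

lemma zc_mem_triR (m p q t : ℤ) (P : ℤ × ℤ) : zc P ∈ triR m p q t ↔ P ∈ triE m p q t := by
  simp only [zc, triR, triE, Set.mem_ofPred_eq]
  norm_cast

lemma triR_smul (m p q : ℤ) (t : ℝ) (ht : 0 < t) : t • triR m p q 1 = triR m p q t := by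
  ext P
  rw [Set.mem_smul_set_iff_inv_smul_mem₀ ht.ne']
  simp only [triR, Set.mem_ofPred_eq, Prod.smul_fst, Prod.smul_snd, smul_eq_mul]
  have e1 : t⁻¹ * P.2 - m * (t⁻¹ * P.1) = t⁻¹ * (P.2 - m * P.1) := by ring
  have e2 : p * (t⁻¹ * P.1) - q * (t⁻¹ * P.2) = t⁻¹ * (p * P.1 - q * P.2) := by ring
  rw [e1, e2]
  simp only [inv_mul_le_iff₀ ht, mul_one]

lemma triR_closed (m p q : ℤ) (t : ℝ) : IsClosed (triR m p q t) := by
  have h1 : IsClosed {P : ℝ × ℝ | P.2 ≤ t} := isClosed_le (by fun_prop) (by fun_prop)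
  have h2 : IsClosed {P : ℝ × ℝ | P.2 - m * P.1 ≤ t} := isClosed_le (by fun_prop) (by fun_prop)
  have h3 : IsClosed {P : ℝ × ℝ | p * P.1 - q * P.2 ≤ t} :=
    isClosed_le (by fun_prop) (by fun_prop)
  exact h1.inter (h2.inter h3)

lemma triR_interior (m p q : ℤ) : interior (triR m p q 1) =
    {P : ℝ × ℝ | P.2 < 1 ∧ P.2 - m * P.1 < 1 ∧ p * P.1 - q * P.2 < 1} := by
  apply Set.Subset.antisymm
  · intro P hP
    have hc : Filter.Tendsto (fun ε : ℝ => (1 + ε) • P) (nhdsWithin 0 (Set.Ioi 0)) (nhds P) := by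
      have : Continuous (fun ε : ℝ => (1 + ε) • P) := by fun_prop
      have h2 := this.tendsto 0
      simp only [add_zero, one_smul] at h2
      exact h2.mono_left nhdsWithin_le_nhds
    have h1 := hc.eventually (mem_interior_iff_mem_nhds.1 hP)
    obtain ⟨ε, ⟨g1, g2, g3⟩, hε⟩ := (h1.and self_mem_nhdsWithin).exists
    simp only [Prod.smul_fst, Prod.smul_snd, smul_eq_mul] at g1 g2 g3
    have hε : 0 < ε := hε
    refine ⟨?_, ?_, ?_⟩
    · by_contra h; push Not at h; nlinarith
    · by_contra h; push Not at h; nlinarith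
    · by_contra h; push Not at h; nlinarith
  · apply interior_maximal
    · rintro P ⟨h1, h2, h3⟩; exact ⟨h1.le, h2.le, h3.le⟩
    · have h1 : IsOpen {P : ℝ × ℝ | P.2 < 1} := isOpen_lt (by fun_prop) (by fun_prop)
      have h2 : IsOpen {P : ℝ × ℝ | P.2 - m * P.1 < 1} := isOpen_lt (by fun_prop) (by fun_prop)
      have h3 : IsOpen {P : ℝ × ℝ | p * P.1 - q * P.2 < 1} :=
        isOpen_lt (by fun_prop) (by fun_prop)
      exact h1.inter (h2.inter h3)

lemma triE_zero (m p q u w : ℤ) (hm : 0 < m) (hu : 0 < u) (hw : 0 < w) (hup : u = p)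
    (h : u + w = m * (q + 1) - m) :
    triE m p q 0 = {(0, 0)} := by
  ext ⟨X, Y⟩
  simp only [triE, Set.mem_ofPred_eq, Set.mem_singleton_iff, Prod.mk.injEq]
  constructor
  · rintro ⟨h1, h2, h3⟩
    have key : u * (Y - m * X) + w * Y + m * (p * X - q * Y) = 0 := by
      subst hup; linear_combination Y * h
    have a1 : u * (Y - m * X) ≤ 0 := mul_nonpos_of_nonneg_of_nonpos hu.le h2
    have a2 : w * Y ≤ 0 := mul_nonpos_of_nonneg_of_nonpos hw.le h1
    have a3 : m * (p * X - q * Y) ≤ 0 := mul_nonpos_of_nonneg_of_nonpos hm.le h3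
    have b2 : w * Y = 0 := by linarith
    have b1 : u * (Y - m * X) = 0 := by linarith
    have hY : Y = 0 := by simpa [hw.ne'] using b2
    subst hY
    have hX : X = 0 := by simpa [hu.ne', hm.ne'] using b1
    exact ⟨hX, rfl⟩
  · rintro ⟨rfl, rfl⟩; simp

lemma triE_succ (m p q t : ℤ) : triE m p q (t + 1) = triE m p q t ∪ triS m p q (t + 1) := by
  ext ⟨X, Y⟩
  simp only [triE, triS, Set.mem_ofPred_eq, Set.mem_union]
  omega

lemma triE_disj (m p q t : ℤ) : Disjoint (triE m p q t) (triS m p q (t + 1)) := by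
  rw [Set.disjoint_left]
  rintro ⟨X, Y⟩
  simp only [triE, triS, Set.mem_ofPred_eq]
  omega

section param
variable (b m a c x y e f : ℤ)

/-- The numerical conditions on the parameters of the triangle. -/
structure Good : Prop where
  hb : 0 < b
  hm : 0 < m
  ha : 0 < a
  hc : 0 < c
  hx : 0 < x
  hy : 0 < y
  he : 0 < e
  hf : 0 < f
  h1 : a * x * e = c * y * f
  h2 : m * (a * x * e) = a * x ^ 2 + c * y ^ 2 + m
  h3 : b * x * y = m * e * f
  hco : IsCoprime x e

/-- Parametrization of the lattice points of the boundary. -/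
def bdry (s n : ℤ) : ℤ × ℤ :=
  if n < 0 then (n, s + m * n) else if x * n ≤ s * e then (n, s)
  else (s * (a * e ^ 2) - n * (a * x * e - 1), s * (a * x * e + 1) - n * (a * x ^ 2))

variable {b m a c x y e f}

lemma Good.h4 (g : Good b m a c x y e f) : m * a * e ^ 2 = b * c * y ^ 2 := by
  have := g.hx.ne'
  apply mul_left_cancel₀ this
  linear_combination m * e * g.h1 - c * y * g.h3

lemma bdry_l1 (g : Good b m a c x y e f) {s n : ℤ} (h : s * e < x * n) :
    s * (a * x * e + 1) - n * (a * x ^ 2) < s := by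
  have := mul_lt_mul_of_pos_left h (mul_pos g.ha g.hx)
  nlinarith

lemma bdry_l2 (g : Good b m a c x y e f) {s n : ℤ} :
    s - ((s * (a * x * e + 1) - n * (a * x ^ 2)) - m * (s * (a * e ^ 2) - n * (a * x * e - 1)))
      = c * y * (s * (b * y - f) - y * n) := by
  linear_combination s * g.h4 - s * g.h1 - n * g.h2

lemma bdry_l3 {s n : ℤ} :
    (a * x ^ 2) * (s * (a * e ^ 2) - n * (a * x * e - 1))
      - (a * x * e - 1) * (s * (a * x * e + 1) - n * (a * x ^ 2)) = s := by
  ring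

lemma bdry_l3' (g : Good b m a c x y e f) {s n : ℤ} :
    y * (s - ((a * x ^ 2) * n - (a * x * e - 1) * (s + m * n))) = c * y ^ 2 * (s * f + y * n) := by
  linear_combination s * y * g.h1 + n * y * g.h2 

lemma bdry_l3'' {s n : ℤ} :
    (s - ((a * x ^ 2) * n - (a * x * e - 1) * s)) = a * x * (s * e - x * n) := by
  ring

lemma bdry_inj (g : Good b m a c x y e f) (s : ℤ) :
    Set.InjOn (bdry m a x e s) {n | -(s * f) ≤ y * n ∧ y * n < s * (b * y - f)} := by
  have key : ∀ n n', ¬ n < 0 → ¬ x * n ≤ s * e → bdry m a x e s n = bdry m a x e s n' →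
      y * n < s * (b * y - f) → n = n' := by
    intro n n' h1 h2 h hn
    have q1 := bdry_l1 g (not_le.1 h2)
    have q2 := @bdry_l2 b m a c x y e f g s n
    have q3 : 0 < c * y * (s * (b * y - f) - y * n) :=
      mul_pos (mul_pos g.hc g.hy) (by linarith)
    unfold bdry at h
    rw [if_neg h1, if_neg h2] at h
    split_ifs at h with h3 h4 <;> rw [Prod.mk.injEq] at h <;> obtain ⟨i1, i2⟩ := h
    · rw [i1, i2] at q2; linarith
    · linarith
    · have : (n - n') * (a * x ^ 2) = 0 := by linarith
      have hp : a * x ^ 2 ≠ 0 := (mul_pos g.ha (pow_pos g.hx 2)).ne'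
      have := (mul_eq_zero.1 this).resolve_right hp
      linarith
  intro n hn n' hn' h
  by_cases c1 : ¬ n < 0 ∧ ¬ x * n ≤ s * e
  · exact key n n' c1.1 c1.2 h hn.2
  by_cases c2 : ¬ n' < 0 ∧ ¬ x * n' ≤ s * e
  · exact (key n' n c2.1 c2.2 h.symm hn'.2).symm
  have fst : ∀ n, ¬ (¬ n < 0 ∧ ¬ x * n ≤ s * e) → (bdry m a x e s n).1 = n := by
    intro n hn
    unfold bdry
    split_ifs with c1 c2
    · rfl
    · rfl
    · exact absurd ⟨c1, c2⟩ hn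
  rw [← fst n c1, h, fst n' c2]

lemma bdry_image (g : Good b m a c x y e f) (s : ℤ) (hs : 0 < s) :
    triS m (a * x ^ 2) (a * x * e - 1) s =
      bdry m a x e s '' {n | -(s * f) ≤ y * n ∧ y * n < s * (b * y - f)} := by
  have hcy : 0 < c * y := mul_pos g.hc g.hy
  have hax : 0 < a * x := mul_pos g.ha g.hx
  have hcy2 : 0 < c * y ^ 2 := mul_pos g.hc (pow_pos g.hy 2)
  have hsf : 0 < s * f := mul_pos hs g.hf
  have hse : 0 < s * e := mul_pos hs g.he
  have hy := g.hy
  have hx := g.hx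
  have hm := g.hm
  -- e/x < b - f/y
  have cmp : e * y < x * (b * y - f) := by
    have j : c * y * (x * (b * y - f) - e * y) = m * e := by
      linear_combination x * (- g.h4) * 1 + e * g.h2 + x * g.h1
    have : 0 < c * y * (x * (b * y - f) - e * y) := by rw [j]; exact mul_pos g.hm g.he
    have := pos_r this hcy.le
    linarith
  apply Set.Subset.antisymm
  · rintro ⟨X, Y⟩ ⟨⟨k1, k2, k3⟩, h⟩
    simp only at k1 k2 k3 h
    by_cases c1 : Y = s
    · subst c1
      have hX : 0 ≤ X := by
        by_contra hh; push Not at hh; nlinarith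
      have q := @bdry_l3'' a x e Y X
      have : 0 ≤ a * x * (Y * e - x * X) := by linarith
      have h5 : x * X ≤ Y * e := by
        have := nonneg_of_mul_nonneg_right this hax
        linarith
      refine ⟨X, ⟨by nlinarith, ?_⟩, ?_⟩
      · have : x * (y * X) < x * (Y * (b * y - f)) := by nlinarith
        exact lt_of_mul_lt_mul_left this hx.le
      · simp [bdry, not_lt.2 hX, h5]
    by_cases c2 : Y - m * X = s
    · have hY : Y = s + m * X := by linarith
      subst hY
      have hX : X < 0 := by
        by_contra hh; push Not at hh
        have : 0 ≤ m * X := by positivity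
        exact c1 (by linarith)
      have q := @bdry_l3' b m a c x y e f g s X
      have h0 : 0 ≤ y * (s - ((a * x ^ 2) * X - (a * x * e - 1) * (s + m * X))) :=
        mul_nonneg hy.le (by linarith)
      rw [q] at h0
      have := nonneg_of_mul_nonneg_right h0 hcy2
      refine ⟨X, ⟨by linarith, ?_⟩, ?_⟩
      · have : 0 < b * y - f := by
          have : 0 < x * (b * y - f) := lt_trans (mul_pos g.he hy) cmp
          exact pos_r this hx.le
        have : 0 < s * (b * y - f) := mul_pos hs this
        nlinarith
      · simp [bdry, hX]
    have h3 : a * x ^ 2 * X - (a * x * e - 1) * Y = s := by tauto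
    have k1' : Y < s := lt_of_le_of_ne k1 c1
    have k2' : Y - m * X < s := lt_of_le_of_ne k2 c2
    obtain ⟨n, hn⟩ : ∃ n, n = (a * x * e + 1) * X - a * e ^ 2 * Y := ⟨_, rfl⟩
    have eX : X = s * (a * e ^ 2) - n * (a * x * e - 1) := by
      rw [hn, ← h3]; ring
    have eY : Y = s * (a * x * e + 1) - n * (a * x ^ 2) := by
      rw [hn, ← h3]; ring
    have d1 : s * e < x * n := by
      have : 0 < a * x * (x * n - s * e) := by rw [eY] at k1'; nlinarith
      have := pos_r this hax.le
      linarith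
    have d2 : y * n < s * (b * y - f) := by
      have q := @bdry_l2 b m a c x y e f g s n
      rw [← eX, ← eY] at q
      have : 0 < c * y * (s * (b * y - f) - y * n) := by linarith
      have := pos_r this hcy.le
      linarith
    have d3 : 0 < n := pos_r (lt_trans hse d1) hx.le
    refine ⟨n, ⟨by nlinarith, d2⟩, ?_⟩
    simp only [bdry, if_neg (not_lt.2 d3.le), if_neg (not_le.2 d1)]
    rw [← eX, ← eY]
  · rintro _ ⟨n, ⟨hn1, hn2⟩, rfl⟩
    unfold bdry
    split_ifs with c1 c2
    · refine ⟨⟨?_, ?_, ?_⟩, Or.inr (Or.inl ?_)⟩ <;> simp only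
      · nlinarith
      · linarith
      · have q := @bdry_l3' b m a c x y e f g s n
        have h0 : 0 ≤ c * y ^ 2 * (s * f + y * n) := mul_nonneg hcy2.le (by linarith)
        rw [← q] at h0
        have := nonneg_of_mul_nonneg_right h0 hy
        linarith
      · ring
    · refine ⟨⟨?_, ?_, ?_⟩, Or.inl ?_⟩ <;> simp only
      · exact le_rfl
      · nlinarith
      · have q := @bdry_l3'' a x e s n
        have h0 : 0 ≤ a * x * (s * e - x * n) := mul_nonneg hax.le (by linarith)
        linarith
    · refine ⟨⟨?_, ?_, ?_⟩, Or.inr (Or.inr ?_)⟩ <;> simp only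
      · exact (bdry_l1 g (not_le.1 c2)).le
      · have q := @bdry_l2 b m a c x y e f g s n
        have : 0 ≤ c * y * (s * (b * y - f) - y * n) := mul_nonneg hcy.le (by linarith)
        linarith
      · exact bdry_l3.le
      · exact bdry_l3

lemma interval_eq (hy : 0 < y) (s : ℤ) :
    {n : ℤ | -(s * f) ≤ y * n ∧ y * n < s * (b * y - f)} =
      ((Finset.Ico (-(s * f / y)) (-(s * f / y) + s * b) : Finset ℤ) : Set ℤ) := by
  ext n
  simp only [Set.mem_ofPred_eq, Finset.coe_Ico, Set.mem_Ico]
  have h1 : -(s * f) ≤ y * n ↔ -(s * f / y) ≤ n := by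
    rw [neg_le (a := s * f / y), Int.le_ediv_iff_mul_le hy]
    constructor <;> intro h <;> linarith
  have h2 : y * n < s * (b * y - f) ↔ n < -(s * f / y) + s * b := by
    have : n < -(s * f / y) + s * b ↔ s * f / y < s * b - n := by constructor <;> intro h <;> linarith
    rw [this, Int.ediv_lt_iff_lt_mul hy]
    constructor <;> intro h <;> linarith
  rw [h1, h2]

lemma triS_fin (g : Good b m a c x y e f) (s : ℤ) (hs : 0 < s) :
    (triS m (a * x ^ 2) (a * x * e - 1) s).Finite := by
  rw [bdry_image g s hs, interval_eq g.hy]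
  exact (Finset.finite_toSet _).image _

lemma triS_card (g : Good b m a c x y e f) (s : ℤ) (hs : 0 < s) :
    ((triS m (a * x ^ 2) (a * x * e - 1) s).ncard : ℤ) = s * b := by
  rw [bdry_image g s hs, (bdry_inj g s).ncard_image, interval_eq g.hy, Set.ncard_coe_finset,
    Int.card_Ico]
  have : 0 ≤ s * b := mul_nonneg hs.le g.hb.le
  rw [Int.toNat_of_nonneg] <;> linarith

lemma triE_zero' (g : Good b m a c x y e f) :
    triE m (a * x ^ 2) (a * x * e - 1) 0 = {(0, 0)} := by
  apply triE_zero _ _ _ (a * x ^ 2) (c * y ^ 2) g.hm (mul_pos g.ha (pow_pos g.hx 2))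
    (mul_pos g.hc (pow_pos g.hy 2)) rfl
  linarith [g.h2]

lemma triE_card (g : Good b m a c x y e f) (t : ℕ) :
    (triE m (a * x ^ 2) (a * x * e - 1) t).Finite ∧
    2 * ((triE m (a * x ^ 2) (a * x * e - 1) t).ncard : ℤ) = 2 + b * (t * (t + 1)) := by
  induction t with
  | zero => simp [triE_zero' g]
  | succ t ih =>
    have hpos : (0 : ℤ) < (t : ℤ) + 1 := by positivity
    have hS := triS_fin g _ hpos
    push_cast
    rw [triE_succ]
    refine ⟨ih.1.union hS, ?_⟩
    rw [Set.ncard_union_eq (triE_disj _ _ _ _) ih.1 hS]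
    push_cast
    rw [triS_card g _ hpos, mul_add, ih.2]
    ring

lemma triR_hull (g : Good b m a c x y e f) :
    triR m (a * x ^ 2 : ℤ) (a * x * e - 1 : ℤ) 1 = convexHull ℝ
      {qpt (0, 1), qpt ((e : ℚ) / x, 1), qpt (-((f : ℚ) / y), 1 - m * (f / y))} := by
  have hx : (0 : ℝ) < x := by exact_mod_cast g.hx
  have hy : (0 : ℝ) < y := by exact_mod_cast g.hy
  have he : (0 : ℝ) < e := by exact_mod_cast g.he
  have hf : (0 : ℝ) < f := by exact_mod_cast g.hf
  have hm : (0 : ℝ) < m := by exact_mod_cast g.hm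
  have ha : (0 : ℝ) < a := by exact_mod_cast g.ha
  have hc : (0 : ℝ) < c := by exact_mod_cast g.hc
  have h1 : (a : ℝ) * x * e = c * y * f := by exact_mod_cast g.h1
  have h2 : (m : ℝ) * (a * x * e) = a * x ^ 2 + c * y ^ 2 + m := by exact_mod_cast g.h2
  apply Set.Subset.antisymm
  · rintro ⟨X, Y⟩ ⟨k1, k2, k3⟩
    simp only [Int.cast_mul, Int.cast_pow, Int.cast_sub, Int.cast_one] at k1 k2 k3
    have hconv := convex_convexHull ℝ
      {qpt (0, 1), qpt ((e : ℚ) / x, 1), qpt (-((f : ℚ) / y), 1 - m * (f / y))}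
    have hsub := subset_convexHull ℝ
      {qpt (0, 1), qpt ((e : ℚ) / x, 1), qpt (-((f : ℚ) / y), 1 - m * (f / y))}
    have wA : 0 ≤ (1 - (Y - m * X)) * x / (m * e) :=
      div_nonneg (mul_nonneg (by linarith) hx.le) (by positivity)
    have wB : 0 ≤ (1 - Y) * y / (m * f) :=
      div_nonneg (mul_nonneg (by linarith) hy.le) (by positivity)
    have wC : 0 ≤ (1 - (a * x ^ 2 * X - (a * x * e - 1) * Y)) / (a * x * e) :=
      div_nonneg (by linarith) (by positivity)
    have hB : (1 - Y) * y / (m * f) = (1 - Y) * (c * y ^ 2) / (m * (a * x * e)) := by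
      rw [h1]; field_simp
    have hA : (1 - (Y - m * X)) * x / (m * e) =
      (1 - (Y - m * X)) * (a * x ^ 2) / (m * (a * x * e)) := by
      field_simp
    have hC : (1 - (a * x ^ 2 * X - (a * x * e - 1) * Y)) / (a * x * e) =
      m * (1 - (a * x ^ 2 * X - (a * x * e - 1) * Y)) / (m * (a * x * e)) := by
      field_simp
    have hsum : (1 - (a * x ^ 2 * X - (a * x * e - 1) * Y)) / (a * x * e) +
        ((1 - (Y - m * X)) * x / (m * e)) + (1 - Y) * y / (m * f) = 1 := by
      rw [hA, hB, hC, ← add_div, ← add_div, div_eq_one_iff_eq (by positivity)]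
      linear_combination (Y - 1) * h2
    have := hconv.sum_mem (t := Finset.univ) (w := ![(1 - (a * x ^ 2 * X - (a * x * e - 1) * Y)) / (a * x * e), (1 - (Y - m * X)) * x / (m * e), (1 - Y) * y / (m * f)]) (z := ![qpt (0, 1), qpt ((e : ℚ) / x, 1), qpt (-((f : ℚ) / y), 1 - m * (f / y))])
      (by intro i _; fin_cases i; exacts [wC, wA, wB])
      (by simpa [Fin.sum_univ_three] using hsum)
      (by intro i _; fin_cases i <;> apply hsub <;> simp)
    convert this using 1
    simp only [Fin.sum_univ_three, Matrix.cons_val_zero, Matrix.cons_val_one, Matrix.cons_val, qpt,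
      Prod.smul_mk, Prod.mk_add_mk, smul_eq_mul, Prod.mk.injEq]
    push_cast
    constructor
    · field_simp; ring
    · have e1 : (1 - Y) * y / (m * f) * (1 - m * (f / y)) = (1 - Y) * y / (m * f) - (1 - Y) := by
        field_simp
      rw [e1]; linarith
  · apply convexHull_min
    · have hA : (e : ℝ) / x * x = e := by field_simp
      have hB : (f : ℝ) / y * y = f := by field_simp
      have pA : 0 < (e : ℝ) / x := by positivity
      have pB : 0 < (f : ℝ) / y := by positivity
      intro P hP
      simp only [Set.mem_insert_iff, Set.mem_singleton_iff] at hP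
      rcases hP with rfl | rfl | rfl <;>
        simp only [triR, qpt, Set.mem_ofPred_eq] <;> push_cast
      · refine ⟨le_rfl, by linarith, ?_⟩
        have : 0 < (a : ℝ) * x * e := by positivity
        linarith
      · refine ⟨le_rfl, by nlinarith, ?_⟩
        apply le_of_eq
        linear_combination (a * x) * hA
      · refine ⟨by nlinarith, by linarith, ?_⟩
        apply le_of_eq
        generalize (f : ℝ) / y = β at *
        linear_combination β * h2 - h1 + c * y * hB
    · rintro ⟨X, Y⟩ ⟨k1, k2, k3⟩ ⟨X', Y'⟩ ⟨l1, l2, l3⟩ u v hu hv huv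
      simp only at k1 k2 k3 l1 l2 l3
      refine ⟨?_, ?_, ?_⟩ <;>
        simp only [Prod.smul_mk, Prod.mk_add_mk, smul_eq_mul] <;> nlinarith

lemma tri_noncol (g : Good b m a c x y e f) : ¬ Collinear ℝ
    ({qpt (0, 1), qpt ((e : ℚ) / x, 1), qpt (-((f : ℚ) / y), 1 - m * (f / y))} : Set (ℝ × ℝ)) := by
  have hx : (0 : ℝ) < x := by exact_mod_cast g.hx
  have hy : (0 : ℝ) < y := by exact_mod_cast g.hy
  have he : (0 : ℝ) < e := by exact_mod_cast g.he
  have hf : (0 : ℝ) < f := by exact_mod_cast g.hf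
  have hm : (0 : ℝ) < m := by exact_mod_cast g.hm
  have pA : 0 < (e : ℝ) / x := by positivity
  have pB : 0 < (m : ℝ) * ((f : ℝ) / y) := by positivity
  intro h
  rw [collinear_iff_of_mem (p₀ := qpt (0, 1)) (by simp)] at h
  obtain ⟨v, hv⟩ := h
  obtain ⟨r, hr⟩ := hv (qpt ((e : ℚ) / x, 1)) (by simp)
  obtain ⟨r', hr'⟩ := hv (qpt (-((f : ℚ) / y), 1 - m * (f / y))) (by simp)
  simp only [qpt, vadd_eq_add, Prod.ext_iff, Prod.fst_add, Prod.snd_add, Prod.smul_fst,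
    Prod.smul_snd, smul_eq_mul] at hr hr'
  push_cast at hr hr'
  obtain ⟨r1, r2⟩ := hr
  obtain ⟨s1, s2⟩ := hr'
  have : r * v.2 = 0 := by linarith
  rcases mul_eq_zero.1 this with h0 | h0
  · rw [h0] at r1; linarith
  · rw [h0] at s2; linarith

lemma tri_extreme (g : Good b m a c x y e f) (k : ℝ) :
    (k * ((e : ℝ) / x), k) ∈
      Set.extremePoints ℝ (triR m (a * x ^ 2 : ℤ) (a * x * e - 1 : ℤ) k) ∨ k < 0 := by
  have hx : (0 : ℝ) < x := by exact_mod_cast g.hx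
  have he : (0 : ℝ) < e := by exact_mod_cast g.he
  have hm : (0 : ℝ) < m := by exact_mod_cast g.hm
  have ha : (0 : ℝ) < a := by exact_mod_cast g.ha
  have pA : 0 < (e : ℝ) / x := by positivity
  have hA : (e : ℝ) / x * x = e := by field_simp
  have hp : 0 < (a : ℝ) * x ^ 2 := by positivity
  rcases lt_or_ge k 0 with hk | hk
  · exact Or.inr hk
  left
  rw [mem_extremePoints]
  have hq : (a : ℝ) * x ^ 2 * (k * ((e : ℝ) / x)) = k * (a * x * e) := by
    linear_combination k * (a * x) * hA
  constructor
  · refine ⟨le_rfl, ?_, ?_⟩ <;> simp only <;> push_cast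
    · have : 0 ≤ m * (k * ((e : ℝ) / x)) := by positivity
      linarith
    · linarith
  · have aux : ∀ p q : ℝ × ℝ, p ∈ triR m (a * x ^ 2 : ℤ) (a * x * e - 1 : ℤ) k →
        q ∈ triR m (a * x ^ 2 : ℤ) (a * x * e - 1 : ℤ) k →
        (k * ((e : ℝ) / x), k) ∈ openSegment ℝ p q → p = (k * ((e : ℝ) / x), k) := by
      rintro ⟨X, Y⟩ ⟨X', Y'⟩ ⟨k1, k2, k3⟩ ⟨l1, l2, l3⟩ ⟨u, v, hu, hv, huv, hE⟩
      simp only [Prod.smul_mk, Prod.mk_add_mk, smul_eq_mul, Prod.mk.injEq] at hE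
      simp only at k1 k2 k3 l1 l2 l3
      push_cast at k3 l3
      obtain ⟨e1, e2⟩ := hE
      have hY : Y = k := by
        apply le_antisymm k1
        by_contra hh; push Not at hh
        nlinarith
      have hY' : Y' = k := by
        apply le_antisymm l1
        by_contra hh; push Not at hh
        nlinarith
      subst hY
      rw [hY'] at l3
      have i1 : X ≤ Y * ((e : ℝ) / x) := by
        apply le_of_mul_le_mul_left _ hp
        linarith
      have i2 : X' ≤ Y * ((e : ℝ) / x) := by
        apply le_of_mul_le_mul_left _ hp
        linarith
      have hX : X = Y * ((e : ℝ) / x) := by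
        apply le_antisymm i1
        by_contra hh; push Not at hh
        have j1 := mul_lt_mul_of_pos_left hh hu
        have j2 := mul_le_mul_of_nonneg_left i2 hv.le
        have j3 : u * (Y * ((e : ℝ) / x)) + v * (Y * ((e : ℝ) / x)) = Y * ((e : ℝ) / x) := by
          rw [← add_mul, huv, one_mul]
        linarith
      rw [← hX]
    intro p hp q hq hpq
    exact ⟨aux p q hp hq hpq, aux q p hq hp (by rwa [openSegment_symm])⟩

lemma tri_denom (g : Good b m a c x y e f) (k : ℕ) (hk : (k : ℤ) < x) :
    ∃ d : ℕ, HasDenom (triR m (a * x ^ 2 : ℤ) (a * x * e - 1 : ℤ) 1) d ∧ k < d := by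
  classical
  have hx : (0 : ℝ) < x := by exact_mod_cast g.hx
  have hy : (0 : ℝ) < y := by exact_mod_cast g.hy
  have hex : ∃ d : ℕ, 0 < d ∧ Set.extremePoints ℝ
      ((d : ℝ) • triR m (a * x ^ 2 : ℤ) (a * x * e - 1 : ℤ) 1) ⊆ latticePts := by
    refine ⟨(x * y).toNat, by have := mul_pos g.hx g.hy; omega, ?_⟩
    have hd : (((x * y).toNat : ℕ) : ℝ) = x * y := by
      have := Int.toNat_of_nonneg (mul_pos g.hx g.hy).le
      exact_mod_cast congrArg (Int.cast : ℤ → ℝ) this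
    rw [hd, triR_hull g, ← convexHull_smul]
    refine extremePoints_convexHull_subset.trans ?_
    rintro _ ⟨P, hP, rfl⟩
    simp only [Set.mem_insert_iff, Set.mem_singleton_iff] at hP
    rcases hP with rfl | rfl | rfl <;> simp only [qpt, Prod.smul_mk, smul_eq_mul]
    · refine ⟨0, x * y, ?_⟩
      push_cast
      simp
    · refine ⟨y * e, x * y, ?_⟩
      push_cast
      rw [Prod.mk.injEq]; constructor <;> field_simp
    · refine ⟨-(x * f), x * y - m * x * f, ?_⟩
      push_cast
      rw [Prod.mk.injEq]; constructor <;> field_simp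
  refine ⟨Nat.find hex, ⟨Nat.find_spec hex, fun d hd => Nat.find_min' hex hd⟩, ?_⟩
  obtain ⟨hpos, hsub⟩ := Nat.find_spec hex
  generalize Nat.find hex = d at *
  have hdpos : (0 : ℝ) < d := by exact_mod_cast hpos
  rw [triR_smul _ _ _ _ hdpos] at hsub
  obtain ⟨i, j, hij⟩ := hsub ((tri_extreme g d).resolve_right (not_lt.2 hdpos.le))
  rw [Prod.mk.injEq] at hij
  have h1 : (d : ℝ) * e = x * i := by
    rw [← hij.1]; field_simp
  have h2 : (d : ℤ) * e = x * i := by exact_mod_cast h1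
  have h3 : x ∣ (d : ℤ) := g.hco.dvd_of_dvd_mul_right ⟨i, h2⟩
  have := Int.le_of_dvd (by exact_mod_cast hpos) h3
  exact_mod_cast hk.trans_le this

lemma tri_main (g : Good b m a c x y e f) (B : ℕ) (hB : (B : ℤ) = b) (k : ℕ) (hk : (k : ℤ) < x) :
    ∃ T : Set (ℝ × ℝ), IsRatTriangle T ∧ IsPIP T ∧
      (∃ d : ℕ, HasDenom T d ∧ k < d) ∧
      (interior T ∩ latticePts).ncard = 1 ∧
      (frontier T ∩ latticePts).ncard = B := by
  refine ⟨triR m (a * x ^ 2 : ℤ) (a * x * e - 1 : ℤ) 1, ⟨_, _, _, tri_noncol g, triR_hull g⟩,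
    ?_, tri_denom g k hk, ?_, ?_⟩
  · refine ⟨1 + Polynomial.C (b / 2 : ℚ) * (Polynomial.X * (Polynomial.X + 1)), ?_⟩
    intro t ht
    have htr : (0 : ℝ) < t := by exact_mod_cast ht
    unfold ehr
    rw [triR_smul _ _ _ _ htr,
      inter_lattice _ (triE m (a * x ^ 2) (a * x * e - 1) t) (fun P => by
        rw [← zc_mem_triR]; simp)]
    have := (triE_card g t).2
    have h2 : (2 : ℚ) * ((triE m (a * x ^ 2) (a * x * e - 1) t).ncard : ℚ)
      = 2 + b * (t * (t + 1)) := by exact_mod_cast this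
    simp only [Polynomial.eval_add, Polynomial.eval_mul, Polynomial.eval_C, Polynomial.eval_X,
      Polynomial.eval_one]
    linarith
  · rw [inter_lattice _ {(0, 0)}, Set.ncard_singleton]
    intro P
    rw [← triE_zero' g, triR_interior]
    simp only [zc, triE, Set.mem_ofPred_eq]
    norm_cast
    simp only [Int.lt_iff_add_one_le, zero_add, ← Int.le_sub_one_iff]
    constructor <;> rintro ⟨h1, h2, h3⟩ <;> exact ⟨by linarith, by linarith, by linarith⟩
  · rw [inter_lattice _ (triS m (a * x ^ 2) (a * x * e - 1) 1)]
    · have := triS_card g 1 one_pos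
      rw [one_mul, ← hB] at this
      exact_mod_cast this
    · intro P
      rw [(triR_closed _ _ _ _).frontier_eq, triR_interior]
      simp only [zc, triS, triE, triR, Set.mem_ofPred_eq, Set.mem_diff]
      norm_cast
      generalize a * x ^ 2 * P.1 - (a * x * e - 1) * P.2 = l3
      generalize P.2 - m * P.1 = l2
      omega

end param

/-- Vieta jumping: solutions with arbitrarily large first coordinate. -/
lemma vieta_s7 (κ C x₀ y₀ : ℤ) (hκ : 3 ≤ κ) (h : x₀ ^ 2 + y₀ ^ 2 + C = κ * x₀ * y₀) (h0 : 0 < y₀)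
    (hle : y₀ ≤ x₀) (hco : IsCoprime x₀ y₀) (k : ℕ) :
    ∃ x y : ℤ, (k : ℤ) < x ∧ 0 < y ∧ y ≤ x ∧ x ^ 2 + y ^ 2 + C = κ * x * y ∧ IsCoprime x y := by
  induction k with
  | zero => exact ⟨x₀, y₀, by push_cast; linarith, h0, hle, h, hco⟩
  | succ k ih =>
    obtain ⟨x, y, h1, h2, h3, h4, h5⟩ := ih
    have hx : 0 < x := by linarith
    have : 2 * x ≤ κ * x - y := by nlinarith
    refine ⟨κ * x - y, x, by push_cast; linarith, hx, by linarith, by linear_combination h4, ?_⟩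
    have h6 : IsCoprime (-y) x := h5.symm.neg_left
    have := h6.add_mul_right_left κ
    rwa [show -y + κ * x = κ * x - y by ring] at this

lemma vieta6 (k : ℕ) :
    ∃ x y : ℤ, (k : ℤ) < x ∧ x ≤ y ∧ x ^ 2 + 2 * y ^ 2 + 3 = 6 * x * y ∧ IsCoprime x (2 * y) := by
  induction k with
  | zero => exact ⟨1, 1, by norm_num, by norm_num, by norm_num, isCoprime_one_left⟩
  | succ k ih =>
    obtain ⟨x, y, h1, h2, h3, h4⟩ := ih
    refine ⟨6 * y - x, 17 * y - 3 * x, by push_cast; linarith, by linarith,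
      by linear_combination h3, ?_⟩
    obtain ⟨h5, h6⟩ := IsCoprime.mul_right_iff.1 h4
    have h7 : IsCoprime (6 * y - x) y := by
      have := h6.neg_left.add_mul_right_left 6
      rwa [show -x + 6 * y = 6 * y - x by ring] at this
    have h8 : IsCoprime (6 * y - x) 2 := by
      have := h5.neg_left.add_mul_right_left (3 * y)
      rwa [show -x + 3 * y * 2 = 6 * y - x by ring] at this
    apply IsCoprime.mul_right h8
    have := h7.neg_right.add_mul_right_right 3
    rwa [show -y + 3 * (6 * y - x) = 17 * y - 3 * x by ring] at this

lemma cop3 {x y : ℤ} (h : x ^ 2 + y ^ 2 + 1 = 3 * x * y) : IsCoprime x 3 := by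
  have h1 : x % 3 = 1 ∨ x % 3 = 2 := by
    have hx : x % 3 = 0 ∨ x % 3 = 1 ∨ x % 3 = 2 := by omega
    rcases hx with hx | hx
    · exfalso
      have h2 : (x ^ 2 + y ^ 2 + 1) % 3 = 0 := by rw [h, mul_assoc]; omega
      have hy : y % 3 = 0 ∨ y % 3 = 1 ∨ y % 3 = 2 := by omega
      rcases hy with hy | hy | hy <;> simp [pow_two, Int.add_emod, Int.mul_emod, hx, hy] at h2
    · exact hx
  rcases h1 with h1 | h1
  · exact ⟨1, -(x / 3), by omega⟩
  · exact ⟨-1, x / 3 + 1, by omega⟩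

lemma cop2 {x y : ℤ} (h : x ^ 2 + y ^ 2 + 2 = 4 * x * y) : IsCoprime x 2 := by
  have h1 : x % 2 = 1 := by
    by_contra hx
    obtain ⟨u, rfl⟩ : ∃ u, x = 2 * u := ⟨x / 2, by omega⟩
    have hy : y % 2 = 0 ∨ y % 2 = 1 := by omega
    rcases hy with hy | hy
    · obtain ⟨v, rfl⟩ : ∃ v, y = 2 * v := ⟨y / 2, by omega⟩
      ring_nf at h; omega
    · obtain ⟨v, rfl⟩ : ∃ v, y = 2 * v + 1 := ⟨y / 2, by omega⟩
      ring_nf at h; omega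
  exact ⟨1, -(x / 2), by omega⟩

/-- for each 1 ≤ b ≤ 9 with b ≠ 7 and each positive integer k there
is a rational pseudointegral triangle of denominator > k with exactly one
interior lattice point and exactly b boundary lattice points. -/
theorem stmt_7 (b : ℕ) (hb1 : 1 ≤ b) (hb9 : b ≤ 9) (hb7 : b ≠ 7)
    (k : ℕ) (hk : 0 < k) :
    ∃ T : Set (ℝ × ℝ), IsRatTriangle T ∧ IsPIP T ∧
      (∃ d : ℕ, HasDenom T d ∧ k < d) ∧
      (interior T ∩ latticePts).ncard = 1 ∧
      (frontier T ∩ latticePts).ncard = b := by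
  interval_cases b
  · obtain ⟨x, y, h1, h2, h3, h4, h5⟩ := vieta_s7 3 1 1 1 (by norm_num) (by norm_num) (by norm_num)
      (by norm_num) isCoprime_one_left k
    exact tri_main (b := 1) (m := 9) (a := 1) (c := 1) (x := 3 * x) (y := 3 * y) (e := y) (f := x)
      ⟨by norm_num, by norm_num, by norm_num, by norm_num, by linarith, by linarith, by linarith,
        by linarith, by ring, by linear_combination (-9) * h4, by ring,
        IsCoprime.mul_left (cop3 (x := y) (y := x) (by linear_combination h4)).symm h5⟩ 1 rfl k
      (by linarith)
  · obtain ⟨x, y, h1, h2, h3, h4, h5⟩ := vieta_s7 4 2 1 1 (by norm_num) (by norm_num) (by norm_num)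
      (by norm_num) isCoprime_one_left k
    exact tri_main (b := 2) (m := 8) (a := 1) (c := 1) (x := 2 * x) (y := 2 * y) (e := y) (f := x)
      ⟨by norm_num, by norm_num, by norm_num, by norm_num, by linarith, by linarith, by linarith,
        by linarith, by ring, by linear_combination (-4) * h4, by ring,
        IsCoprime.mul_left (cop2 (x := y) (y := x) (by linear_combination h4)).symm h5⟩ 2 rfl k
      (by linarith)
  · obtain ⟨x, y, h1, h2, h3, h4, h5⟩ := vieta_s7 3 1 1 1 (by norm_num) (by norm_num) (by norm_num)
      (by norm_num) isCoprime_one_left k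
    exact tri_main (b := 3) (m := 3) (a := 3) (c := 3) (x := x) (y := y) (e := y) (f := x)
      ⟨by norm_num, by norm_num, by norm_num, by norm_num, by linarith, by linarith, by linarith,
        by linarith, by ring, by linear_combination (-3) * h4, by ring, h5⟩ 3 rfl k
      (by linarith)
  · obtain ⟨x, y, h1, h2, h3, h4, h5⟩ := vieta_s7 4 2 1 1 (by norm_num) (by norm_num) (by norm_num)
      (by norm_num) isCoprime_one_left k
    exact tri_main (b := 4) (m := 4) (a := 2) (c := 2) (x := x) (y := y) (e := y) (f := x)
      ⟨by norm_num, by norm_num, by norm_num, by norm_num, by linarith, by linarith, by linarith,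
        by linarith, by ring, by linear_combination (-2) * h4, by ring, h5⟩ 4 rfl k
      (by linarith)
  · obtain ⟨x, y, h1, h2, h3, h4, h5⟩ := vieta_s7 5 5 2 1 (by norm_num) (by norm_num) (by norm_num)
      (by norm_num) isCoprime_one_right k
    exact tri_main (b := 5) (m := 5) (a := 1) (c := 1) (x := x) (y := y) (e := y) (f := x)
      ⟨by norm_num, by norm_num, by norm_num, by norm_num, by linarith, by linarith, by linarith,
        by linarith, by ring, by linear_combination (-1) * h4, by ring, h5⟩ 5 rfl k
      (by linarith)
  · obtain ⟨x, y, h1, h2, h3, h4⟩ := vieta6 k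
    exact tri_main (b := 6) (m := 3) (a := 1) (c := 2) (x := x) (y := y) (e := 2 * y) (f := x)
      ⟨by norm_num, by norm_num, by norm_num, by norm_num, by linarith, by linarith, by linarith,
        by linarith, by ring, by linear_combination (-1) * h3, by ring, h4⟩ 6 rfl k
      (by linarith)
  · exact absurd rfl hb7
  · obtain ⟨x, y, h1, h2, h3, h4, h5⟩ := vieta_s7 4 2 1 1 (by norm_num) (by norm_num) (by norm_num)
      (by norm_num) isCoprime_one_left k
    exact tri_main (b := 8) (m := 2) (a := 1) (c := 1) (x := x) (y := y) (e := 2 * y) (f := 2 * x)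
      ⟨by norm_num, by norm_num, by norm_num, by norm_num, by linarith, by linarith, by linarith,
        by linarith, by ring, by linear_combination (-1) * h4, by ring,
        IsCoprime.mul_right (cop2 h4) h5⟩ 8 rfl k
      (by linarith)
  · obtain ⟨x, y, h1, h2, h3, h4, h5⟩ := vieta_s7 3 1 1 1 (by norm_num) (by norm_num) (by norm_num)
      (by norm_num) isCoprime_one_left k
    exact tri_main (b := 9) (m := 1) (a := 1) (c := 1) (x := x) (y := y) (e := 3 * y) (f := 3 * x)
      ⟨by norm_num, by norm_num, by norm_num, by norm_num, by linarith, by linarith, by linarith,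
        by linarith, by ring, by linear_combination (-1) * h4, by ring,
        IsCoprime.mul_right (cop3 h4) h5⟩ 9 rfl k
      (by linarith)
end

section
/- For every positive integer j, the triangle T_j := conv{(−3F_{2j−1}/F_{2j+1}, 3F_{2j−1}/F_{2j+1} − 1), (0, −1), (3F_{2j+1}/F_{2j−1}, −1)} ⊂ ℝ² is pseudointegral, contains exactly one lattice point in its interior, and has exactly 9 lattice points on its boundary. -/
open Set Pointwise

/-- Lattice points of the dilated triangle in the sheared coordinates `p = x + y`, `q = y`. -/
def latA (a b t : ℤ) : Set (ℤ × ℤ) :=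
  {z | -t ≤ z.1 ∧ -t ≤ z.2 ∧ a ^ 2 * z.1 + b ^ 2 * z.2 ≤ t}

/-- Mutation: a piecewise linear bijection between consecutive triangles. -/
lemma latA_step (d a b t : ℤ) (hd : 0 < d) (hb : 0 < b) (h : b * d = a ^ 2 + 1) :
    (latA a b t).ncard = (latA d a t).ncard := by
  classical
  have key1 : ∀ p q : ℤ, a ^ 2 * p + b ^ 2 * q = b * (d * p + b * q) - p := by
    intro p q; linear_combination (-p) * h
  have key2 : ∀ p q : ℤ, d ^ 2 * p + a ^ 2 * q = d * (d * p + b * q) - q := by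
    intro p q; linear_combination (-q) * h
  have inv : ∀ p q s : ℤ, d * (p - b * s) + b * (q + d * s) = d * p + b * q := by
    intro p q s; ring
  refine Set.ncard_congr
    (fun z _ => if 0 ≤ d * z.1 + b * z.2 then
      (z.1 - b * (d * z.1 + b * z.2), z.2 + d * (d * z.1 + b * z.2)) else z) ?_ ?_ ?_
  · rintro ⟨p, q⟩ ⟨h1, h2, h3⟩
    simp only at h1 h2 h3 ⊢
    rw [key1] at h3
    split_ifs with hl
    · have hdl := mul_nonneg hd.le hl
      refine ⟨by simp only; linarith, by simp only; linarith, ?_⟩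
      simp only
      rw [key2, inv]; linarith
    · push Not at hl
      have hdl := mul_neg_of_pos_of_neg hd hl
      refine ⟨h1, h2, ?_⟩
      simp only
      rw [key2]; linarith
  · rintro ⟨p, q⟩ ⟨p', q'⟩ _ _ he
    simp only at he
    split_ifs at he with h1 h2 h2
    · rw [Prod.mk.injEq] at he
      have e : d * p + b * q = d * p' + b * q' := by
        have i1 := inv p q (d * p + b * q)
        have i2 := inv p' q' (d * p' + b * q')
        rw [he.1, he.2, i2] at i1
        exact i1.symm
      rw [e] at he
      ext
      · simpa using he.1
      · simpa using he.2
    · rw [Prod.mk.injEq] at he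
      have i1 := inv p q (d * p + b * q)
      rw [he.1, he.2] at i1
      omega
    · rw [Prod.mk.injEq] at he
      have i1 := inv p' q' (d * p' + b * q')
      rw [← he.1, ← he.2] at i1
      omega
    · exact he
  · rintro ⟨p, q⟩ ⟨h1, h2, h3⟩
    simp only at h1 h2 h3
    rw [key2] at h3
    by_cases hl : 0 ≤ d * p + b * q
    · have hbl := mul_nonneg hb.le hl
      have i := inv p q (-(d * p + b * q))
      have i' : d * (p + b * (d * p + b * q)) + b * (q - d * (d * p + b * q))
          = d * p + b * q := by ring
      refine ⟨(p + b * (d * p + b * q), q - d * (d * p + b * q)), ⟨?_, ?_, ?_⟩, ?_⟩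
      · simp only; linarith
      · simp only; linarith
      · simp only; rw [key1, i']; linarith
      · simp only [i', if_pos hl]
        ext <;> simp
    · refine ⟨(p, q), ⟨h1, h2, ?_⟩, by simp only [if_neg hl]⟩
      simp only
      push Not at hl
      have hbl := mul_neg_of_pos_of_neg hb hl
      rw [key1]; linarith

lemma latA_one (t : ℕ) : ((latA 1 1 t).ncard : ℚ) = 9 / 2 * (t : ℚ) ^ 2 + 9 / 2 * t + 1 := by
  have himg : latA 1 1 t = (fun s : (_ : ℕ) × ℕ => (((s.2 : ℤ) - t, (s.1 : ℤ) - s.2 - t) : ℤ × ℤ)) ''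
      (((Finset.range (3 * t + 1)).sigma (fun i => Finset.range (i + 1)) :
        Finset ((_ : ℕ) × ℕ)) : Set ((_ : ℕ) × ℕ)) := by
    ext ⟨p, q⟩
    simp only [latA, Set.mem_ofPred_eq, Set.mem_image, Finset.mem_coe, Finset.mem_sigma,
      Finset.mem_range, Prod.mk.injEq]
    constructor
    · rintro ⟨h1, h2, h3⟩
      refine ⟨⟨(p + q + 2 * t).toNat, (p + t).toNat⟩, ?_, ?_⟩ <;> simp only <;> omega
    · rintro ⟨⟨k, i⟩, ⟨h1, h2⟩, h3, h4⟩
      simp only at h1 h2 h3 h4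
      omega
  rw [himg, Set.ncard_image_of_injective, Set.ncard_coe_finset, Finset.card_sigma]
  · simp only [Finset.card_range]
    have : ∀ n : ℕ, ((∑ i ∈ Finset.range n, (i + 1) : ℕ) : ℚ) = n * (n + 1) / 2 := by
      intro n
      induction n with
      | zero => simp
      | succ n ih => rw [Finset.sum_range_succ, Nat.cast_add, ih]; push_cast; ring
    rw [this]; push_cast; ring
  · rintro ⟨k, i⟩ ⟨k', i'⟩ h
    simp only [Prod.mk.injEq] at h
    obtain ⟨rfl, rfl⟩ : k = k' ∧ i = i' := by omega
    rfl

lemma fib_facts (k : ℕ) :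
    (Nat.fib (2 * k + 5) : ℤ) * Nat.fib (2 * k + 1) = (Nat.fib (2 * k + 3) : ℤ) ^ 2 + 1 ∧
    (Nat.fib (2 * k + 1) : ℤ) ^ 2 + (Nat.fib (2 * k + 3) : ℤ) ^ 2 + 1
      = 3 * Nat.fib (2 * k + 1) * Nat.fib (2 * k + 3) := by
  have r : ∀ n : ℕ, (Nat.fib (n + 2) : ℤ) = Nat.fib n + Nat.fib (n + 1) := by
    intro n; exact_mod_cast Nat.fib_add_two
  have main : (Nat.fib (2 * k + 1) : ℤ) ^ 2 + (Nat.fib (2 * k + 3) : ℤ) ^ 2 + 1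
      = 3 * Nat.fib (2 * k + 1) * Nat.fib (2 * k + 3) := by
    induction k with
    | zero => norm_num [Nat.fib]
    | succ k ih =>
      have r1 := r (2 * k + 1)
      have r2 := r (2 * k + 2)
      have r3 := r (2 * k + 3)
      rw [show 2 * (k + 1) + 1 = 2 * k + 3 by ring, show 2 * (k + 1) + 3 = 2 * k + 5 by ring]
      simp only [Nat.add_assoc, Nat.reduceAdd] at r1 r2 r3
      have : (Nat.fib (2 * k + 5) : ℤ) = 3 * Nat.fib (2 * k + 3) - Nat.fib (2 * k + 1) := by
        linarith
      rw [this]; linear_combination ih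
  refine ⟨?_, main⟩
  have r1 := r (2 * k + 1)
  have r2 := r (2 * k + 2)
  have r3 := r (2 * k + 3)
  simp only [Nat.add_assoc, Nat.reduceAdd] at r1 r2 r3
  have : (Nat.fib (2 * k + 5) : ℤ) = 3 * Nat.fib (2 * k + 3) - Nat.fib (2 * k + 1) := by
    linarith
  rw [this]; linear_combination (-1) * main

lemma latA_fib (k t : ℕ) :
    ((latA (Nat.fib (2 * k + 1)) (Nat.fib (2 * k + 3)) t).ncard : ℚ)
      = 9 / 2 * (t : ℚ) ^ 2 + 9 / 2 * t + 1 := by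
  induction k with
  | zero =>
    rw [← latA_one, latA_step 1 _ _ _ one_pos] <;> norm_num [Nat.fib]
  | succ k ih =>
    rw [← ih, show 2 * (k + 1) + 1 = 2 * k + 3 by ring, show 2 * (k + 1) + 3 = 2 * k + 5 by ring,
      latA_step (Nat.fib (2 * k + 1))]
    · exact_mod_cast Nat.fib_pos.2 (by omega)
    · exact_mod_cast Nat.fib_pos.2 (by omega)
    · exact (fib_facts k).1

lemma hull_eq (a b : ℝ) (ha : 0 < a) (hb : 0 < b) (h : a ^ 2 + b ^ 2 + 1 = 3 * a * b) :
    convexHull ℝ ({(-(3 * a) / b, 3 * a / b - 1), ((0 : ℝ), (-1 : ℝ)), (3 * b / a, (-1 : ℝ))} :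
        Set (ℝ × ℝ)) =
      {z | -1 ≤ z.1 + z.2 ∧ -1 ≤ z.2 ∧ a ^ 2 * (z.1 + z.2) + b ^ 2 * z.2 ≤ 1} := by
  apply Set.Subset.antisymm
  · apply convexHull_min
    · have e1 : -(3 * a) / b + (3 * a / b - 1) = -1 := by ring
      have p1 : 0 < a / b := by positivity
      have p2 : 0 < b / a := by positivity
      have e2 : b ^ 2 * (3 * a / b - 1) = 3 * a * b - b ^ 2 := by field_simp
      have e3 : a ^ 2 * (3 * b / a + -1) = 3 * a * b - a ^ 2 := by field_simp; ring
      rintro z (rfl | rfl | rfl)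
      · refine ⟨e1.ge, ?_, ?_⟩
        · simp only; rw [mul_div_assoc]; linarith
        · simp only; rw [e1, e2]; linarith
      · refine ⟨by norm_num, by norm_num, ?_⟩
        simp only; nlinarith
      · refine ⟨?_, by norm_num, ?_⟩
        · simp only; rw [mul_div_assoc]; linarith
        · simp only; rw [e3]; linarith
    · rintro ⟨x, y⟩ ⟨h1, h2, h3⟩ ⟨x', y'⟩ ⟨h1', h2', h3'⟩ s r hs hr hsr
      simp only at h1 h2 h3 h1' h2' h3'
      simp only [Set.mem_ofPred_eq, Prod.smul_mk, Prod.mk_add_mk, smul_eq_mul]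
      refine ⟨?_, ?_, ?_⟩ <;> nlinarith [mul_le_mul_of_nonneg_left h1 hs,
        mul_le_mul_of_nonneg_left h2 hs, mul_le_mul_of_nonneg_left h3 hs,
        mul_le_mul_of_nonneg_left h1' hr, mul_le_mul_of_nonneg_left h2' hr,
        mul_le_mul_of_nonneg_left h3' hr]
  · rintro ⟨x, y⟩ ⟨h1, h2, h3⟩
    simp only at h1 h2 h3
    have w0 : 0 ≤ (y + 1) * b / (3 * a) := by
      apply div_nonneg (mul_nonneg (by linarith) hb.le) (by positivity)
    have w1 : 0 ≤ (1 - a ^ 2 * (x + y) - b ^ 2 * y) / (3 * a * b) := by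
      apply div_nonneg (by linarith) (by positivity)
    have w2 : 0 ≤ (x + y + 1) * a / (3 * b) := by
      apply div_nonneg (mul_nonneg (by linarith) ha.le) (by positivity)
    have hs : (y + 1) * b / (3 * a) + (1 - a ^ 2 * (x + y) - b ^ 2 * y) / (3 * a * b) +
        (x + y + 1) * a / (3 * b) = 1 := by
      field_simp
      linear_combination h
    have hm := (convex_convexHull ℝ ({(-(3 * a) / b, 3 * a / b - 1), ((0 : ℝ), (-1 : ℝ)),
      (3 * b / a, (-1 : ℝ))} : Set (ℝ × ℝ))).sum_mem (t := Finset.univ)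
      (w := ![(y + 1) * b / (3 * a), (1 - a ^ 2 * (x + y) - b ^ 2 * y) / (3 * a * b),
        (x + y + 1) * a / (3 * b)])
      (z := ![(-(3 * a) / b, 3 * a / b - 1), ((0 : ℝ), (-1 : ℝ)), (3 * b / a, (-1 : ℝ))])
      (by intro i _; fin_cases i <;> simpa) (by simpa [Fin.sum_univ_three] using hs)
      (by intro i _; apply subset_convexHull; fin_cases i <;> simp)
    convert hm using 1
    simp only [Fin.sum_univ_three, Matrix.cons_val_zero, Matrix.cons_val_one, Matrix.cons_val,
      Prod.smul_mk, Prod.mk_add_mk, smul_eq_mul]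
    ext
    · simp only; field_simp; ring
    · simp only
      have : (y + 1) * b / (3 * a) * (3 * a / b - 1) = (y + 1) - (y + 1) * b / (3 * a) := by
        field_simp
      rw [this]; linarith

lemma int_iff (a b : ℝ) (ha : 0 < a) (hb : 0 < b) (z : ℝ × ℝ) :
    z ∈ interior {z : ℝ × ℝ | -1 ≤ z.1 + z.2 ∧ -1 ≤ z.2 ∧
      a ^ 2 * (z.1 + z.2) + b ^ 2 * z.2 ≤ 1} ↔
    (-1 < z.1 + z.2 ∧ -1 < z.2 ∧ a ^ 2 * (z.1 + z.2) + b ^ 2 * z.2 < 1) := by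
  constructor
  · intro hz
    rw [mem_interior_iff_mem_nhds, Metric.mem_nhds_iff] at hz
    obtain ⟨δ, hδ, hsub⟩ := hz
    obtain ⟨x, y⟩ := z
    have k1 := hsub (show (x, y - δ / 2) ∈ Metric.ball (x, y) δ by
      rw [Metric.mem_ball, Prod.dist_eq]
      simp [abs_of_pos hδ, hδ])
    have k2 := hsub (show (x, y + δ / 2) ∈ Metric.ball (x, y) δ by
      rw [Metric.mem_ball, Prod.dist_eq]
      simp [abs_of_pos hδ, hδ])
    simp only [Set.mem_ofPred_eq] at k1 k2 ⊢
    have := mul_pos (pow_pos ha 2) hδ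
    have := mul_pos (pow_pos hb 2) hδ
    refine ⟨by linarith, by linarith, by nlinarith⟩
  · intro hz
    refine mem_interior.2 ⟨{z : ℝ × ℝ | -1 < z.1 + z.2 ∧ -1 < z.2 ∧
      a ^ 2 * (z.1 + z.2) + b ^ 2 * z.2 < 1}, ?_, ?_, hz⟩
    · rintro w ⟨h1, h2, h3⟩
      exact ⟨h1.le, h2.le, h3.le⟩
    · have c1 : IsOpen {z : ℝ × ℝ | -1 < z.1 + z.2} := isOpen_lt (by fun_prop) (by fun_prop)
      have c2 : IsOpen {z : ℝ × ℝ | -1 < z.2} := isOpen_lt (by fun_prop) (by fun_prop)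
      have c3 : IsOpen {z : ℝ × ℝ | (a : ℝ) ^ 2 * (z.1 + z.2) + (b : ℝ) ^ 2 * z.2 < 1} :=
        isOpen_lt (by fun_prop) (by fun_prop)
      exact c1.inter (c2.inter c3)

lemma ehr_eq (a b : ℤ) (t : ℕ) (ht : 0 < t) :
    ehr {z : ℝ × ℝ | -1 ≤ z.1 + z.2 ∧ -1 ≤ z.2 ∧
      (a : ℝ) ^ 2 * (z.1 + z.2) + (b : ℝ) ^ 2 * z.2 ≤ 1} t = (latA a b t).ncard := by
  have ht' : (0 : ℝ) < t := by exact_mod_cast ht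
  have himg : (((t : ℝ) • {z : ℝ × ℝ | -1 ≤ z.1 + z.2 ∧ -1 ≤ z.2 ∧
      (a : ℝ) ^ 2 * (z.1 + z.2) + (b : ℝ) ^ 2 * z.2 ≤ 1}) ∩ latticePts) =
      (fun z : ℤ × ℤ => (((z.1 - z.2 : ℤ) : ℝ), ((z.2 : ℤ) : ℝ))) '' latA a b t := by
    have key : ∀ m n : ℤ, ((m : ℝ), (n : ℝ)) ∈ ((t : ℝ) • {z : ℝ × ℝ | -1 ≤ z.1 + z.2 ∧ -1 ≤ z.2 ∧
      (a : ℝ) ^ 2 * (z.1 + z.2) + (b : ℝ) ^ 2 * z.2 ≤ 1}) ↔ (m + n, n) ∈ latA a b t := by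
      intro m n
      rw [Set.mem_smul_set_iff_inv_smul_mem₀ ht'.ne']
      simp only [Prod.smul_mk, smul_eq_mul, Set.mem_ofPred_eq, latA]
      have e1 : (t : ℝ)⁻¹ * m + (t : ℝ)⁻¹ * n = ((m + n : ℤ) : ℝ) / t := by
        push_cast; field_simp
      have e2 : (t : ℝ)⁻¹ * n = (n : ℝ) / t := by field_simp
      rw [e1, e2]
      have e3 : (a : ℝ) ^ 2 * (((m + n : ℤ) : ℝ) / t) + (b : ℝ) ^ 2 * ((n : ℝ) / t) =
        ((a ^ 2 * (m + n) + b ^ 2 * n : ℤ) : ℝ) / t := by push_cast; field_simp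
      rw [e3, le_div_iff₀ ht', le_div_iff₀ ht', div_le_iff₀ ht', neg_one_mul, one_mul]
      norm_cast
    ext z
    constructor
    · rintro ⟨hz, m, n, rfl⟩
      exact ⟨(m + n, n), (key m n).1 hz, by simp⟩
    · rintro ⟨⟨p, q⟩, hz, rfl⟩
      refine ⟨(key _ _).2 ?_, p - q, q, rfl⟩
      simpa using hz
  rw [ehr, himg, Set.ncard_image_of_injective]
  rintro ⟨p, q⟩ ⟨p', q'⟩ h
  simp only [Prod.mk.injEq, Int.cast_inj] at h
  ext <;> simp only <;> omega

/-- for every positive integer j, the triangle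
T_j := conv{(−3F_{2j−1}/F_{2j+1}, 3F_{2j−1}/F_{2j+1} − 1), (0, −1),
(3F_{2j+1}/F_{2j−1}, −1)} is pseudointegral, has exactly one interior lattice
point, and has exactly 9 boundary lattice points. -/
theorem stmt_8 (j : ℕ) (hj : 0 < j)
    (T : Set (ℝ × ℝ))
    (hT : T = convexHull ℝ
      ({(-(3 * (Nat.fib (2 * j - 1) : ℝ)) / (Nat.fib (2 * j + 1) : ℝ),
          3 * (Nat.fib (2 * j - 1) : ℝ) / (Nat.fib (2 * j + 1) : ℝ) - 1),
        ((0 : ℝ), (-1 : ℝ)),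
        (3 * (Nat.fib (2 * j + 1) : ℝ) / (Nat.fib (2 * j - 1) : ℝ), (-1 : ℝ))} :
        Set (ℝ × ℝ))) :
    IsPIP T ∧ (interior T ∩ latticePts).ncard = 1 ∧
      (frontier T ∩ latticePts).ncard = 9 := by
  obtain ⟨k, rfl⟩ : ∃ k, j = k + 1 := ⟨j - 1, by omega⟩
  rw [show 2 * (k + 1) - 1 = 2 * k + 1 by omega, show 2 * (k + 1) + 1 = 2 * k + 3 by ring] at hT
  have hcount := latA_fib k
  have hrel := (fib_facts k).2
  have ha : 0 < Nat.fib (2 * k + 1) := Nat.fib_pos.2 (by omega)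
  have hb : 0 < Nat.fib (2 * k + 3) := Nat.fib_pos.2 (by omega)
  generalize Nat.fib (2 * k + 1) = a at *
  generalize Nat.fib (2 * k + 3) = b at *
  have ha' : (0 : ℝ) < a := by exact_mod_cast ha
  have hb' : (0 : ℝ) < b := by exact_mod_cast hb
  rw [hull_eq a b ha' hb' (by exact_mod_cast hrel)] at hT
  have hehr : ∀ t : ℕ, 0 < t → (ehr T t : ℚ) = 9 / 2 * (t : ℚ) ^ 2 + 9 / 2 * t + 1 := by
    intro t ht
    rw [← hcount t, ← ehr_eq a b t ht, hT]
    simp only [Int.cast_natCast]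
  have hinter : interior T ∩ latticePts = {(0, 0)} := by
    ext z
    rw [Set.mem_inter_iff, hT, int_iff _ _ ha' hb', Set.mem_singleton_iff]
    constructor
    · rintro ⟨⟨h1, h2, h3⟩, m, n, rfl⟩
      simp only at h1 h2 h3
      norm_cast at h1 h2 h3
      have ha2 : 0 < (a : ℤ) ^ 2 := by positivity
      have hb2 : 0 < (b : ℤ) ^ 2 := by positivity
      push_cast at h3
      have hn : 0 ≤ n := by omega
      have hmn : 0 ≤ m + n := by omega
      have hn0 : n = 0 := by nlinarith
      have hm0 : m + n = 0 := by nlinarith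
      have : m = 0 := by omega
      simp [hn0, this]
    · rintro rfl
      exact ⟨by norm_num, 0, 0, by simp⟩
  refine ⟨⟨Polynomial.C (9 / 2) * Polynomial.X ^ 2 + Polynomial.C (9 / 2) * Polynomial.X + 1,
    fun t ht => by rw [hehr t ht]; simp⟩, by rw [hinter]; simp, ?_⟩
  have hclosed : IsClosed T := by
    rw [hT]
    have c1 : IsClosed {z : ℝ × ℝ | -1 ≤ z.1 + z.2} := isClosed_le (by fun_prop) (by fun_prop)
    have c2 : IsClosed {z : ℝ × ℝ | -1 ≤ z.2} := isClosed_le (by fun_prop) (by fun_prop)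
    have c3 : IsClosed {z : ℝ × ℝ | (a : ℝ) ^ 2 * (z.1 + z.2) + (b : ℝ) ^ 2 * z.2 ≤ 1} :=
      isClosed_le (by fun_prop) (by fun_prop)
    exact c1.inter (c2.inter c3)
  have h10 : (T ∩ latticePts).ncard = 10 := by
    have := hehr 1 one_pos
    rw [ehr, Nat.cast_one, one_smul] at this
    norm_num at this
    exact_mod_cast this
  have hd : frontier T ∩ latticePts = (T ∩ latticePts) \ (interior T ∩ latticePts) := by
    rw [hclosed.frontier_eq]
    ext z
    simp only [Set.mem_inter_iff, Set.mem_sdiff]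
    tauto
  have hfin : (interior T ∩ latticePts).Finite := by rw [hinter]; exact Set.finite_singleton _
  rw [hd, Set.ncard_sdiff (Set.inter_subset_inter_left _ interior_subset) hfin, h10, hinter]
  simp
end

section
/- For all positive integers i and b with b ≤ 5i + 4, there exists a rational convex polygon P ⊂ ℝ² that is pseudointegral, has exactly i lattice points in its interior, and has exactly b lattice points on its boundary. -/
open Set Pointwise

/-- A rational convex polygon: the convex hull of a finite set of rational
points, with nonempty interior in ℝ². -/
def IsRatPolygon (P : Set (ℝ × ℝ)) : Prop :=
  ∃ V : Finset (ℚ × ℚ), P = convexHull ℝ (qpt '' (V : Set (ℚ × ℚ))) ∧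
    (interior P).Nonempty

/-- Intersection of finitely many half-planes with integer coefficients. -/
def HP (H : List (ℤ × ℤ × ℤ)) : Set (ℝ × ℝ) :=
  {p | ∀ h ∈ H, (h.1 : ℝ) * p.1 + (h.2.1 : ℝ) * p.2 ≤ (h.2.2 : ℝ)}

lemma HP_convex (H : List (ℤ × ℤ × ℤ)) : Convex ℝ (HP H) := by
  intro p hp q hq a b ha hb hab h hh
  have h1 := hp h hh
  have h2 := hq h hh
  simp only [Prod.fst_add, Prod.smul_fst, Prod.snd_add, Prod.smul_snd, smul_eq_mul]
  have h3 := mul_le_mul_of_nonneg_left h1 ha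
  have h4 := mul_le_mul_of_nonneg_left h2 hb
  have h5 : a * (h.2.2 : ℝ) + b * (h.2.2 : ℝ) = h.2.2 := by rw [← add_mul, hab, one_mul]
  linarith

lemma HP_closed (H : List (ℤ × ℤ × ℤ)) : IsClosed (HP H) := by
  have : HP H = ⋂ h ∈ H, {p : ℝ × ℝ | (h.1 : ℝ) * p.1 + (h.2.1 : ℝ) * p.2 ≤ (h.2.2 : ℝ)} := by
    ext p; simp [HP]
  rw [this]
  refine isClosed_iInter fun h => isClosed_iInter fun _ => ?_
  exact isClosed_le (by fun_prop) (by fun_prop)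

lemma interior_half (a b c : ℝ) (hab : a ≠ 0 ∨ b ≠ 0) :
    interior {p : ℝ × ℝ | a * p.1 + b * p.2 ≤ c} = {p : ℝ × ℝ | a * p.1 + b * p.2 < c} := by
  let f : ℝ × ℝ →L[ℝ] ℝ := a • ContinuousLinearMap.fst ℝ ℝ ℝ + b • ContinuousLinearMap.snd ℝ ℝ ℝ
  have hf : Function.Surjective f := by
    intro z
    rcases hab with h | h
    · exact ⟨(z / a, 0), by simp [f]; field_simp⟩
    · exact ⟨(0, z / b), by simp [f]; field_simp⟩
  have h1 := (f.isOpenMap hf).preimage_interior_eq_interior_preimage f.continuous (Iic c)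
  rw [interior_Iic] at h1
  have e1 : {p : ℝ × ℝ | a * p.1 + b * p.2 ≤ c} = f ⁻¹' (Iic c) := by ext p; simp [f]
  have e2 : {p : ℝ × ℝ | a * p.1 + b * p.2 < c} = f ⁻¹' (Iio c) := by ext p; simp [f]
  rw [e1, e2, h1]

lemma interior_HP (H : List (ℤ × ℤ × ℤ)) (hH : ∀ h ∈ H, h.1 ≠ 0 ∨ h.2.1 ≠ 0) :
    interior (HP H) = {p | ∀ h ∈ H, (h.1 : ℝ) * p.1 + (h.2.1 : ℝ) * p.2 < (h.2.2 : ℝ)} := by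
  induction H with
  | nil => simp [HP]
  | cons h l ih =>
    have e : HP (h :: l) = {p : ℝ × ℝ | (h.1 : ℝ) * p.1 + (h.2.1 : ℝ) * p.2 ≤ (h.2.2 : ℝ)} ∩ HP l := by
      ext p; simp [HP]
    rw [e, interior_inter, ih (fun x hx => hH x (List.mem_cons_of_mem _ hx)), interior_half]
    · ext p; simp
    · have := hH h List.mem_cons_self
      exact_mod_cast this

lemma mem_interior_HP (H : List (ℤ × ℤ × ℤ)) (hH : ∀ h ∈ H, h.1 ≠ 0 ∨ h.2.1 ≠ 0) (m y : ℤ) :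
    ((m : ℝ), (y : ℝ)) ∈ interior (HP H) ↔ ∀ h ∈ H, h.1 * m + h.2.1 * y < h.2.2 := by
  rw [interior_HP H hH]
  simp only [mem_ofPred_eq]
  exact forall₂_congr fun h _ => by exact_mod_cast Iff.rfl

lemma mem_smul_HP (H : List (ℤ × ℤ × ℤ)) (t : ℕ) (ht : 0 < t) (m y : ℤ) :
    ((m : ℝ), (y : ℝ)) ∈ (t : ℝ) • HP H ↔ ∀ h ∈ H, h.1 * m + h.2.1 * y ≤ h.2.2 * t := by
  have ht' : (0 : ℝ) < t := by exact_mod_cast ht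
  rw [mem_smul_set_iff_inv_smul_mem₀ ht'.ne']
  simp only [HP, mem_ofPred_eq, Prod.smul_fst, Prod.smul_snd, smul_eq_mul]
  refine forall₂_congr fun h _ => ?_
  have e : (h.1 : ℝ) * ((t : ℝ)⁻¹ * m) + (h.2.1 : ℝ) * ((t : ℝ)⁻¹ * y)
      = ((h.1 : ℝ) * m + h.2.1 * y) / t := by field_simp
  rw [e, div_le_iff₀ ht']
  exact_mod_cast Iff.rfl

lemma count_rows (Q : Set (ℝ × ℝ)) (N : ℕ) (y0 : ℤ) (lo hi : ℕ → ℤ)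
    (h : ∀ m y : ℤ, ((m : ℝ), (y : ℝ)) ∈ Q ↔ ∃ n : ℕ, n < N ∧ y = y0 + n ∧ lo n ≤ m ∧ m ≤ hi n)
    (hle : ∀ n < N, lo n ≤ hi n + 1) :
    (Q ∩ latticePts).Finite ∧
      ((Q ∩ latticePts).ncard : ℤ) = ∑ n ∈ Finset.range N, (hi n + 1 - lo n) := by
  classical
  let F : Finset (Σ _ : ℕ, ℤ) := (Finset.range N).sigma fun n => Finset.Icc (lo n) (hi n)
  let g : (Σ _ : ℕ, ℤ) → ℝ × ℝ := fun p => ((p.2 : ℝ), ((y0 + p.1 : ℤ) : ℝ))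
  have hg : Function.Injective g := by
    rintro ⟨a, b⟩ ⟨c, d⟩ hh
    simp only [g, Prod.mk.injEq, Int.cast_inj] at hh
    obtain ⟨h1, h2⟩ := hh
    have : a = c := by omega
    subst this; subst h1; rfl
  have hQ : Q ∩ latticePts = ((F.image g : Finset (ℝ × ℝ)) : Set (ℝ × ℝ)) := by
    ext p
    simp only [mem_inter_iff, latticePts, mem_ofPred_eq, Finset.coe_image, mem_image,
      Finset.mem_coe]
    constructor
    · rintro ⟨hp, m, y, rfl⟩
      obtain ⟨n, hn, hy, h1, h2⟩ := (h m y).1 hp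
      exact ⟨⟨n, m⟩, by simp [F, hn, h1, h2], by simp [g, hy]⟩
    · rintro ⟨⟨n, m⟩, hm, rfl⟩
      simp only [F, Finset.mem_sigma, Finset.mem_range, Finset.mem_Icc] at hm
      exact ⟨(h m (y0 + n)).2 ⟨n, hm.1, rfl, hm.2.1, hm.2.2⟩, m, y0 + n, rfl⟩
  rw [hQ]
  refine ⟨Finset.finite_toSet _, ?_⟩
  rw [Set.ncard_coe_finset, Finset.card_image_of_injective _ hg, Finset.card_sigma]
  push_cast
  refine Finset.sum_congr rfl fun n hn => ?_
  have := hle n (Finset.mem_range.1 hn)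
  rw [Int.card_Icc]
  omega

lemma finish (H : List (ℤ × ℤ × ℤ)) (V : Finset (ℚ × ℚ)) (i b : ℕ) (hi : 0 < i)
    (hV : HP H = convexHull ℝ (qpt '' (V : Set (ℚ × ℚ))))
    (hfin : (((1 : ℕ) : ℝ) • HP H ∩ latticePts).Finite)
    (hc : ∀ t : ℕ, 0 < t → 2 * (ehr (HP H) t : ℤ) = (2 * i + b - 2) * t ^ 2 + b * t + 2)
    (hint : (interior (HP H) ∩ latticePts).ncard = i) :
    ∃ P : Set (ℝ × ℝ), IsRatPolygon P ∧ IsPIP P ∧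
      (interior P ∩ latticePts).ncard = i ∧
      (frontier P ∩ latticePts).ncard = b := by
  refine ⟨HP H, ⟨V, hV, ?_⟩, ?_, hint, ?_⟩
  · have : (interior (HP H) ∩ latticePts).Nonempty := by
      by_contra hne
      rw [not_nonempty_iff_eq_empty] at hne
      rw [hne] at hint
      simp at hint; omega
    exact this.mono inter_subset_left
  · refine ⟨Polynomial.C ((2 * i + b - 2 : ℚ) / 2) * Polynomial.X ^ 2
      + Polynomial.C ((b : ℚ) / 2) * Polynomial.X + 1, fun t ht => ?_⟩
    have h1 : (2 * (ehr (HP H) t : ℚ)) = (2 * i + b - 2) * t ^ 2 + b * t + 2 := by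
      exact_mod_cast hc t ht
    simp
    linarith
  · have h1 := hc 1 one_pos
    unfold ehr at h1
    have e1 : (((1 : ℕ) : ℝ)) • HP H = HP H := by simp
    rw [e1] at h1 hfin
    have e2 : frontier (HP H) ∩ latticePts
        = (HP H ∩ latticePts) \ (interior (HP H) ∩ latticePts) := by
      rw [(HP_closed H).frontier_eq]
      ext p; simp; tauto
    have hsub : interior (HP H) ∩ latticePts ⊆ HP H ∩ latticePts :=
      inter_subset_inter_left _ interior_subset
    rw [e2, Set.ncard_sdiff hsub (hfin.subset hsub), hint]
    push_cast at h1
    omega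

lemma mem_hslice {S : Set (ℝ × ℝ)} (hS : Convex ℝ S) {l r x y : ℝ} (hl : (l, y) ∈ S)
    (hr : (r, y) ∈ S) (h1 : l ≤ x) (h2 : x ≤ r) : (x, y) ∈ S := by
  rcases eq_or_lt_of_le (h1.trans h2) with h | h
  · have : x = l := by linarith
    rw [this]; exact hl
  · have hd : 0 < r - l := by linarith
    have := hS hl hr (a := (r - x) / (r - l)) (b := (x - l) / (r - l))
      (div_nonneg (by linarith) hd.le) (div_nonneg (by linarith) hd.le) (by field_simp; ring)
    convert this using 1
    ext
    · simp; field_simp; ring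
    · simp; field_simp; ring

lemma mem_seg {S : Set (ℝ × ℝ)} (hS : Convex ℝ S) {x1 y1 x2 y2 x y : ℝ} (hl : (x1, y1) ∈ S)
    (hr : (x2, y2) ∈ S) (h0 : y1 < y2) (h1 : y1 ≤ y) (h2 : y ≤ y2)
    (hx : x * (y2 - y1) = x1 * (y2 - y) + x2 * (y - y1)) : (x, y) ∈ S := by
  have hd : 0 < y2 - y1 := by linarith
  have := hS hl hr (a := (y2 - y) / (y2 - y1)) (b := (y - y1) / (y2 - y1))
    (div_nonneg (by linarith) hd.le) (div_nonneg (by linarith) hd.le) (by field_simp; ring)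
  convert this using 1
  ext
  · simp; field_simp; linarith
  · simp; field_simp; ring

/-- The main family of polygons. -/
def H1 (i b : ℤ) : List (ℤ × ℤ × ℤ) :=
  [(0, -1, 0), (-4, 5, 2), (1, b + 1 - 5 * i, b - 2), (1, b - 4, b - 3 + i), (1, 5 * i, 6 * i + 1)]

def V1 (i b : ℚ) : Finset (ℚ × ℚ) :=
  {(-1/2, 0), (b - 2, 0), (b - 3 + i - (b - 4) / 5, 1/5), (i + 1, 1), (1, 6/5)}

lemma hull1 (i b : ℕ) (hi : 0 < i) (hb : 2 ≤ b) (hbi : b ≤ 5 * i + 4) :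
    HP (H1 i b) = convexHull ℝ (qpt '' (V1 i b : Set (ℚ × ℚ))) := by
  have hi' : (1 : ℝ) ≤ i := by exact_mod_cast hi
  have hb' : (2 : ℝ) ≤ b := by exact_mod_cast hb
  have hbi' : (b : ℝ) ≤ 5 * i + 4 := by exact_mod_cast hbi
  apply Subset.antisymm
  · rintro ⟨x, y⟩ hp
    simp [HP, H1] at hp
    obtain ⟨h1, h2, h3, h4, h5⟩ := hp
    set S := convexHull ℝ (qpt '' (V1 i b : Set (ℚ × ℚ))) with hS
    have hc : Convex ℝ S := convex_convexHull _ _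
    have hv : ∀ v ∈ V1 i b, qpt v ∈ S := fun v hv =>
      subset_convexHull _ _ (mem_image_of_mem _ hv)
    have v1 : ((-1/2 : ℝ), (0 : ℝ)) ∈ S := by
      have := hv (-1/2, 0) (by simp [V1]); simpa [qpt] using this
    have v2 : ((b - 2 : ℝ), (0 : ℝ)) ∈ S := by
      have := hv (b - 2, 0) (by simp [V1]); simpa [qpt] using this
    have v3 : ((b - 3 + i - (b - 4) / 5 : ℝ), (1/5 : ℝ)) ∈ S := by
      have := hv (b - 3 + i - (b - 4) / 5, 1/5) (by simp [V1]); simpa [qpt] using this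
    have v4 : ((i + 1 : ℝ), (1 : ℝ)) ∈ S := by
      have := hv (i + 1, 1) (by simp [V1]); simpa [qpt] using this
    have v5 : ((1 : ℝ), (6/5 : ℝ)) ∈ S := by
      have := hv (1, 6/5) (by simp [V1]); simpa [qpt] using this
    have hy : y ≤ 6/5 := by
      by_contra hy
      push Not at hy
      nlinarith
    have hl : ((5 * y - 2) / 4, y) ∈ S :=
      mem_seg hc v1 v5 (by norm_num) h1 hy (by ring)
    rcases le_total y (1/5) with hy1 | hy1
    · have hr : ((b - 2) - (b + 1 - 5 * i) * y, y) ∈ S :=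
        mem_seg hc v2 v3 (by norm_num) h1 hy1 (by ring)
      exact mem_hslice hc hl hr (by linarith) (by linarith)
    rcases le_total y 1 with hy2 | hy2
    · have hr : ((b - 3 + i) - (b - 4) * y, y) ∈ S :=
        mem_seg hc v3 v4 (by norm_num) hy1 hy2 (by ring)
      exact mem_hslice hc hl hr (by linarith) (by linarith)
    · have hr : ((6 * i + 1) - 5 * i * y, y) ∈ S :=
        mem_seg hc v4 v5 (by norm_num) hy2 hy (by ring)
      exact mem_hslice hc hl hr (by linarith) (by linarith)
  · refine convexHull_min ?_ (HP_convex _)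
    rintro _ ⟨v, hv, rfl⟩
    simp only [V1, Finset.coe_insert, Finset.coe_singleton, mem_insert_iff,
      mem_singleton_iff] at hv
    rcases hv with rfl | rfl | rfl | rfl | rfl <;>
      simp only [HP, H1, qpt, mem_ofPred_eq, List.mem_cons, List.not_mem_nil, or_false,
        forall_eq_or_imp, forall_eq] <;> push_cast <;>
      refine ⟨?_, ?_, ?_, ?_, ?_⟩ <;> linarith

lemma sum_lin (a c : ℤ) (M : ℕ) :
    2 * ∑ j ∈ Finset.range M, (a + c * (j : ℤ)) = 2 * a * M + c * M * (M - 1) := by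
  induction M with
  | zero => simp
  | succ n ih => rw [Finset.sum_range_succ, mul_add, ih]; push_cast; ring

lemma F4a (t : ℕ) : 2 * ∑ n ∈ Finset.range (2 * t + 1), ((n : ℤ) / 4) = t * (t - 1) := by
  induction t with
  | zero => simp
  | succ n ih =>
    rw [show 2 * (n + 1) + 1 = 2 * n + 1 + 1 + 1 by ring, Finset.sum_range_succ,
      Finset.sum_range_succ, add_assoc, mul_add, ih]
    have : ((2 * n + 1 : ℕ) : ℤ) / 4 + ((2 * n + 1 + 1 : ℕ) : ℤ) / 4 = n := by omega
    rw [this]; push_cast; ring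

lemma F4b (s r : ℕ) (hr : r ≤ 4) :
    ∑ n ∈ Finset.range (4 * s + r), ((n : ℤ) / 4) = 2 * s * (s - 1) + r * s := by
  have h0 : ∑ n ∈ Finset.range (4 * s), ((n : ℤ) / 4) = 2 * s * (s - 1) := by
    induction s with
    | zero => simp
    | succ n ih =>
      rw [show 4 * (n + 1) = 4 * n + 1 + 1 + 1 + 1 by ring, Finset.sum_range_succ,
        Finset.sum_range_succ, Finset.sum_range_succ, Finset.sum_range_succ, ih]
      have e0 : ((4 * n : ℕ) : ℤ) / 4 = n := by omega
      have e1 : ((4 * n + 1 : ℕ) : ℤ) / 4 = n := by omega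
      have e2 : ((4 * n + 1 + 1 : ℕ) : ℤ) / 4 = n := by omega
      have e3 : ((4 * n + 1 + 1 + 1 : ℕ) : ℤ) / 4 = n := by omega
      rw [e0, e1, e2, e3]; push_cast; ring
  rw [Finset.sum_range_add, h0]
  have : ∑ x ∈ Finset.range r, (((4 * s + x : ℕ) : ℤ) / 4) = ∑ x ∈ Finset.range r, (s : ℤ) := by
    refine Finset.sum_congr rfl fun x hx => ?_
    have := Finset.mem_range.1 hx
    omega
  rw [this]; simp

lemma left_sum (s r : ℕ) (hr : r < 5) :
    2 * ∑ n ∈ Finset.range (6 * s + r + 1), ((2 * (5 * s + r : ℤ) - 5 * n) / 4)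
      = (5 * s + r) * (5 * s + r - 1) - 2 * (2 * s * (s - 1) + r * s)
        - (6 * s + r + 1) * (6 * s + r) := by
  have e : ∀ n ∈ Finset.range (6 * s + r + 1), ((2 * (5 * s + r : ℤ) - 5 * n) / 4)
      = (2 * (5 * s + r : ℤ) - n) / 4 + (0 + (-1) * (n : ℤ)) := by
    intro n _; omega
  rw [Finset.sum_congr rfl e, Finset.sum_add_distrib, mul_add, sum_lin]
  have e2 : ∑ n ∈ Finset.range (6 * s + r + 1), ((2 * (5 * s + r : ℤ) - n) / 4)
      = ∑ n ∈ Finset.range (6 * s + r + 1), (((4 * s + r + n : ℕ) : ℤ) / 4) := by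
    rw [← Finset.sum_range_reflect]
    refine Finset.sum_congr rfl fun n hn => ?_
    have := Finset.mem_range.1 hn
    congr 1
    push_cast [show n ≤ 6 * s + r + 1 - 1 by omega]
    omega
  have e3 := Finset.sum_range_add (fun n : ℕ => (n : ℤ) / 4) (4 * s + r) (6 * s + r + 1)
  rw [show 4 * s + r + (6 * s + r + 1) = 2 * (5 * s + r) + 1 by ring] at e3
  have e4 := F4a (5 * s + r)
  have e5 := F4b s r (by omega)
  rw [e2]
  push_cast at *
  linarith

lemma count1 (i b : ℕ) (hi : 0 < i) (hb : 2 ≤ b) (hbi : b ≤ 5 * i + 4) (t : ℕ) (ht : 0 < t) :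
    ((t : ℝ) • HP (H1 i b) ∩ latticePts).Finite ∧
    2 * (ehr (HP (H1 i b)) t : ℤ) = (2 * i + b - 2) * t ^ 2 + b * t + 2 := by
  obtain ⟨s, r, hr, rfl⟩ : ∃ s r : ℕ, r < 5 ∧ t = 5 * s + r :=
    ⟨t / 5, t % 5, Nat.mod_lt _ (by norm_num), by omega⟩
  have hi' : (1 : ℤ) ≤ i := by exact_mod_cast hi
  have hb' : (2 : ℤ) ≤ b := by exact_mod_cast hb
  have hbi' : (b : ℤ) ≤ 5 * i + 4 := by exact_mod_cast hbi
  set t : ℤ := 5 * s + r with htdef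
  let lo : ℕ → ℤ := fun n => -((2 * (5 * s + r : ℤ) - 5 * n) / 4)
  let hi : ℕ → ℤ := fun n =>
    if n < s + 1 then (b - 2) * t - (b + 1 - 5 * i) * n
    else if n < s + 1 + (4 * s + r) then (b - 3 + i) * t - (b - 4) * n
    else (6 * i + 1) * t - 5 * i * n
  have key := count_rows (((5 * s + r : ℕ) : ℝ) • HP (H1 i b)) (6 * s + r + 1) 0 lo hi ?_ ?_
  · refine ⟨key.1, ?_⟩
    unfold ehr
    rw [key.2]
    have e1 : ∑ n ∈ Finset.range (6 * s + r + 1), (hi n + 1 - lo n)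
        = ∑ n ∈ Finset.range (6 * s + r + 1), (hi n + 1)
          + ∑ n ∈ Finset.range (6 * s + r + 1), ((2 * (5 * s + r : ℤ) - 5 * n) / 4) := by
      rw [← Finset.sum_add_distrib]
      refine Finset.sum_congr rfl fun n _ => ?_
      simp only [lo]; ring
    have e2 : ∑ n ∈ Finset.range (6 * s + r + 1), (hi n + 1)
        = ∑ j ∈ Finset.range (s + 1), (((b - 2) * t + 1) + (-(b + 1 - 5 * i : ℤ)) * (j : ℤ))
        + ∑ j ∈ Finset.range (4 * s + r),
            (((b - 3 + i) * t + 1 - (b - 4) * (s + 1)) + (-(b - 4 : ℤ)) * (j : ℤ))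
        + ∑ j ∈ Finset.range s,
            (((6 * i + 1) * t + 1 - 5 * i * (5 * s + r + 1)) + (-(5 * i : ℤ)) * (j : ℤ)) := by
      rw [show 6 * s + r + 1 = (s + 1) + (4 * s + r) + s by ring, Finset.sum_range_add,
        Finset.sum_range_add]
      congr 1
      congr 1
      · refine Finset.sum_congr rfl fun n hn => ?_
        have := Finset.mem_range.1 hn
        simp only [hi, if_pos this]; ring
      · refine Finset.sum_congr rfl fun n hn => ?_
        have := Finset.mem_range.1 hn
        simp only [hi]
        rw [if_neg (by omega), if_pos (by omega)]; push_cast; ring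
      · refine Finset.sum_congr rfl fun n hn => ?_
        have := Finset.mem_range.1 hn
        simp only [hi]
        rw [if_neg (by omega), if_neg (by omega)]; push_cast; ring
    have e3 := left_sum s r hr
    rw [e1, e2, mul_add, mul_add, mul_add, sum_lin, sum_lin, sum_lin, e3]
    simp only [htdef]
    push_cast
    ring
  · intro m y
    rw [mem_smul_HP _ _ ht]
    simp only [H1, List.mem_cons, List.not_mem_nil, or_false, forall_eq_or_imp, forall_eq]
    push_cast
    rw [← htdef]
    have htn : (0 : ℤ) < t := by omega
    constructor
    · rintro ⟨h1, h2, h3, h4, h5⟩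
      have hy0 : 0 ≤ y := by linarith
      obtain ⟨n, rfl⟩ := Int.eq_ofNat_of_zero_le hy0
      have hn : 5 * (n : ℤ) ≤ 6 * t := by
        by_contra hh
        push Not at hh
        nlinarith
      refine ⟨n, by omega, by simp, by simp only [lo]; omega, ?_⟩
      simp only [hi]
      split_ifs <;> linarith
    · rintro ⟨n, hn, rfl, h1, h2⟩
      have hlo : -4 * m + 5 * (n : ℤ) ≤ 2 * t := by simp only [lo] at h1; omega
      have h56 : 5 * (n : ℤ) ≤ 6 * t := by omega
      simp only [zero_add]
      refine ⟨by omega, hlo, ?_⟩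
      simp only [hi] at h2
      split_ifs at h2 with c1 c2
      · have a1 : 0 ≤ ((i : ℤ) - 1) * (t - 5 * n) := mul_nonneg (by linarith) (by omega)
        have a2 : 0 ≤ (5 * (i : ℤ) + 4 - b) * (t - n) := mul_nonneg (by linarith) (by omega)
        refine ⟨by linarith, by linarith, by linarith⟩
      · have a1 : 0 ≤ ((i : ℤ) - 1) * (5 * n - t) := mul_nonneg (by linarith) (by omega)
        have a2 : 0 ≤ (5 * (i : ℤ) + 4 - b) * (t - n) := mul_nonneg (by linarith) (by omega)
        refine ⟨by linarith, by linarith, by linarith⟩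
      · have a1 : 0 ≤ ((i : ℤ) - 1) * (5 * n - t) := mul_nonneg (by linarith) (by omega)
        have a2 : 0 ≤ (5 * (i : ℤ) + 4 - b) * (n - t) := mul_nonneg (by linarith) (by omega)
        refine ⟨by linarith, by linarith, by linarith⟩
  · intro n hn
    have hkey : 5 * (n : ℤ) - 2 * t ≤ 4 * hi n := by
      simp only [hi]
      split_ifs with c1 c2
      · have a1 : 0 ≤ ((b : ℤ) - 2) * (t - n) := mul_nonneg (by linarith) (by omega)
        have a2 : 0 ≤ ((i : ℤ) - 1) * n := mul_nonneg (by linarith) (by omega)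
        linarith
      · have a1 : 0 ≤ ((b : ℤ) - 2) * (t - n) := mul_nonneg (by linarith) (by omega)
        have a2 : 0 ≤ ((i : ℤ) - 1) * t := mul_nonneg (by linarith) (by omega)
        linarith
      · have a1 : 0 ≤ (i : ℤ) * (6 * t - 5 * n) := mul_nonneg (by linarith) (by omega)
        have a2 : 5 * (n : ℤ) ≤ 6 * t := by omega
        linarith
    simp only [lo]
    omega

lemma int1 (i b : ℕ) (hi : 0 < i) (hb : 2 ≤ b) (hbi : b ≤ 5 * i + 4) :
    (interior (HP (H1 i b)) ∩ latticePts).ncard = i := by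
  have hi' : (1 : ℤ) ≤ i := by exact_mod_cast hi
  have hb' : (2 : ℤ) ≤ b := by exact_mod_cast hb
  have hbi' : (b : ℤ) ≤ 5 * i + 4 := by exact_mod_cast hbi
  have key := (count_rows (interior (HP (H1 i b))) 1 1 (fun _ => 1) (fun _ => i) ?_ ?_).2
  · simp at key; exact key
  · intro m y
    rw [mem_interior_HP]
    · simp only [H1, List.mem_cons, List.not_mem_nil, or_false, forall_eq_or_imp, forall_eq]
      constructor
      · rintro ⟨h1, h2, h3, h4, h5⟩
        have : y < 2 := by
          by_contra hh
          push Not at hh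
          nlinarith
        have hy : y = 1 := by omega
        subst hy
        exact ⟨0, by simp, by simp, by omega, by omega⟩
      · rintro ⟨n, hn, rfl, h1, h2⟩
        have : n = 0 := by omega
        subst this
        refine ⟨by omega, by push_cast; omega, ?_, ?_, ?_⟩ <;> push_cast <;> linarith
    · simp [H1]
  · intro n _; simp

/-- The family with one boundary point. -/
def H2 (k : ℤ) : List (ℤ × ℤ × ℤ) :=
  [(0, -1, 1), (-5, 1, 1), (5, 5 * k + 1, 5 * k + 1), (5, -(5 * k + 2), 5 * k + 1)]

def V2 (k : ℚ) : Finset (ℚ × ℚ) :=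
  {(0, 1), (-2/5, -1), (-1/5, -1), (k + 1/5, 0)}

lemma hull2 (k : ℕ) : HP (H2 k) = convexHull ℝ (qpt '' (V2 k : Set (ℚ × ℚ))) := by
  have hk : (0 : ℝ) ≤ k := by positivity
  apply Subset.antisymm
  · rintro ⟨x, y⟩ hp
    simp [HP, H2] at hp
    obtain ⟨h1, h2, h3, h4⟩ := hp
    set S := convexHull ℝ (qpt '' (V2 k : Set (ℚ × ℚ))) with hS
    have hc : Convex ℝ S := convex_convexHull _ _
    have hv : ∀ v ∈ V2 k, qpt v ∈ S := fun v hv =>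
      subset_convexHull _ _ (mem_image_of_mem _ hv)
    have v1 : ((0 : ℝ), (1 : ℝ)) ∈ S := by
      have := hv (0, 1) (by simp [V2]); simpa [qpt] using this
    have v2 : ((-2/5 : ℝ), (-1 : ℝ)) ∈ S := by
      have := hv (-2/5, -1) (by simp [V2]); simpa [qpt] using this
    have v3 : ((-1/5 : ℝ), (-1 : ℝ)) ∈ S := by
      have := hv (-1/5, -1) (by simp [V2]); simpa [qpt] using this
    have v4 : ((k + 1/5 : ℝ), (0 : ℝ)) ∈ S := by
      have := hv (k + 1/5, 0) (by simp [V2]); simpa [qpt] using this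
    have hy : y ≤ 1 := by
      by_contra hy
      push Not at hy
      nlinarith
    have hy0 : -1 ≤ y := by linarith
    have hl : ((y - 1) / 5, y) ∈ S :=
      mem_seg hc v2 v1 (by norm_num) hy0 hy (by ring)
    rcases le_total y 0 with hy1 | hy1
    · have hr : ((k + 1/5) + (k + 2/5) * y, y) ∈ S :=
        mem_seg hc v3 v4 (by norm_num) hy0 hy1 (by ring)
      exact mem_hslice hc hl hr (by linarith) (by linarith)
    · have hr : ((k + 1/5) * (1 - y), y) ∈ S :=
        mem_seg hc v4 v1 (by norm_num) hy1 hy (by ring)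
      exact mem_hslice hc hl hr (by linarith) (by linarith)
  · refine convexHull_min ?_ (HP_convex _)
    rintro _ ⟨v, hv, rfl⟩
    simp only [V2, Finset.coe_insert, Finset.coe_singleton, mem_insert_iff,
      mem_singleton_iff] at hv
    rcases hv with rfl | rfl | rfl | rfl <;> simp [HP, H2, qpt] <;>
      first | linarith | (refine ⟨?_, ?_, ?_⟩ <;> linarith) | (refine ⟨?_, ?_⟩ <;> linarith)

lemma floor_sum5 (t : ℕ) :
    2 * (2 * ∑ m ∈ Finset.range (t + 1), ((m : ℤ) / 5)
      + ∑ m ∈ Finset.range t, ((2 * (m : ℤ) - t) / 5)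
      + ∑ m ∈ Finset.range t, ((2 * (t : ℤ) - m) / 5)) = (t : ℤ) ^ 2 - 3 * t := by
  induction t using Nat.strong_induction_on with
  | _ t ih =>
    by_cases ht : t < 5
    · interval_cases t <;> decide
    · obtain ⟨u, rfl⟩ : ∃ u, t = u + 5 := ⟨t - 5, by omega⟩
      have h0 := ih u (by omega)
      have g1 : ∑ m ∈ Finset.range (u + 5 + 1), ((m : ℤ) / 5)
          = ∑ m ∈ Finset.range (u + 1), ((m : ℤ) / 5) + (u + 1) := by
        rw [show u + 5 + 1 = u + 1 + 1 + 1 + 1 + 1 + 1 by ring]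
        iterate 5 rw [Finset.sum_range_succ]
        push_cast; omega
      have g2 : ∑ m ∈ Finset.range (u + 5), ((2 * (m : ℤ) - (u + 5 : ℕ)) / 5)
          = ∑ m ∈ Finset.range u, ((2 * (m : ℤ) - u) / 5) - 3 := by
        have : ∀ m ∈ Finset.range (u + 5), ((2 * (m : ℤ) - (u + 5 : ℕ)) / 5)
            = (2 * (m : ℤ) - u) / 5 + (-1) := by intro m _; push_cast; omega
        rw [Finset.sum_congr rfl this, Finset.sum_add_distrib]
        rw [show u + 5 = u + 1 + 1 + 1 + 1 + 1 by ring]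
        iterate 5 rw [Finset.sum_range_succ]
        simp only [Finset.sum_const, Finset.card_range, smul_eq_mul, nsmul_eq_mul]
        push_cast; omega
      have g3 : ∑ m ∈ Finset.range (u + 5), ((2 * ((u + 5 : ℕ) : ℤ) - m) / 5)
          = ∑ m ∈ Finset.range u, ((2 * (u : ℤ) - m) / 5) + (3 * u + 6) := by
        have : ∀ m ∈ Finset.range (u + 5), ((2 * ((u + 5 : ℕ) : ℤ) - m) / 5)
            = (2 * (u : ℤ) - m) / 5 + 2 := by intro m _; push_cast; omega
        rw [Finset.sum_congr rfl this, Finset.sum_add_distrib]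
        rw [show u + 5 = u + 1 + 1 + 1 + 1 + 1 by ring]
        iterate 5 rw [Finset.sum_range_succ]
        simp only [Finset.sum_const, Finset.card_range, smul_eq_mul, nsmul_eq_mul]
        push_cast; omega
      rw [g1, g2, g3]
      push_cast
      linarith

lemma count2 (k : ℕ) (t : ℕ) (ht : 0 < t) :
    ((t : ℝ) • HP (H2 k) ∩ latticePts).Finite ∧
    2 * (ehr (HP (H2 k)) t : ℤ) = (2 * (k + 1 : ℕ) + (1 : ℕ) - 2) * t ^ 2 + (1 : ℕ) * t + 2 := by
  have hk : (0 : ℤ) ≤ k := by positivity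
  let lo : ℕ → ℤ := fun n => -((2 * (t : ℤ) - n) / 5)
  let hi : ℕ → ℤ := fun n =>
    if n < t then k * n + (2 * (n : ℤ) - t) / 5 else k * (2 * t - n) + (2 * (t : ℤ) - n) / 5
  have key := count_rows ((t : ℝ) • HP (H2 k)) (t + (t + 1)) (-t) lo hi ?_ ?_
  · refine ⟨key.1, ?_⟩
    unfold ehr
    rw [key.2, Finset.sum_range_add]
    have e1 : ∑ n ∈ Finset.range t, (hi n + 1 - lo n)
        = ∑ n ∈ Finset.range t, (1 + k * (n : ℤ))
          + ∑ m ∈ Finset.range t, ((2 * (m : ℤ) - t) / 5)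
          + ∑ m ∈ Finset.range t, ((2 * (t : ℤ) - m) / 5) := by
      rw [← Finset.sum_add_distrib, ← Finset.sum_add_distrib]
      refine Finset.sum_congr rfl fun n hn => ?_
      simp only [lo, hi, if_pos (Finset.mem_range.1 hn)]; ring
    have e2 : ∑ n ∈ Finset.range (t + 1), (hi (t + n) + 1 - lo (t + n))
        = ∑ n ∈ Finset.range (t + 1), (1 + k * (n : ℤ))
          + 2 * ∑ m ∈ Finset.range (t + 1), ((m : ℤ) / 5) := by
      rw [Finset.mul_sum, ← Finset.sum_add_distrib, ← Finset.sum_range_reflect]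
      refine Finset.sum_congr rfl fun n hn => ?_
      have := Finset.mem_range.1 hn
      have e : ((t + (t + 1 - 1 - n) : ℕ) : ℤ) = 2 * t - n := by omega
      simp only [lo, hi]
      rw [if_neg (by omega), e]
      have e' : 2 * (t : ℤ) - (2 * t - n) = n := by ring
      rw [e']; ring
    have e3 := floor_sum5 t
    have e4 := sum_lin 1 k t
    have e5 := sum_lin 1 k (t + 1)
    rw [e1, e2]
    push_cast at *
    linarith
  · intro m y
    rw [mem_smul_HP _ _ ht]
    simp only [H2, List.mem_cons, List.not_mem_nil, or_false, forall_eq_or_imp, forall_eq]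
    have htn : (0 : ℤ) < t := by omega
    constructor
    · rintro ⟨h1, h2, h3, h4⟩
      have hy0 : 0 ≤ y + t := by linarith
      obtain ⟨n, hn⟩ := Int.eq_ofNat_of_zero_le hy0
      have hyn : y = -t + n := by omega
      subst hyn
      have hn' : (n : ℤ) ≤ 2 * t := by
        by_contra hh
        push Not at hh
        nlinarith
      refine ⟨n, by omega, rfl, by simp only [lo]; omega, ?_⟩
      simp only [hi]
      split_ifs with c
      · have : 5 * (m - k * n) ≤ 2 * n - t := by linarith
        have : m - k * n ≤ (2 * (n : ℤ) - t) / 5 := by omega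
        linarith
      · have : 5 * (m - k * (2 * t - n)) ≤ 2 * t - n := by linarith
        have : m - k * (2 * t - n) ≤ (2 * (t : ℤ) - n) / 5 := by omega
        linarith
    · rintro ⟨n, hn, rfl, h1, h2⟩
      have hlo : -5 * m + (n : ℤ) ≤ 2 * t := by simp only [lo] at h1; omega
      refine ⟨by omega, by omega, ?_⟩
      simp only [hi] at h2
      split_ifs at h2 with c
      · have a0 : m - k * n ≤ (2 * (n : ℤ) - t) / 5 := by linarith
        have a1 : 5 * (m - k * n) ≤ 2 * n - t := by omega
        have a2 : 0 ≤ (k : ℤ) * (t - n) := mul_nonneg hk (by omega)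
        have a3 : (n : ℤ) < t := by exact_mod_cast c
        refine ⟨by linarith, by linarith⟩
      · have a0 : m - k * (2 * t - n) ≤ (2 * (t : ℤ) - n) / 5 := by linarith
        have a1 : 5 * (m - k * (2 * t - n)) ≤ 2 * t - n := by omega
        have a2 : 0 ≤ (k : ℤ) * (n - t) := mul_nonneg hk (by omega)
        have a3 : (t : ℤ) ≤ n := by omega
        refine ⟨by linarith, by linarith⟩
  · intro n hn
    simp only [lo, hi]
    split_ifs with c
    · have a1 : 0 ≤ (k : ℤ) * n := by positivity
      omega
    · have a1 : 0 ≤ (k : ℤ) * (2 * t - n) := mul_nonneg hk (by omega)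
      omega

lemma int2 (k : ℕ) : (interior (HP (H2 k)) ∩ latticePts).ncard = k + 1 := by
  have hk : (0 : ℤ) ≤ k := by positivity
  have key := (count_rows (interior (HP (H2 k))) 1 0 (fun _ => 0) (fun _ => k) ?_ ?_).2
  · simp at key; exact_mod_cast key
  · intro m y
    rw [mem_interior_HP]
    · simp only [H2, List.mem_cons, List.not_mem_nil, or_false, forall_eq_or_imp, forall_eq]
      constructor
      · rintro ⟨h1, h2, h3, h4⟩
        have : y < 1 := by
          by_contra hh
          push Not at hh
          nlinarith
        have hy : y = 0 := by omega
        subst hy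
        exact ⟨0, by simp, by simp, by omega, by omega⟩
      · rintro ⟨n, hn, rfl, h1, h2⟩
        have : n = 0 := by omega
        subst this
        refine ⟨by omega, by push_cast; omega, ?_, ?_⟩ <;> push_cast <;> linarith
    · simp [H2]
  · intro n _; show (0 : ℤ) ≤ k + 1; omega

/-- for all positive integers i, b with b ≤ 5i + 4 there is a
rational pseudointegral polygon with exactly i interior and b boundary lattice
points. -/
theorem stmt_9 (i b : ℕ) (hi : 0 < i) (hb : 0 < b) (hbi : b ≤ 5 * i + 4) :
    ∃ P : Set (ℝ × ℝ), IsRatPolygon P ∧ IsPIP P ∧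
      (interior P ∩ latticePts).ncard = i ∧
      (frontier P ∩ latticePts).ncard = b := by
  rcases Nat.lt_or_ge b 2 with h | h
  · obtain rfl : b = 1 := by omega
    obtain ⟨k, rfl⟩ : ∃ k, i = k + 1 := ⟨i - 1, by omega⟩
    refine finish (H2 k) (V2 k) (k + 1) 1 hi (hull2 k) (count2 k 1 one_pos).1
      (fun t ht => (count2 k t ht).2) (int2 k)
  · exact finish (H1 i b) (V1 i b) i b hi (hull1 i b hi h hbi) (count1 i b hi h hbi 1 one_pos).1
      (fun t ht => (count1 i b hi h hbi t ht).2) (int1 i b hi h hbi)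
end

section
/- For all positive integers i and b with 2 ≤ b ≤ 5i + 4, there exists a rational convex polygon P ⊂ ℝ² of denominator 10 that is pseudointegral, has exactly i lattice points in its interior, and has exactly b lattice points on its boundary. In fact, one may take P = conv{(i,0), (0,1/5), (−3/2,−1), (b−3,−1), (i + (4/5)(b−4), −4/5)}. -/
open Set Pointwise

/-- The polygon `tP` described by inequalities. -/
def ineqs (i b t : ℝ) : Set (ℝ × ℝ) :=
  {p | -t ≤ p.2 ∧ 0 ≤ 4 * p.1 - 5 * p.2 + t ∧ p.1 + 5 * i * p.2 ≤ i * t ∧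
    p.1 + (b - 4) * p.2 ≤ i * t ∧ p.1 - (5 * i - b - 1) * p.2 ≤ (5 * i - 4) * t}

lemma mem_ineqs (i b t x y : ℝ) : (x, y) ∈ ineqs i b t ↔
    -t ≤ y ∧ 0 ≤ 4 * x - 5 * y + t ∧ x + 5 * i * y ≤ i * t ∧
    x + (b - 4) * y ≤ i * t ∧ x - (5 * i - b - 1) * y ≤ (5 * i - 4) * t := Iff.rfl

lemma convex_ineqs (i b t : ℝ) : Convex ℝ (ineqs i b t) := by
  rintro ⟨x, y⟩ ⟨h1, h2, h3, h4, h5⟩ ⟨x', y'⟩ ⟨k1, k2, k3, k4, k5⟩ α β hα hβ hs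
  simp only at *
  obtain rfl : β = 1 - α := by linarith
  simp only [Prod.smul_mk, Prod.mk_add_mk, smul_eq_mul, mem_ineqs]
  refine ⟨?_, ?_, ?_, ?_, ?_⟩
  · nlinarith [mul_le_mul_of_nonneg_left h1 hα, mul_le_mul_of_nonneg_left k1 hβ]
  · nlinarith [mul_le_mul_of_nonneg_left h2 hα, mul_le_mul_of_nonneg_left k2 hβ]
  · nlinarith [mul_le_mul_of_nonneg_left h3 hα, mul_le_mul_of_nonneg_left k3 hβ]
  · nlinarith [mul_le_mul_of_nonneg_left h4 hα, mul_le_mul_of_nonneg_left k4 hβ]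
  · nlinarith [mul_le_mul_of_nonneg_left h5 hα, mul_le_mul_of_nonneg_left k5 hβ]

lemma convex_comb {S : Set (ℝ × ℝ)} (hS : Convex ℝ S) {x y x' y' : ℝ} (h : (x, y) ∈ S)
    (h' : (x', y') ∈ S) {α : ℝ} (h0 : 0 ≤ α) (h1 : α ≤ 1) {u v : ℝ}
    (hu : u = α * x + (1 - α) * x') (hv : v = α * y + (1 - α) * y') : (u, v) ∈ S := by
  have := hS h h' h0 (by linarith : 0 ≤ 1 - α) (by ring)
  simpa [hu, hv] using this

lemma convex_horiz {S : Set (ℝ × ℝ)} (hS : Convex ℝ S) {a c x y : ℝ} (h : (a, y) ∈ S)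
    (h' : (c, y) ∈ S) (hax : a ≤ x) (hxc : x ≤ c) : (x, y) ∈ S := by
  rcases eq_or_lt_of_le (hax.trans hxc) with he | hl
  · obtain rfl : x = a := by linarith
    exact h
  · have hpos : 0 < c - a := by linarith
    refine convex_comb hS h h' (α := (c - x) / (c - a)) (by apply div_nonneg <;> linarith)
      (by rw [div_le_one hpos]; linarith) ?_ (by ring)
    field_simp
    ring

lemma hull_eq_s12 (i b : ℝ) (hi : 1 ≤ i) (hb2 : 2 ≤ b) (hb : b ≤ 5 * i + 4) :
    convexHull ℝ ({(i, 0), (0, 1/5), (-(3/2), -1), (b - 3, -1),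
        (i + (4/5) * (b - 4), -(4/5))} : Set (ℝ × ℝ)) = ineqs i b 1 := by
  apply Subset.antisymm
  · apply convexHull_min _ (convex_ineqs i b 1)
    intro p hp
    simp only [mem_insert_iff, mem_singleton_iff] at hp
    rcases hp with rfl | rfl | rfl | rfl | rfl <;> rw [mem_ineqs] <;>
      refine ⟨?_, ?_, ?_, ?_, ?_⟩ <;> nlinarith
  · rintro ⟨x, y⟩ ⟨h1, h2, h3, h4, h5⟩
    simp only at *
    set V : Set (ℝ × ℝ) := {(i, 0), (0, 1/5), (-(3/2), -1), (b - 3, -1),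
        (i + (4/5) * (b - 4), -(4/5))} with hV
    have hc := convex_convexHull ℝ V
    have hA : (i, (0 : ℝ)) ∈ convexHull ℝ V := subset_convexHull ℝ V (by simp [hV])
    have hB : ((0 : ℝ), (1/5 : ℝ)) ∈ convexHull ℝ V := subset_convexHull ℝ V (by simp [hV])
    have hC : (-(3/2 : ℝ), (-1 : ℝ)) ∈ convexHull ℝ V := subset_convexHull ℝ V (by simp [hV])
    have hD : (b - 3, (-1 : ℝ)) ∈ convexHull ℝ V := subset_convexHull ℝ V (by simp [hV])
    have hE : (i + (4/5) * (b - 4), -(4/5 : ℝ)) ∈ convexHull ℝ V :=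
      subset_convexHull ℝ V (by simp [hV])
    have hy : y ≤ 1/5 := by
      by_contra hcon
      push Not at hcon
      nlinarith
    have hL : ((5 * y - 1) / 4, y) ∈ convexHull ℝ V :=
      convex_comb hc hB hC (α := (y + 1) * (5/6)) (by linarith) (by linarith)
        (by ring) (by ring)
    rcases le_total 0 y with h0 | h0
    · have hR : (i - 5 * i * y, y) ∈ convexHull ℝ V :=
        convex_comb hc hB hA (α := 5 * y) (by linarith) (by linarith) (by ring) (by ring)
      exact convex_horiz hc hL hR (by linarith) (by linarith)
    rcases le_total (-(4/5)) y with h8 | h8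
    · have hR : (i - (b - 4) * y, y) ∈ convexHull ℝ V :=
        convex_comb hc hE hA (α := -(5/4) * y) (by linarith) (by linarith) (by ring) (by ring)
      exact convex_horiz hc hL hR (by linarith) (by linarith)
    · have hR : (5 * i - 4 + (5 * i - b - 1) * y, y) ∈ convexHull ℝ V :=
        convex_comb hc hE hD (α := 5 * (y + 1)) (by linarith) (by linarith) (by ring) (by ring)
      exact convex_horiz hc hL hR (by linarith) (by linarith)

lemma smul_ineqs (i b t : ℝ) (ht : 0 < t) : t • ineqs i b 1 = ineqs i b t := by
  ext ⟨x, y⟩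
  rw [mem_smul_set_iff_inv_smul_mem₀ ht.ne']
  simp only [Prod.smul_mk, smul_eq_mul, mem_ineqs]
  obtain ⟨u, rfl⟩ : ∃ u, x = t * u := ⟨t⁻¹ * x, by field_simp⟩
  obtain ⟨v, rfl⟩ : ∃ u, y = t * u := ⟨t⁻¹ * y, by field_simp⟩
  rw [inv_mul_cancel_left₀ ht.ne', inv_mul_cancel_left₀ ht.ne']
  have key : ∀ a c a' c' : ℝ, c' - a' = t * (c - a) → (a ≤ c ↔ a' ≤ c') := by
    intro a c a' c' h
    rw [← sub_nonneg, ← sub_nonneg (a := c'), h, mul_nonneg_iff_of_pos_left ht]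
  refine and_congr (key _ _ _ _ (by ring)) (and_congr (key _ _ _ _ (by ring))
    (and_congr (key _ _ _ _ (by ring)) (and_congr (key _ _ _ _ (by ring))
      (key _ _ _ _ (by ring)))))

lemma isClosed_ineqs (i b t : ℝ) : IsClosed (ineqs i b t) := by
  unfold ineqs
  simp only [Set.ofPred_and]
  refine IsClosed.inter ?_ (IsClosed.inter ?_ (IsClosed.inter ?_ (IsClosed.inter ?_ ?_)))
  all_goals exact isClosed_le (by fun_prop) (by fun_prop)

lemma mem_interior_ineqs (i b x y : ℝ) : (x, y) ∈ interior (ineqs i b 1) ↔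
    -1 < y ∧ 0 < 4 * x - 5 * y + 1 ∧ x + 5 * i * y < i ∧
    x + (b - 4) * y < i ∧ x - (5 * i - b - 1) * y < (5 * i - 4) := by
  constructor
  · intro h
    rw [mem_interior_iff_mem_nhds, Metric.mem_nhds_iff] at h
    obtain ⟨ε, hε, hs⟩ := h
    rw [← ball_prod_same] at hs
    have hm : ∀ u v : ℝ, |u| < ε → |v| < ε → (x + u, y + v) ∈ ineqs i b 1 := by
      intro u v hu hv
      apply hs
      simp [Real.dist_eq, hu, hv]
    have e1 : |ε / 2| < ε := by rw [abs_of_pos] <;> linarith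
    have e2 : |-(ε / 2)| < ε := by rwa [abs_neg]
    have e0 : |(0 : ℝ)| < ε := by simpa
    have a := hm _ _ e0 e2
    have c := hm _ _ e2 e0
    have d := hm _ _ e1 e0
    rw [mem_ineqs] at a c d
    obtain ⟨a1, a2, a3, a4, a5⟩ := a
    obtain ⟨c1, c2, c3, c4, c5⟩ := c
    obtain ⟨d1, d2, d3, d4, d5⟩ := d
    simp only [add_zero] at *
    refine ⟨?_, ?_, ?_, ?_, ?_⟩ <;> linarith
  · intro h
    have ho : IsOpen {p : ℝ × ℝ | -1 < p.2 ∧ 0 < 4 * p.1 - 5 * p.2 + 1 ∧ p.1 + 5 * i * p.2 < i ∧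
        p.1 + (b - 4) * p.2 < i ∧ p.1 - (5 * i - b - 1) * p.2 < (5 * i - 4)} := by
      simp only [Set.ofPred_and]
      refine IsOpen.inter ?_ (IsOpen.inter ?_ (IsOpen.inter ?_ (IsOpen.inter ?_ ?_)))
      all_goals exact isOpen_lt (by fun_prop) (by fun_prop)
    refine interior_maximal ?_ ho h
    rintro ⟨u, v⟩ ⟨h1, h2, h3, h4, h5⟩
    simp only at *
    rw [mem_ineqs]
    refine ⟨?_, ?_, ?_, ?_, ?_⟩ <;> linarith

/-! Extreme points -/

lemma extreme_B (i b t : ℝ) (hi : 1 ≤ i) (hb2 : 2 ≤ b) (hb : b ≤ 5 * i + 4) (ht : 0 < t) :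
    (0, t / 5) ∈ Set.extremePoints ℝ (ineqs i b t) := by
  have hmax : ∀ u v : ℝ, (u, v) ∈ ineqs i b t → v ≤ t / 5 := by
    rintro u v ⟨h1, h2, h3, h4, h5⟩
    simp only at *
    by_contra hcon
    push Not at hcon
    nlinarith
  have huniq : ∀ u : ℝ, (u, t / 5) ∈ ineqs i b t → u = 0 := by
    rintro u ⟨h1, h2, h3, h4, h5⟩
    simp only at *
    apply le_antisymm <;> linarith
  rw [mem_extremePoints]
  refine ⟨?_, ?_⟩
  · rw [mem_ineqs]
    refine ⟨?_, ?_, ?_, ?_, ?_⟩ <;> nlinarith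
  · rintro ⟨u, v⟩ h ⟨u', v'⟩ h' ⟨α, β, hα, hβ, hs, he⟩
    simp only [Prod.smul_mk, Prod.mk_add_mk, smul_eq_mul, Prod.mk.injEq] at he
    have m1 := hmax _ _ h
    have m2 := hmax _ _ h'
    obtain rfl : β = 1 - α := by linarith
    have e1 : v = t / 5 := by nlinarith
    have e2 : v' = t / 5 := by nlinarith
    subst e1 e2
    rw [huniq _ h, huniq _ h']
    exact ⟨rfl, rfl⟩

lemma extreme_C (i b t : ℝ) (hi : 1 ≤ i) (hb2 : 2 ≤ b) (ht : 0 < t) :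
    (-(3 / 2) * t, -t) ∈ Set.extremePoints ℝ (ineqs i b t) := by
  have hmax : ∀ u v : ℝ, (u, v) ∈ ineqs i b t → -(3 / 2) * t ≤ u := by
    rintro u v ⟨h1, h2, h3, h4, h5⟩
    simp only at *
    linarith
  have huniq : ∀ v : ℝ, (-(3 / 2) * t, v) ∈ ineqs i b t → v = -t := by
    rintro u ⟨h1, h2, h3, h4, h5⟩
    simp only at *
    apply le_antisymm <;> linarith
  rw [mem_extremePoints]
  refine ⟨?_, ?_⟩
  · rw [mem_ineqs]
    refine ⟨?_, ?_, ?_, ?_, ?_⟩ <;> nlinarith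
  · rintro ⟨u, v⟩ h ⟨u', v'⟩ h' ⟨α, β, hα, hβ, hs, he⟩
    simp only [Prod.smul_mk, Prod.mk_add_mk, smul_eq_mul, Prod.mk.injEq] at he
    have m1 := hmax _ _ h
    have m2 := hmax _ _ h'
    obtain rfl : β = 1 - α := by linarith
    have e1 : u = -(3 / 2) * t := by nlinarith
    have e2 : u' = -(3 / 2) * t := by nlinarith
    subst e1 e2
    rw [huniq _ h, huniq _ h']
    exact ⟨rfl, rfl⟩

/-! Counting -/

/-- Number of lattice points in the row `n` of `tP`. -/
def rightEnd (i b t n : ℤ) : ℤ :=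
  if 0 ≤ n then i * (t - 5 * n) else i * t - (b - 4) * n - (i - 1) * max 0 (-5 * n - 4 * t)

lemma mem_ineqs_int (i b t m n : ℤ) (hi : 1 ≤ i) (hb2 : 2 ≤ b) (hb : b ≤ 5 * i + 4) (ht : 0 < t) :
    ((m : ℝ), (n : ℝ)) ∈ ineqs i b t ↔
      (-t ≤ n ∧ n ≤ t / 5) ∧ (-((t - 5 * n) / 4) ≤ m ∧ m ≤ rightEnd i b t n) := by
  rw [mem_ineqs]
  have : (-(t : ℝ) ≤ n ∧ 0 ≤ 4 * (m : ℝ) - 5 * n + t ∧ (m : ℝ) + 5 * i * n ≤ i * t ∧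
      (m : ℝ) + (b - 4) * n ≤ i * t ∧ (m : ℝ) - (5 * i - b - 1) * n ≤ (5 * i - 4) * t) ↔
      (-t ≤ n ∧ 0 ≤ 4 * m - 5 * n + t ∧ m + 5 * i * n ≤ i * t ∧
      m + (b - 4) * n ≤ i * t ∧ m - (5 * i - b - 1) * n ≤ (5 * i - 4) * t) := by
    norm_cast
  rw [this]
  have hfl : -((t - 5 * n) / 4) ≤ m ↔ 0 ≤ 4 * m - 5 * n + t := by omega
  rw [hfl]
  unfold rightEnd
  constructor
  · rintro ⟨h1, h2, h3, h4, h5⟩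
    have h6 : 5 * n ≤ t := by
      by_contra hcon
      push Not at hcon
      nlinarith
    refine ⟨⟨h1, by omega⟩, h2, ?_⟩
    split_ifs with h0
    · linarith
    · rcases max_cases 0 (-5 * n - 4 * t) with ⟨h, _⟩ | ⟨h, _⟩ <;> rw [h] <;> linarith
  · rintro ⟨⟨h1, h6⟩, h2, h3⟩
    have h6' : 5 * n ≤ t := by omega
    refine ⟨h1, h2, ?_⟩
    split_ifs at h3 with h0
    · refine ⟨by linarith, by nlinarith, by nlinarith⟩
    · push Not at h0
      have hM0 := le_max_left 0 (-5 * n - 4 * t)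
      have hM1 := le_max_right 0 (-5 * n - 4 * t)
      refine ⟨by nlinarith, by nlinarith, by nlinarith⟩

lemma row_nonneg (i b t n : ℤ) (hi : 1 ≤ i) (hb2 : 2 ≤ b) (hb : b ≤ 5 * i + 4) (ht : 0 < t)
    (h1 : -t ≤ n) (h2 : n ≤ t / 5) : 0 ≤ rightEnd i b t n + 1 + (t - 5 * n) / 4 := by
  have h6' : 5 * n ≤ t := by omega
  have h7 : 0 ≤ (t - 5 * n) / 4 := by omega
  unfold rightEnd
  split_ifs with h0
  · nlinarith
  · push Not at h0
    have h8 : t - 5 * n ≤ 4 * ((t - 5 * n) / 4) + 3 := by omega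
    rcases max_cases 0 (-5 * n - 4 * t) with ⟨h, h'⟩ | ⟨h, h'⟩ <;> rw [h] <;> nlinarith

lemma ehr_eq_sum (i b t : ℤ) (hi : 1 ≤ i) (hb2 : 2 ≤ b) (hb : b ≤ 5 * i + 4) (ht : 0 < t) :
    (((ineqs i b t) ∩ latticePts).ncard : ℤ) =
      ∑ n ∈ Finset.Icc (-t) (t / 5), (rightEnd i b t n + 1 + (t - 5 * n) / 4) := by
  classical
  let T : Finset (Σ _ : ℤ, ℤ) := (Finset.Icc (-t) (t / 5)).sigma
    (fun n => Finset.Icc (-((t - 5 * n) / 4)) (rightEnd i b t n))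
  let F : (Σ _ : ℤ, ℤ) → ℝ × ℝ := fun s => ((s.2 : ℝ), (s.1 : ℝ))
  have hF : Function.Injective F := by
    rintro ⟨a, c⟩ ⟨a', c'⟩ h
    simp only [F, Prod.mk.injEq, Int.cast_inj] at h
    obtain ⟨rfl, rfl⟩ := h
    rfl
  have hset : (ineqs i b t) ∩ latticePts = F '' (T : Set (Σ _ : ℤ, ℤ)) := by
    ext p
    constructor
    · rintro ⟨h, m, n, rfl⟩
      rw [mem_ineqs_int i b t m n hi hb2 hb ht] at h
      exact ⟨⟨n, m⟩, by simp only [T, Finset.mem_coe, Finset.mem_sigma, Finset.mem_Icc]; exact h,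
        rfl⟩
    · rintro ⟨⟨n, m⟩, h, rfl⟩
      simp only [T, Finset.mem_coe, Finset.mem_sigma, Finset.mem_Icc] at h
      exact ⟨(mem_ineqs_int i b t m n hi hb2 hb ht).2 h, m, n, rfl⟩
  rw [hset, Set.ncard_image_of_injective _ hF, Set.ncard_coe_finset, Finset.card_sigma]
  push_cast
  apply Finset.sum_congr rfl
  intro n hn
  rw [Finset.mem_Icc] at hn
  have := row_nonneg i b t n hi hb2 hb ht hn.1 hn.2
  rw [Int.card_Icc, Int.toNat_of_nonneg (by linarith)]
  ring

lemma sum_Icc_split (φ : ℤ → ℤ) (t m : ℕ) : ∑ n ∈ Finset.Icc (-(t : ℤ)) m, φ n =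
    ∑ j ∈ Finset.range (m + 1), φ j + ∑ k ∈ Finset.range t, φ (-((k : ℤ) + 1)) := by
  induction t with
  | zero =>
    induction m with
    | zero => simp
    | succ m ih =>
      have : Finset.Icc (-((0 : ℕ) : ℤ)) ((m + 1 : ℕ) : ℤ) =
          insert ((m + 1 : ℕ) : ℤ) (Finset.Icc (-((0 : ℕ) : ℤ)) (m : ℤ)) := by
        ext x
        simp only [Finset.mem_Icc, Finset.mem_insert]
        omega
      rw [this, Finset.sum_insert (by simp), ih, Finset.sum_range_succ _ (m + 1)]
      ring
  | succ t ih =>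
    have : Finset.Icc (-((t + 1 : ℕ) : ℤ)) (m : ℤ) =
        insert (-((t : ℤ) + 1)) (Finset.Icc (-(t : ℤ)) (m : ℤ)) := by
      ext x
      simp only [Finset.mem_Icc, Finset.mem_insert]
      omega
    rw [this, Finset.sum_insert (by simp), ih, Finset.sum_range_succ _ t]
    ring

lemma quarter_step (n : ℤ) : n ^ 2 / 8 = (n - 1) ^ 2 / 8 + (n + 1) / 4 := by
  obtain ⟨s, r, hr, hr', rfl⟩ : ∃ s r : ℤ, 0 ≤ r ∧ r < 4 ∧ n = 4 * s + r :=
    ⟨n / 4, n % 4, by omega, by omega, by omega⟩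
  interval_cases r
  all_goals
    ring_nf
    generalize s ^ 2 = q
    omega

lemma quarter_sum (t : ℤ) (n : ℕ) : ∑ k ∈ Finset.range n, (t + ((k : ℤ) + 1)) / 4 =
    (t + n - 1) ^ 2 / 8 - (t - 1) ^ 2 / 8 := by
  induction n with
  | zero => simp
  | succ n ih =>
    rw [Finset.sum_range_succ, ih]
    have := quarter_step (t + n)
    push_cast
    rw [show t + ((n : ℤ) + 1) - 1 = t + n by ring, this,
      show t + ((n : ℤ) + 1) = t + n + 1 by ring]
    ring

lemma sum_two (t : ℕ) : 2 * ∑ k ∈ Finset.range t, ((k : ℤ) + 1) = t * (t + 1) := by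
  induction t with
  | zero => simp
  | succ n ih =>
    rw [Finset.sum_range_succ, mul_add, ih]
    push_cast
    ring

/-- The part of the count not depending on `i` and `b`. -/
def core (t : ℕ) : ℤ := ∑ j ∈ Finset.range (t / 5 + 1), (((t : ℤ) - 5 * j) + 1 + (t - 5 * j) / 4)
  + ∑ k ∈ Finset.range t, (1 + ((t : ℤ) + 5 * ((k : ℤ) + 1)) / 4)

lemma core_second (t : ℕ) : 2 * ∑ k ∈ Finset.range t, (1 + ((t : ℤ) + 5 * ((k : ℤ) + 1)) / 4) =
    2 * t + 2 * t ^ 2 - 2 * (((t : ℤ) - 1) ^ 2 / 8) := by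
  have h : ∀ k ∈ Finset.range t, (1 + ((t : ℤ) + 5 * ((k : ℤ) + 1)) / 4) =
      1 + ((k : ℤ) + 1) + (t + ((k : ℤ) + 1)) / 4 := by
    intro k _
    omega
  rw [Finset.sum_congr rfl h, Finset.sum_add_distrib, Finset.sum_add_distrib, quarter_sum,
    mul_add, mul_add, sum_two]
  have h2 : ((t : ℤ) + t - 1) ^ 2 / 8 * 2 = t ^ 2 - t := by
    obtain ⟨q, hq⟩ := Int.even_mul_succ_self ((t : ℤ) - 1)
    have : ((t : ℤ) + t - 1) ^ 2 = 8 * q + 1 := by linear_combination 4 * hq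
    rw [this]
    have : (8 * q + 1) / 8 = q := by omega
    rw [this]
    linear_combination -hq
  simp only [Finset.sum_const, Finset.card_range, nsmul_eq_mul, mul_one]
  linear_combination h2

lemma core_eq (t : ℕ) : core t = ((t : ℤ) + 1) ^ 2 := by
  induction t using Nat.strong_induction_on with
  | _ t ih =>
    rcases lt_or_ge t 5 with h | h
    · interval_cases t <;> decide
    · obtain ⟨s, rfl⟩ : ∃ s, t = s + 5 := ⟨t - 5, by omega⟩
      have ih' := ih s (by omega)
      have c1 := core_second s
      have c2 := core_second (s + 5)
      unfold core at ih' ⊢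
      rw [show (s + 5) / 5 + 1 = s / 5 + 1 + 1 by omega, Finset.sum_range_succ']
      have hs : ∀ j ∈ Finset.range (s / 5 + 1), (((s + 5 : ℕ) : ℤ) - 5 * ((j + 1 : ℕ) : ℤ)) + 1 +
          (((s + 5 : ℕ) : ℤ) - 5 * ((j + 1 : ℕ) : ℤ)) / 4 =
          ((s : ℤ) - 5 * j) + 1 + (s - 5 * j) / 4 := by
        intro j _
        rw [show ((s + 5 : ℕ) : ℤ) - 5 * ((j + 1 : ℕ) : ℤ) = (s : ℤ) - 5 * j by push_cast; ring]
      rw [Finset.sum_congr rfl hs]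
      generalize ∑ j ∈ Finset.range (s / 5 + 1), (((s : ℤ) - 5 * j) + 1 + (s - 5 * j) / 4) = A
        at *
      generalize ∑ k ∈ Finset.range s, (1 + ((s : ℤ) + 5 * ((k : ℤ) + 1)) / 4) = B at *
      generalize ∑ k ∈ Finset.range (s + 5),
        (1 + (((s + 5 : ℕ) : ℤ) + 5 * ((k : ℤ) + 1)) / 4) = C at *
      clear ih hs h
      push_cast at *
      generalize (s : ℤ) = z at *
      obtain ⟨q, r, hr, hr', rfl⟩ : ∃ q r : ℤ, 0 ≤ r ∧ r < 4 ∧ z = 4 * q + r :=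
        ⟨z / 4, z % 4, by omega, by omega, by omega⟩
      interval_cases r
      all_goals
        ring_nf at *
        generalize q ^ 2 = w at *
        omega

lemma excess_sum (t : ℕ) (ht : 0 < t) :
    ∑ k ∈ Finset.range t, max 0 (-5 * (-((k : ℤ) + 1)) - 4 * t) =
      ∑ j ∈ Finset.range (t / 5 + 1), ((t : ℤ) - 5 * j) := by
  rw [← Finset.sum_range_reflect]
  symm
  have hsub : Finset.range (t / 5 + 1) ⊆ Finset.range t := by
    intro x
    simp only [Finset.mem_range]
    omega
  rw [← Finset.sum_subset_zero_on_sdiff hsub (f := fun j : ℕ => (t : ℤ) - 5 * j)]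
  · intro j hj
    simp only [Finset.mem_sdiff, Finset.mem_range] at hj
    apply max_eq_left
    omega
  · intro j hj
    simp only [Finset.mem_range] at hj
    symm
    rw [max_eq_right] <;> omega

lemma count_eq (i b t : ℕ) (hi : 1 ≤ i) (hb2 : 2 ≤ b) (hb : b ≤ 5 * i + 4) (ht : 0 < t) :
    2 * (((ineqs i b t) ∩ latticePts).ncard : ℤ) =
      2 * ((t : ℤ) + 1) ^ 2 + 2 * i * t ^ 2 + (b - 4) * (t * (t + 1)) := by
  have h := ehr_eq_sum i b t (by exact_mod_cast hi) (by exact_mod_cast hb2)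
    (by exact_mod_cast hb) (by exact_mod_cast ht)
  simp only [Int.cast_natCast] at h
  rw [h, show (t : ℤ) / 5 = ((t / 5 : ℕ) : ℤ) by push_cast; rfl, sum_Icc_split, ← core_eq,
    ← sum_two]
  have h1 : ∀ j ∈ Finset.range (t / 5 + 1),
      rightEnd i b t (j : ℤ) + 1 + ((t : ℤ) - 5 * (j : ℤ)) / 4 =
      ((i : ℤ) - 1) * ((t : ℤ) - 5 * j) + (((t : ℤ) - 5 * j) + 1 + (t - 5 * j) / 4) := by
    intro j _
    rw [rightEnd, if_pos (by omega)]
    ring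
  have h2 : ∀ k ∈ Finset.range t,
      rightEnd i b t (-((k : ℤ) + 1)) + 1 + ((t : ℤ) - 5 * (-((k : ℤ) + 1))) / 4 =
      (i : ℤ) * t + ((b : ℤ) - 4) * ((k : ℤ) + 1)
       - ((i : ℤ) - 1) * max 0 (-5 * (-((k : ℤ) + 1)) - 4 * t) +
       (1 + ((t : ℤ) + 5 * ((k : ℤ) + 1)) / 4) := by
    intro k _
    rw [rightEnd, if_neg (by omega),
      show (t : ℤ) - 5 * (-((k : ℤ) + 1)) = (t : ℤ) + 5 * ((k : ℤ) + 1) by ring]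
    ring
  have s1 := (Finset.sum_congr rfl h1).trans Finset.sum_add_distrib
  have s2 := (Finset.sum_congr rfl h2).trans Finset.sum_add_distrib
  rw [← Finset.mul_sum] at s1
  rw [Finset.sum_sub_distrib, ← Finset.mul_sum, excess_sum t ht] at s2
  have s3 : ∑ k ∈ Finset.range t, ((i : ℤ) * t + ((b : ℤ) - 4) * ((k : ℤ) + 1)) =
      t * (i * t) + ((b : ℤ) - 4) * ∑ k ∈ Finset.range t, ((k : ℤ) + 1) := by
    rw [Finset.sum_add_distrib, Finset.mul_sum, Finset.sum_const, Finset.card_range,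
      nsmul_eq_mul]
  rw [s1, s2, s3, core]
  ring

lemma lattice_interior (i b : ℕ) (hi : 1 ≤ i) (hb : b ≤ 5 * i + 4) :
    interior (ineqs i b 1) ∩ latticePts =
      (fun n : ℕ => (((n : ℕ) : ℝ), (0 : ℝ))) '' (Finset.range i : Set ℕ) := by
  have hi' : (1 : ℝ) ≤ i := by exact_mod_cast hi
  have hb' : (b : ℝ) ≤ 5 * i + 4 := by exact_mod_cast hb
  ext p
  constructor
  · rintro ⟨h, m, n, rfl⟩
    rw [mem_interior_ineqs] at h
    obtain ⟨h1, h2, h3, h4, h5⟩ := h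
    have hn1 : -1 < n := by exact_mod_cast h1
    have hn2 : n < 1 := by
      by_contra hcon
      push Not at hcon
      have : (1 : ℝ) ≤ n := by exact_mod_cast hcon
      nlinarith
    obtain rfl : n = 0 := by omega
    simp only [Int.cast_zero, mul_zero, sub_zero, add_zero] at *
    have hm1 : 0 < 4 * m + 1 := by exact_mod_cast h2
    have hm2 : m < i := by exact_mod_cast h3
    lift m to ℕ using by omega
    exact ⟨m, by simpa using hm2, by simp⟩
  · rintro ⟨m, hm, rfl⟩
    have hm' : m < i := by simpa using hm
    have hm2 : (m : ℝ) < i := by exact_mod_cast hm'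
    have hm0 : (0 : ℝ) ≤ m := by positivity
    refine ⟨?_, m, 0, by simp⟩
    rw [mem_interior_ineqs]
    refine ⟨?_, ?_, ?_, ?_, ?_⟩ <;> linarith

lemma lattice_frontier (i b : ℕ) (hi : 1 ≤ i) (hb2 : 2 ≤ b) (hb : b ≤ 5 * i + 4) :
    frontier (ineqs i b 1) ∩ latticePts =
      (fun n : ℕ => if n = 0 then ((i : ℝ), (0 : ℝ)) else ((n : ℝ) - 2, (-1 : ℝ))) ''
        (Finset.range b : Set ℕ) := by
  have hi' : (1 : ℝ) ≤ i := by exact_mod_cast hi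
  have hb' : (b : ℝ) ≤ 5 * i + 4 := by exact_mod_cast hb
  have hb2' : (2 : ℝ) ≤ b := by exact_mod_cast hb2
  rw [(isClosed_ineqs _ _ _).frontier_eq]
  ext p
  constructor
  · rintro ⟨⟨h, hni⟩, m, n, rfl⟩
    rw [mem_interior_ineqs] at hni
    rw [mem_ineqs] at h
    obtain ⟨h1, h2, h3, h4, h5⟩ := h
    have hn1 : -1 ≤ n := by exact_mod_cast h1
    have hn2 : n < 1 := by
      by_contra hcon
      push Not at hcon
      have : (1 : ℝ) ≤ n := by exact_mod_cast hcon
      nlinarith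
    obtain rfl | rfl : n = 0 ∨ n = -1 := by omega
    · simp only [Int.cast_zero, mul_zero, sub_zero, add_zero, mul_one] at *
      have hm : (m : ℝ) = i := by
        by_contra hne
        have hlt := lt_of_le_of_ne h3 hne
        apply hni
        have hm1 : 0 ≤ 4 * m + 1 := by exact_mod_cast h2
        have hm1' : (0 : ℝ) ≤ m := by
          have : 0 ≤ m := by omega
          exact_mod_cast this
        refine ⟨?_, ?_, ?_, ?_, ?_⟩ <;> linarith
      exact ⟨0, by simp; omega, by simp [hm]⟩
    · have e2 : (0 : ℝ) ≤ 4 * m + 6 := by push_cast at h2; linarith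
      have hm1 : 0 ≤ 4 * m + 6 := by exact_mod_cast e2
      have e5 : (m : ℝ) + 3 ≤ b := by push_cast at h5; linarith
      have hm2 : m + 3 ≤ b := by exact_mod_cast e5
      obtain ⟨k, hk⟩ : ∃ k : ℕ, (k : ℤ) = m + 2 := ⟨(m + 2).toNat, by omega⟩
      obtain rfl : m = k - 2 := by omega
      refine ⟨k, by simp; omega, ?_⟩
      simp only
      rw [if_neg (by omega)]
      simp
  · rintro ⟨k, hk, rfl⟩
    have hk' : k < b := by simpa using hk
    simp only
    split_ifs with h0
    · refine ⟨⟨?_, ?_⟩, i, 0, by simp⟩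
      · rw [mem_ineqs]
        refine ⟨?_, ?_, ?_, ?_, ?_⟩ <;> linarith
      · rw [mem_interior_ineqs]
        rintro ⟨-, -, h, -⟩
        linarith
    · have k1 : (1 : ℝ) ≤ k := by
        have : 1 ≤ k := by omega
        exact_mod_cast this
      have k2 : (k : ℝ) + 1 ≤ b := by exact_mod_cast hk'
      refine ⟨⟨?_, ?_⟩, k - 2, -1, by simp⟩
      · rw [mem_ineqs]
        refine ⟨?_, ?_, ?_, ?_, ?_⟩ <;> linarith
      · rw [mem_interior_ineqs]
        rintro ⟨h, -⟩
        linarith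

/-- for all positive integers i, b with 2 ≤ b ≤ 5i + 4, the polygon
P = conv{(i,0), (0,1/5), (−3/2,−1), (b−3,−1), (i + (4/5)(b−4), −4/5)} is a
rational convex polygon of denominator 10 that is pseudointegral, with exactly i
interior and b boundary lattice points. -/
theorem stmt_12 (i b : ℕ) (hi : 0 < i) (hb2 : 2 ≤ b) (hb : b ≤ 5 * i + 4)
    (P : Set (ℝ × ℝ))
    (hP : P = convexHull ℝ
      ({((i : ℝ), 0), (0, 1/5), (-(3/2), -1), ((b : ℝ) - 3, -1),
        ((i : ℝ) + (4/5) * ((b : ℝ) - 4), -(4/5))} : Set (ℝ × ℝ))) :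
    IsRatPolygon P ∧ HasDenom P 10 ∧ IsPIP P ∧
      (interior P ∩ latticePts).ncard = i ∧
      (frontier P ∩ latticePts).ncard = b := by
  have hi1 : 1 ≤ i := hi
  have hi' : (1 : ℝ) ≤ i := by exact_mod_cast hi1
  have hb' : (b : ℝ) ≤ 5 * i + 4 := by exact_mod_cast hb
  have hb2' : (2 : ℝ) ≤ b := by exact_mod_cast hb2
  have hPI : P = ineqs i b 1 := by rw [hP, hull_eq_s12 _ _ hi' hb2' hb']
  have hInt : (interior P ∩ latticePts).ncard = i := by
    rw [hPI, lattice_interior i b hi1 hb, Set.ncard_image_of_injective, Set.ncard_coe_finset,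
      Finset.card_range]
    intro a c h
    simpa using h
  refine ⟨⟨{((i : ℚ), 0), (0, 1/5), (-(3/2), -1), ((b : ℚ) - 3, -1),
        ((i : ℚ) + (4/5) * ((b : ℚ) - 4), -(4/5))}, ?_, ?_⟩, ⟨⟨by norm_num, ?_⟩, ?_⟩, ?_, hInt, ?_⟩
  · rw [hP]
    congr 1
    simp only [Finset.coe_insert, Finset.coe_singleton, image_insert_eq, image_singleton, qpt]
    push_cast
    rfl
  · have : (interior P ∩ latticePts).Nonempty := by
      apply Set.nonempty_of_ncard_ne_zero
      omega
    exact this.mono inter_subset_left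
  · rw [hP, ← convexHull_smul]
    refine extremePoints_convexHull_subset.trans ?_
    rintro _ ⟨p, hp, rfl⟩
    simp only [mem_insert_iff, mem_singleton_iff] at hp
    rcases hp with rfl | rfl | rfl | rfl | rfl
    · exact ⟨10 * i, 0, by simp⟩
    · exact ⟨0, 2, by simp; norm_num⟩
    · exact ⟨-15, -10, by simp; norm_num⟩
    · exact ⟨10 * (b - 3), -10, by simp⟩
    · exact ⟨10 * i + 8 * (b - 4), -8, by
        simp only [Prod.smul_mk, smul_eq_mul, Prod.mk.injEq]
        push_cast
        constructor <;> ring⟩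
  · rintro k ⟨hk, hsub⟩
    have hk' : (0 : ℝ) < k := by exact_mod_cast hk
    rw [hPI, smul_ineqs _ _ _ hk'] at hsub
    obtain ⟨m, n, h1⟩ := hsub (extreme_B _ _ _ hi' hb2' hb' hk')
    obtain ⟨m', n', h2⟩ := hsub (extreme_C _ _ _ hi' hb2' hk')
    simp only [Prod.mk.injEq] at h1 h2
    have e1 : (k : ℝ) = 5 * n := by linarith [h1.2]
    have e2 : -3 * (k : ℝ) = 2 * m' := by linarith [h2.1]
    have e1' : (k : ℤ) = 5 * n := by exact_mod_cast e1
    have e2' : -3 * (k : ℤ) = 2 * m' := by exact_mod_cast e2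
    omega
  · refine ⟨(Polynomial.X + 1) ^ 2 + Polynomial.C (i : ℚ) * Polynomial.X ^ 2 +
      Polynomial.C (((b : ℚ) - 4) / 2) * (Polynomial.X * (Polynomial.X + 1)), ?_⟩
    intro t ht
    have hc := count_eq i b t hi1 hb2 hb ht
    rw [ehr, hPI, smul_ineqs _ _ _ (by exact_mod_cast ht)]
    have hc' : 2 * (((ineqs i b t) ∩ latticePts).ncard : ℚ) =
      2 * ((t : ℚ) + 1) ^ 2 + 2 * i * t ^ 2 + (b - 4) * (t * (t + 1)) := by exact_mod_cast hc
    simp only [Polynomial.eval_add, Polynomial.eval_mul, Polynomial.eval_pow, Polynomial.eval_X,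
      Polynomial.eval_C, Polynomial.eval_one]
    linear_combination hc' / 2
  · rw [hPI, lattice_frontier i b hi1 hb2 hb, Set.ncard_image_of_injective, Set.ncard_coe_finset,
      Finset.card_range]
    intro a c h
    by_cases ha : a = 0 <;> by_cases hc : c = 0 <;> simp [ha, hc] at h ⊢
    exact h
end
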